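/- arXiv:2409.05619 — 3 statements merged into one kernel-verified Lean document; each statement's English description precedes it below -/
import Mathlib

section
/- Let 𝒮 be a measurable space such that s ↦ ρ_{x,y,s} is measurable for each (x,y)∈𝒳×𝒴, and suppose the family satisfies Assumption A. Define θ₁ := inf over families (U₁(·|x))_{x∈𝒳} of probability measures on 𝒮 of max_{x,x'∈𝒳, y∈𝒴} ‖∫_𝒮 ρ_{x,y,s} U₁(ds|x') − ∫_𝒮 ρ_{x',y,s} U₁(ds|x)‖₁; θ₂ := inf over families (U₂(·|y))_{y∈𝒴} of max_{x∈𝒳, y,y'∈𝒴} ‖∫_𝒮 ρ_{x,y,s} U₂(ds|y') − ∫_𝒮 ρ_{x,y',s} U₂(ds|y)‖₁; θ₃ := inf over families (U₃(·|x,y))_{(x,y)∈𝒳×𝒴} of max_{x,x'∈𝒳, y,y'∈𝒴} ‖∫_𝒮 ρ_{x,y,s} U₃(ds|x',y') − ∫_𝒮 ρ_{x',y',s} U₃(ds|x,y)‖₁ (Bochner integrals; ‖·‖₁ the trace norm). Then Int(ℛ_d) = ∅ if and only if θ₁ = 0 or θ₂ = 0 or θ₃ = 0. -/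
open scoped ComplexOrder Matrix
open MeasureTheory

noncomputable section

/-- A density matrix: positive semidefinite with unit trace. -/
def IsDensity {m : Type*} [Fintype m] (ρ : Matrix m m ℂ) : Prop :=
  ρ.PosSemidef ∧ ρ.trace = 1

/-- Loewner order `A ⪯ B`. -/
def Loewner {m : Type*} [Fintype m] (A B : Matrix m m ℂ) : Prop :=
  (B - A).PosSemidef

/-- Functional calculus for Hermitian matrices (junk value `0` on non-Hermitian input). -/
def matFun {m : Type*} [Fintype m] [DecidableEq m] (f : ℝ → ℝ) (A : Matrix m m ℂ) :
    Matrix m m ℂ :=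
  if hA : A.IsHermitian then
    (hA.eigenvectorUnitary : Matrix m m ℂ) *
        Matrix.diagonal (fun i => (f (hA.eigenvalues i) : ℂ)) *
      star (hA.eigenvectorUnitary : Matrix m m ℂ)
  else 0

/-- The trace norm (sum of singular values) of a matrix. -/
def traceNorm {m : Type*} [Fintype m] [DecidableEq m] (A : Matrix m m ℂ) : ℝ :=
  (Matrix.trace (matFun Real.sqrt (Aᴴ * A))).re

/-- Tensor product of a finite family of matrices, realized on functions. -/
def tensorFam {k d : Type*} [Fintype k] (ρ : k → Matrix d d ℂ) :
    Matrix (k → d) (k → d) ℂ :=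
  Matrix.of fun i j => ∏ a, ρ a (i a) (j a)

/-- Assumption A for a two-sender family. -/
def AssumptionA2 {𝒳 𝒴 𝒮 : Type*} {d : ℕ}
    (ρ : 𝒳 → 𝒴 → 𝒮 → Matrix (Fin d) (Fin d) ℂ) : Prop :=
  ∀ ε : ℝ, 0 < ε → ∃ Sε : Finset 𝒮, ∀ s : 𝒮, ∃ s' ∈ Sε, ∀ x y,
    Loewner (ρ x y s) ((1 + ε) • ρ x y s')

section Codes

variable {𝒳 𝒴 𝒮 : Type*} [Fintype 𝒳] [DecidableEq 𝒳] [Fintype 𝒴] [DecidableEq 𝒴] {d : ℕ}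

/-- `(R₁, R₂)` is an achievable deterministic rate pair for the CQ-AVMAC. -/
def AchievableDet (ρ : 𝒳 → 𝒴 → 𝒮 → Matrix (Fin d) (Fin d) ℂ) (R1 R2 : ℝ) : Prop :=
  0 ≤ R1 ∧ 0 ≤ R2 ∧
  ∀ β > (0 : ℝ), ∀ δ₁ > (0 : ℝ), ∀ δ₂ > (0 : ℝ), ∃ N : ℕ, ∀ n ≥ N,
    ∃ (M₁ M₂ : ℕ) (f₁ : Fin M₁ → (Fin n → 𝒳)) (f₂ : Fin M₂ → (Fin n → 𝒴))
      (D : Fin M₁ → Fin M₂ → Matrix (Fin n → Fin d) (Fin n → Fin d) ℂ),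
      (∀ m₁ m₂, (D m₁ m₂).PosSemidef) ∧
      (∑ m₁, ∑ m₂, D m₁ m₂ = 1) ∧
      (1 / (n : ℝ)) * Real.logb 2 M₁ > R1 - δ₁ ∧
      (1 / (n : ℝ)) * Real.logb 2 M₂ > R2 - δ₂ ∧
      (⨆ sv : Fin n → 𝒮,
        1 - (1 / ((M₁ : ℝ) * (M₂ : ℝ))) * ∑ m₁, ∑ m₂,
          (Matrix.trace (D m₁ m₂ *
            tensorFam fun k => ρ (f₁ m₁ k) (f₂ m₂ k) (sv k))).re) < β

/-- The deterministic code capacity region `ℛ_d`. -/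
def Rd (ρ : 𝒳 → 𝒴 → 𝒮 → Matrix (Fin d) (Fin d) ℂ) : Set (ℝ × ℝ) :=
  closure {r : ℝ × ℝ | AchievableDet ρ r.1 r.2}

end Codes

section Thetas

variable {𝒳 𝒴 𝒮 : Type*} [Fintype 𝒳] [DecidableEq 𝒳] [Fintype 𝒴] [DecidableEq 𝒴]
  [MeasurableSpace 𝒮] {d : ℕ}

/-- The entrywise Bochner integral of a matrix-valued map. -/
def mInt (μ : Measure 𝒮) (f : 𝒮 → Matrix (Fin d) (Fin d) ℂ) :
    Matrix (Fin d) (Fin d) ℂ :=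
  Matrix.of fun i j => ∫ s, f s i j ∂μ

/-- `θ₁`: the degree of `𝒳`-symmetrizability. -/
def theta1 (ρ : 𝒳 → 𝒴 → 𝒮 → Matrix (Fin d) (Fin d) ℂ) : ℝ :=
  ⨅ U : {U : 𝒳 → Measure 𝒮 // ∀ x, IsProbabilityMeasure (U x)},
    ⨆ x : 𝒳, ⨆ x' : 𝒳, ⨆ y : 𝒴,
      traceNorm (mInt (U.1 x') (fun s => ρ x y s) - mInt (U.1 x) (fun s => ρ x' y s))

/-- `θ₂`: the degree of `𝒴`-symmetrizability. -/
def theta2 (ρ : 𝒳 → 𝒴 → 𝒮 → Matrix (Fin d) (Fin d) ℂ) : ℝ :=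
  ⨅ U : {U : 𝒴 → Measure 𝒮 // ∀ y, IsProbabilityMeasure (U y)},
    ⨆ x : 𝒳, ⨆ y : 𝒴, ⨆ y' : 𝒴,
      traceNorm (mInt (U.1 y') (fun s => ρ x y s) - mInt (U.1 y) (fun s => ρ x y' s))

/-- `θ₃`: the degree of `𝒳𝒴`-symmetrizability. -/
def theta3 (ρ : 𝒳 → 𝒴 → 𝒮 → Matrix (Fin d) (Fin d) ℂ) : ℝ :=
  ⨅ U : {U : 𝒳 → 𝒴 → Measure 𝒮 // ∀ x y, IsProbabilityMeasure (U x y)},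
    ⨆ x : 𝒳, ⨆ x' : 𝒳, ⨆ y : 𝒴, ⨆ y' : 𝒴,
      traceNorm (mInt (U.1 x' y') (fun s => ρ x y s) - mInt (U.1 x y) (fun s => ρ x' y' s))

end Thetas

namespace AV

lemma chernoff {K Ω : Type*} [Fintype K] [DecidableEq K] [Fintype Ω]
    (w : K → Ω → ℝ) (hw0 : ∀ k o, 0 ≤ w k o) (hw1 : ∀ k, ∑ o, w k o = 1)
    (g : K → Ω → ℝ) (hg : ∀ k o, |g k o| ≤ 1) (μ η : ℝ) (h0 : 0 ≤ η) (h2 : η ≤ 2)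
    (hm : ∑ k, ∑ o, w k o * g k o ≤ Fintype.card K * μ)
    (S : Finset (K → Ω)) (hS : ∀ ω ∈ S, Fintype.card K * (μ + η) ≤ ∑ k, g k (ω k)) :
    ∑ ω ∈ S, ∏ k, w k (ω k) ≤ Real.exp (-(Fintype.card K * (η ^ 2 / 4))) := by
  set c : ℝ := (Fintype.card K : ℝ) with hc
  set l : ℝ := η / 2 with hl
  have hl0 : 0 ≤ l := by positivity
  have hl1 : l ≤ 1 := by rw [hl]; linarith
  have step1 : ∑ ω ∈ S, ∏ k, w k (ω k) ≤
      ∑ ω : K → Ω, Real.exp (-(l * (c * (μ + η)))) * ∏ k, (w k (ω k) * Real.exp (l * g k (ω k))) := by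
    refine le_trans ?_ (Finset.sum_le_sum_of_subset_of_nonneg (Finset.subset_univ S) ?_)
    · refine Finset.sum_le_sum fun ω hω => ?_
      rw [Finset.prod_mul_distrib, ← Real.exp_sum, mul_left_comm, ← Real.exp_add]
      have hp : 0 ≤ ∏ k, w k (ω k) := Finset.prod_nonneg fun k _ => hw0 _ _
      refine le_mul_of_one_le_right hp (Real.one_le_exp ?_)
      rw [← Finset.mul_sum]
      have := mul_le_mul_of_nonneg_left (hS ω hω) hl0
      linarith
    · intro ω _ _
      exact mul_nonneg (Real.exp_pos _).le
        (Finset.prod_nonneg fun k _ => mul_nonneg (hw0 _ _) (Real.exp_pos _).le)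
  refine step1.trans ?_
  rw [← Finset.mul_sum]
  have step2 : ∑ ω : K → Ω, ∏ k, (w k (ω k) * Real.exp (l * g k (ω k)))
      = ∏ k, ∑ o, w k o * Real.exp (l * g k o) := by
    rw [Finset.prod_univ_sum]
    simp [Fintype.piFinset_univ]
  rw [step2]
  have step3 : ∏ k, ∑ o, w k o * Real.exp (l * g k o) ≤
      ∏ k, Real.exp (l * (∑ o, w k o * g k o) + l ^ 2) := by
    refine Finset.prod_le_prod (fun k _ => Finset.sum_nonneg fun o _ =>
      mul_nonneg (hw0 _ _) (Real.exp_pos _).le) fun k _ => ?_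
    have : ∑ o, w k o * Real.exp (l * g k o) ≤ ∑ o, (w k o + l * (w k o * g k o) + w k o * l ^ 2) := by
      refine Finset.sum_le_sum fun o _ => ?_
      have h1 : |l * g k o| ≤ 1 := by
        rw [abs_mul, abs_of_nonneg hl0]
        exact mul_le_one₀ hl1 (abs_nonneg _) (hg _ _)
      have h3 := (abs_le.1 (Real.abs_exp_sub_one_sub_id_le h1)).2
      have h4 : (l * g k o) ^ 2 ≤ l ^ 2 := by
        rw [mul_pow]
        have := (sq_le_one_iff_abs_le_one (g k o)).2 (hg k o)
        exact mul_le_of_le_one_right (sq_nonneg _) this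
      have h5 : Real.exp (l * g k o) ≤ 1 + l * g k o + l ^ 2 := by linarith
      have := mul_le_mul_of_nonneg_left h5 (hw0 k o)
      linarith
    refine this.trans ?_
    rw [Finset.sum_add_distrib, Finset.sum_add_distrib, ← Finset.mul_sum, ← Finset.sum_mul, hw1]
    have := Real.add_one_le_exp (l * (∑ o, w k o * g k o) + l ^ 2)
    linarith
  refine (mul_le_mul_of_nonneg_left step3 (Real.exp_pos _).le).trans ?_
  rw [← Real.exp_sum, ← Real.exp_add]
  apply Real.exp_le_exp.2
  rw [Finset.sum_add_distrib, ← Finset.mul_sum]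
  simp only [Finset.sum_const, Finset.card_univ, nsmul_eq_mul]
  have := mul_le_mul_of_nonneg_left hm hl0
  rw [← hc]
  have e : c * (η ^ 2 / 4) = l * (c * η) - c * l ^ 2 := by rw [hl]; ring
  rw [e]
  nlinarith

lemma sum_biUnion_le {α β : Type*} [DecidableEq β] (s : Finset α) (t : α → Finset β) (f : β → ℝ)
    (hf : ∀ b, 0 ≤ f b) : ∑ b ∈ s.biUnion t, f b ≤ ∑ a ∈ s, ∑ b ∈ t a, f b := by
  classical
  induction s using Finset.induction_on with
  | empty => simp
  | insert a s ha ih =>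
    rw [Finset.biUnion_insert, Finset.sum_insert ha]
    have := Finset.sum_union_inter (s₁ := t a) (s₂ := s.biUnion t) (f := f)
    have h2 : 0 ≤ ∑ b ∈ t a ∩ s.biUnion t, f b := Finset.sum_nonneg fun _ _ => hf _
    linarith

lemma sum_update {M Z : Type*} [Fintype M] [DecidableEq M] [Fintype Z] (m : M) (G : (M → Z) → ℝ) :
    ∑ a : M → Z, ∑ z, G (Function.update a m z) = Fintype.card Z * ∑ a, G a := by
  classical
  rw [← (Equiv.funSplitAt m Z).symm.sum_comp, ← (Equiv.funSplitAt m Z).symm.sum_comp,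
    Fintype.sum_prod_type, Fintype.sum_prod_type]
  have : ∀ (z0 : Z) (q : {j // j ≠ m} → Z) z,
      Function.update ((Equiv.funSplitAt m Z).symm (z0, q)) m z
        = (Equiv.funSplitAt m Z).symm (z, q) := by
    intro z0 q z
    funext j
    by_cases hj : j = m
    · subst hj; simp [Equiv.funSplitAt]
    · simp [Equiv.funSplitAt, hj]
  simp only [this]
  rw [Finset.sum_const, Finset.sum_comm]
  simp

lemma sum_update_zero {M X Y : Type*} [Fintype M] [DecidableEq M] [Fintype X] [Fintype Y]
    [Nonempty X] [Nonempty Y]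
    (m1 m2 : M) (F : (M → X) → (M → Y) → ℝ)
    (h : ∀ a b, ∑ x, ∑ y, F (Function.update a m1 x) (Function.update b m2 y) = 0) :
    ∑ c : (M → X) × (M → Y), F c.1 c.2 = 0 := by
  classical
  rw [Fintype.sum_prod_type]
  have h1 : ∑ a : M → X, ∑ x, (∑ b : M → Y, ∑ y, F (Function.update a m1 x) (Function.update b m2 y)) = 0 := by
    refine Finset.sum_eq_zero fun a _ => ?_
    rw [Finset.sum_comm]
    exact Finset.sum_eq_zero fun b _ => h a b
  rw [sum_update m1 (fun a => ∑ b : M → Y, ∑ y, F a (Function.update b m2 y))] at h1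
  have h5 : ∀ a, ∑ b : M → Y, ∑ y, F a (Function.update b m2 y) = Fintype.card Y * ∑ b, F a b :=
    fun a => sum_update m2 (fun b => F a b)
  simp only [h5] at h1
  rw [← Finset.mul_sum] at h1
  have hX : (Fintype.card X : ℝ) ≠ 0 := by exact_mod_cast Fintype.card_ne_zero
  have hY : (Fintype.card Y : ℝ) ≠ 0 := by exact_mod_cast Fintype.card_ne_zero
  simpa [hX, hY] using h1

/-- existence of a codebook with small correlations -/
lemma codebook {X Y ι : Type*} [Fintype X] [Fintype Y] [Nonempty X] [Nonempty Y] [Fintype ι]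
    (κ : ι → (X × Y) → (X × Y) → (X × Y) → (X × Y) → ℝ)
    (hb : ∀ i a b c e, |κ i a b c e| ≤ 1) (hz : ∀ i b c e, ∑ a, κ i a b c e = 0)
    (η : ℝ) (h0 : 0 ≤ η) (h2 : η ≤ 2) (n M : ℕ)
    (hM : Fintype.card ι * (M : ℝ) ^ 8 * Real.exp (-(n * (η ^ 2 / 4))) < 1) :
    ∃ (f1 : Fin M → Fin n → X) (f2 : Fin M → Fin n → Y),
      ∀ i m1 m2 l1 l2 u1 u2 v1 v2, m1 ≠ l1 → m1 ≠ u1 → m1 ≠ v1 → m2 ≠ l2 → m2 ≠ u2 → m2 ≠ v2 →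
        ∑ k, κ i (f1 m1 k, f2 m2 k) (f1 l1 k, f2 l2 k) (f1 u1 k, f2 u2 k) (f1 v1 k, f2 v2 k)
          ≤ n * η := by
  classical
  let Ω := (Fin M → X) × (Fin M → Y)
  let T := (Fin M × Fin M) × (Fin M × Fin M) × (Fin M × Fin M) × (Fin M × Fin M)
  let P : T → Prop := fun t => t.1.1 ≠ t.2.1.1 ∧ t.1.1 ≠ t.2.2.1.1 ∧ t.1.1 ≠ t.2.2.2.1 ∧
    t.1.2 ≠ t.2.1.2 ∧ t.1.2 ≠ t.2.2.1.2 ∧ t.1.2 ≠ t.2.2.2.2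
  let e : Ω → Fin M × Fin M → X × Y := fun c p => (c.1 p.1, c.2 p.2)
  let g : ι → T → Ω → ℝ := fun i t c => κ i (e c t.1) (e c t.2.1) (e c t.2.2.1) (e c t.2.2.2)
  let bad : ι → T → Finset (Fin n → Ω) := fun i t =>
    Finset.univ.filter fun ω => P t ∧ n * η < ∑ k, g i t (ω k)
  let w : ℝ := (Fintype.card Ω : ℝ)⁻¹
  have hΩ : (Fintype.card Ω : ℝ) ≠ 0 := by exact_mod_cast Fintype.card_ne_zero
  have hw0 : 0 ≤ w := by positivity
  have hw1 : ∑ _o : Ω, w = 1 := by simp [w, hΩ]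
  have hbad : ∀ i t, ∑ ω ∈ bad i t, ∏ _k : Fin n, w ≤ Real.exp (-(n * (η ^ 2 / 4))) := by
    intro i t
    by_cases hP : P t
    · have := chernoff (K := Fin n) (fun _ (_ : Ω) => w) (fun _ _ => hw0) (fun _ => hw1)
        (fun _ => g i t) (fun _ o => hb _ _ _ _ _) 0 η h0 h2 ?_ (bad i t) ?_
      · simpa using this
      · have : ∑ c : Ω, g i t c = 0 := by
          obtain ⟨h11, h12, h13, h21, h22, h23⟩ := hP
          refine sum_update_zero t.1.1 t.1.2 (fun a b => g i t (a, b)) ?_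
          intro a b
          simp only [g, e]
          simp only [Function.update_self, Function.update_of_ne h11.symm,
            Function.update_of_ne h12.symm, Function.update_of_ne h13.symm,
            Function.update_of_ne h21.symm, Function.update_of_ne h22.symm,
            Function.update_of_ne h23.symm]
          rw [← Fintype.sum_prod_type (f := fun q : X × Y => κ i (q.1, q.2) _ _ _)]
          exact hz _ _ _ _
        simp [← Finset.mul_sum, this]
      · intro ω hω
        have := (Finset.mem_filter.1 hω).2.2
        simpa using this.le
    · have : bad i t = ∅ := by
        simp [bad, hP]
      rw [this]; simp; positivity
  by_contra hcon
  push Not at hcon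
  have hcov : (Finset.univ : Finset (Fin n → Ω)) ⊆ Finset.univ.biUnion fun q : ι × T => bad q.1 q.2 := by
    intro ω _
    obtain ⟨i, m1, m2, l1, l2, u1, u2, v1, v2, a1, a2, a3, a4, a5, a6, hlt⟩ :=
      hcon (fun m k => (ω k).1 m) (fun m k => (ω k).2 m)
    refine Finset.mem_biUnion.2 ⟨(i, ((m1, m2), (l1, l2), (u1, u2), (v1, v2))), Finset.mem_univ _, ?_⟩
    exact Finset.mem_filter.2 ⟨Finset.mem_univ _, ⟨a1, a2, a3, a4, a5, a6⟩, hlt⟩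
  have tot : ∑ ω : Fin n → Ω, ∏ _k : Fin n, w = 1 := by
    simp [w]
  have hle : ∑ ω : Fin n → Ω, ∏ _k : Fin n, w ≤ ∑ q : ι × T, ∑ ω ∈ bad q.1 q.2, ∏ _k : Fin n, w := by
    refine (Finset.sum_le_sum_of_subset_of_nonneg hcov fun ω _ _ => by positivity).trans ?_
    exact sum_biUnion_le _ _ _ fun _ => by positivity
  rw [tot] at hle
  have : ∑ q : ι × T, ∑ ω ∈ bad q.1 q.2, ∏ _k : Fin n, w ≤
      Fintype.card ι * (M : ℝ) ^ 8 * Real.exp (-(n * (η ^ 2 / 4))) := by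
    refine (Finset.sum_le_sum fun q _ => hbad q.1 q.2).trans ?_
    simp [T]
    apply le_of_eq; ring
  linarith

/-- Bessel-type inequality -/
lemma bessel {B P A S : Type*} [Fintype P] [DecidableEq P] [Nonempty P] [Fintype A] [DecidableEq A]
    (Bs : Finset B) (n : ℕ) (w : B → Fin n → P) (v : B → Fin n → A) (s : Fin n → S)
    (H : P → A → S → ℝ) (hH : ∀ p a s, |H p a s| ≤ 1) (δ : ℝ) (hδ : 0 ≤ δ)
    (hyp : ∀ b ∈ Bs, ∑ k, (H (w b k) (v b k) (s k)
      - (Fintype.card P : ℝ)⁻¹ * ∑ p, H p (v b k) (s k)) ≤ - (n * δ)) :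
    (Bs.card * (n * δ)) ^ 2 ≤ 4 * n * Fintype.card P * Fintype.card A *
      ∑ b ∈ Bs, ∑ b' ∈ Bs, ∑ k, ((if w b k = w b' k then 1 else 0) - (Fintype.card P : ℝ)⁻¹) *
        (if v b k = v b' k then 1 else 0) := by
  have hP : (Fintype.card P : ℝ) ≠ 0 := by exact_mod_cast Fintype.card_ne_zero
  set c : ℝ := (Fintype.card P : ℝ)⁻¹ with hc
  have hc0 : 0 ≤ c := by positivity
  have hcP : Fintype.card P * c = 1 := mul_inv_cancel₀ hP
  let G : Fin n → P → A → ℝ := fun k p a => H p a (s k) - c * ∑ q, H q a (s k)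
  have hG0 : ∀ k a, ∑ p, G k p a = 0 := by
    intro k a
    simp only [G, Finset.sum_sub_distrib, Finset.sum_const, Finset.card_univ, nsmul_eq_mul]
    rw [← mul_assoc, hcP]; ring
  have hG2 : ∀ k p a, (G k p a) ^ 2 ≤ 4 := by
    intro k p a
    have h1 : |c * ∑ q, H q a (s k)| ≤ 1 := by
      rw [abs_mul, abs_of_nonneg hc0, ← hcP, mul_comm]
      refine mul_le_mul_of_nonneg_right ?_ hc0
      refine (Finset.abs_sum_le_sum_abs _ _).trans ?_
      refine (Finset.sum_le_sum fun q _ => hH q a (s k)).trans ?_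
      simp
    have h3 : |G k p a| ≤ 2 := by
      refine (abs_sub _ _).trans ?_
      have := hH p a (s k)
      linarith
    have := abs_le.1 h3
    nlinarith
  let N : B → Fin n → P → A → ℝ := fun b k p a =>
    ((if w b k = p then 1 else 0) - c) * (if v b k = a then 1 else 0)
  have e1 : ∀ b k, ∑ p, ∑ a, G k p a * N b k p a = G k (w b k) (v b k) := by
    intro b k
    have : ∀ p, ∑ a, G k p a * N b k p a = G k p (v b k) * ((if w b k = p then 1 else 0) - c) := by
      intro p
      simp [N]
    simp only [this, mul_sub, Finset.sum_sub_distrib, ← Finset.sum_mul, hG0]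
    simp
  have e2 : ∀ b b' k, ∑ p, ∑ a, N b k p a * N b' k p a =
      ((if w b k = w b' k then 1 else 0) - c) * (if v b k = v b' k then 1 else 0) := by
    intro b b' k
    have : ∀ p, ∑ a, N b k p a * N b' k p a = ((if w b k = p then 1 else 0) - c) *
        ((if w b' k = p then 1 else 0) - c) * (if v b k = v b' k then 1 else 0) := by
      intro p
      simp only [N]
      by_cases hv : v b k = v b' k
      · simp [hv]
      · simp [hv]
    simp only [this, ← Finset.sum_mul]
    congr 1
    have : ∀ p, (((if w b k = p then 1 else 0) - c) * ((if w b' k = p then 1 else 0) - c) : ℝ)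
        = (if w b k = p then (if w b' k = p then 1 else 0) else 0) - c * (if w b k = p then 1 else 0)
          - c * (if w b' k = p then 1 else 0) + c * c := by
      intro p; split_ifs <;> ring
    simp only [this, Finset.sum_add_distrib, Finset.sum_sub_distrib, ← Finset.mul_sum]
    simp
    rw [hcP]
    simp only [eq_comm (a := w b' k)]
    ring
  have cs := Finset.sum_mul_sq_le_sq_mul_sq (Finset.univ : Finset (Fin n × P × A))
    (fun t => G t.1 t.2.1 t.2.2) (fun t => ∑ b ∈ Bs, N b t.1 t.2.1 t.2.2)
  have l1 : ∑ t : Fin n × P × A, G t.1 t.2.1 t.2.2 * ∑ b ∈ Bs, N b t.1 t.2.1 t.2.2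
      = ∑ b ∈ Bs, ∑ k, G k (w b k) (v b k) := by
    simp only [Finset.mul_sum]
    rw [Finset.sum_comm]
    refine Finset.sum_congr rfl fun b _ => ?_
    simp only [Fintype.sum_prod_type, e1]
  have l2 : ∑ t : Fin n × P × A, (G t.1 t.2.1 t.2.2) ^ 2 ≤ 4 * n * Fintype.card P * Fintype.card A := by
    refine (Finset.sum_le_sum fun t _ => hG2 _ _ _).trans ?_
    simp
    apply le_of_eq; ring
  have l3 : ∑ t : Fin n × P × A, (∑ b ∈ Bs, N b t.1 t.2.1 t.2.2) ^ 2 =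
      ∑ b ∈ Bs, ∑ b' ∈ Bs, ∑ k, ((if w b k = w b' k then 1 else 0) - c) *
        (if v b k = v b' k then 1 else 0) := by
    simp only [sq, Finset.sum_mul_sum]
    rw [Finset.sum_comm]
    refine Finset.sum_congr rfl fun b _ => ?_
    rw [Finset.sum_comm]
    refine Finset.sum_congr rfl fun b' _ => ?_
    simp only [Fintype.sum_prod_type, e2]
  rw [← l3]
  have l4 : ∑ b ∈ Bs, ∑ k, G k (w b k) (v b k) ≤ - (Bs.card * (n * δ)) := by
    refine (Finset.sum_le_sum fun b hb => hyp b hb).trans ?_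
    simp
  rw [l1] at cs
  have l5 : (Bs.card * (n * δ)) ^ 2 ≤ (∑ b ∈ Bs, ∑ k, G k (w b k) (v b k)) ^ 2 := by
    have : 0 ≤ (Bs.card * (n * δ) : ℝ) := by positivity
    nlinarith
  refine l5.trans (cs.trans ?_)
  exact mul_le_mul_of_nonneg_right l2 (Finset.sum_nonneg fun _ _ => sq_nonneg _)

end AV

namespace AV

def kap {P : Type*} [Fintype P] [DecidableEq P] (a b c e : P) : ℝ :=
  ((if a = b then 1 else 0) - (Fintype.card P : ℝ)⁻¹) * (if c = e then 1 else 0)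

lemma kap_abs {P : Type*} [Fintype P] [DecidableEq P] [Nonempty P] (a b c e : P) :
    |kap a b c e| ≤ 1 := by
  have h1 : (1 : ℝ) ≤ Fintype.card P := by exact_mod_cast Fintype.card_pos
  have h2 : (Fintype.card P : ℝ)⁻¹ ≤ 1 := inv_le_one_of_one_le₀ h1
  have h3 : 0 ≤ (Fintype.card P : ℝ)⁻¹ := by positivity
  unfold kap
  rw [abs_le]
  split_ifs <;> constructor <;> linarith

lemma kap_sum {P : Type*} [Fintype P] [DecidableEq P] [Nonempty P] (b c e : P) :
    ∑ a, kap a b c e = 0 := by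
  have hP : (Fintype.card P : ℝ) ≠ 0 := by exact_mod_cast Fintype.card_ne_zero
  unfold kap
  rw [← Finset.sum_mul, Finset.sum_sub_distrib]
  simp [hP]

lemma kap_symm {P : Type*} [Fintype P] [DecidableEq P] (a b c e : P) :
    kap a b c e = kap b a e c := by
  unfold kap
  simp only [eq_comm]

lemma badCount {X Y S : Type*} [Fintype X] [Fintype Y] [Nonempty X] [Nonempty Y]
    [DecidableEq X] [DecidableEq Y]
    (H : X × Y → X × Y → S → ℝ) (hH : ∀ a b s, |H a b s| ≤ 1) (φ : X × Y → ℝ)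
    (hφ : ∀ b s, φ b ≤ (Fintype.card (X × Y) : ℝ)⁻¹ * ∑ a, H a b s)
    (n M : ℕ) (hn : 0 < n) (δ η : ℝ) (hδ : 0 < δ)
    (hη : η = δ ^ 2 / (8 * (Fintype.card (X × Y) : ℝ) ^ 2))
    (f1 : Fin M → Fin n → X) (f2 : Fin M → Fin n → Y)
    (hgram : ∀ m1 m2 l1 l2 u1 u2 v1 v2, m1 ≠ l1 → m1 ≠ u1 → m1 ≠ v1 → m2 ≠ l2 → m2 ≠ u2 → m2 ≠ v2 →
        ∑ k, kap (f1 m1 k, f2 m2 k) (f1 l1 k, f2 l2 k) (f1 u1 k, f2 u2 k) (f1 v1 k, f2 v2 k)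
          ≤ n * η)
    (htyp : ∀ m1 m2, n * (2 * δ) ≤ ∑ k, φ (f1 m1 k, f2 m2 k))
    (s : Fin n → S) (Bs : Finset (Fin M × Fin M))
    (hB : ∀ p ∈ Bs, ∃ q : Fin M × Fin M, q.1 ≠ p.1 ∧ q.2 ≠ p.2 ∧
      ∑ k, H (f1 p.1 k, f2 p.2 k) (f1 q.1 k, f2 q.2 k) (s k) ≤ n * δ) :
    (Bs.card : ℝ) ≤ 32 * (Fintype.card (X × Y) : ℝ) ^ 2 / δ ^ 2 * M := by
  classical
  choose! q hq1 hq2 hq using hB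
  set c : ℝ := (Fintype.card (X × Y) : ℝ) with hc
  have hc0 : 0 < c := by rw [hc]; exact_mod_cast Fintype.card_pos
  have hn' : (0 : ℝ) < n := by exact_mod_cast hn
  have hbes := bessel Bs n (fun p k => (f1 p.1 k, f2 p.2 k))
    (fun p k => (f1 (q p).1 k, f2 (q p).2 k)) s H hH δ hδ.le (by
      intro p hp
      rw [Finset.sum_sub_distrib]
      have h1 := hq p hp
      have h2 := htyp (q p).1 (q p).2
      have h3 : ∑ k, φ (f1 (q p).1 k, f2 (q p).2 k) ≤ ∑ k, (Fintype.card (X × Y) : ℝ)⁻¹ *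
          ∑ a, H a (f1 (q p).1 k, f2 (q p).2 k) (s k) := Finset.sum_le_sum fun k _ => hφ _ _
      linarith)
  have inner : ∀ p ∈ Bs, ∑ p' ∈ Bs, ∑ k, kap (f1 p.1 k, f2 p.2 k) (f1 p'.1 k, f2 p'.2 k)
      (f1 (q p).1 k, f2 (q p).2 k) (f1 (q p').1 k, f2 (q p').2 k) ≤ Bs.card * (n * η) + 4 * M * n := by
    intro p hp
    let NG : Finset (Fin M × Fin M) := ((({p.1} : Finset (Fin M)) ×ˢ Finset.univ) ∪
      (Finset.univ ×ˢ {p.2})) ∪ (({(q p).1} ×ˢ Finset.univ) ∪ (Finset.univ ×ˢ {(q p).2}))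
    have hNG : NG.card ≤ 4 * M := by
      have := (Finset.card_union_le ((({p.1} : Finset (Fin M)) ×ˢ Finset.univ) ∪
        (Finset.univ ×ˢ {p.2})) (({(q p).1} ×ˢ Finset.univ) ∪ (Finset.univ ×ˢ {(q p).2})))
      have h2 := Finset.card_union_le (({p.1} : Finset (Fin M)) ×ˢ (Finset.univ : Finset (Fin M)))
        (Finset.univ ×ˢ {p.2})
      have h3 := Finset.card_union_le (({(q p).1} : Finset (Fin M)) ×ˢ (Finset.univ : Finset (Fin M)))
        (Finset.univ ×ˢ {(q p).2})
      simp only [Finset.card_product, Finset.card_singleton, Finset.card_univ, Fintype.card_fin] at h2 h3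
      have : NG.card ≤ _ := this
      omega
    have hη0 : 0 ≤ η := by rw [hη]; positivity
    have : ∀ p' ∈ Bs, ∑ k, kap (f1 p.1 k, f2 p.2 k) (f1 p'.1 k, f2 p'.2 k)
      (f1 (q p).1 k, f2 (q p).2 k) (f1 (q p').1 k, f2 (q p').2 k) ≤
        n * η + if p' ∈ NG then (n : ℝ) else 0 := by
      intro p' hp'
      by_cases h : p' ∈ NG
      · rw [if_pos h]
        have : ∑ k, kap (f1 p.1 k, f2 p.2 k) (f1 p'.1 k, f2 p'.2 k)
          (f1 (q p).1 k, f2 (q p).2 k) (f1 (q p').1 k, f2 (q p').2 k) ≤ ∑ k : Fin n, (1 : ℝ) :=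
          Finset.sum_le_sum fun k _ => (abs_le.1 (kap_abs _ _ _ _)).2
        simp at this
        have : 0 ≤ n * η := by positivity
        linarith
      · rw [if_neg h, add_zero]
        simp only [NG, Finset.mem_union, Finset.mem_product, Finset.mem_singleton,
          Finset.mem_univ, and_true, true_and, not_or] at h
        simp only [kap_symm (f1 p.1 _, f2 p.2 _)]
        exact hgram _ _ _ _ _ _ _ _ h.1.1 (hq1 p' hp').symm h.2.1 h.1.2 (hq2 p' hp').symm h.2.2
    refine (Finset.sum_le_sum this).trans ?_
    rw [Finset.sum_add_distrib, ← Finset.sum_filter]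
    simp only [Finset.sum_const, nsmul_eq_mul]
    have h4 : ((Bs.filter (· ∈ NG)).card : ℝ) ≤ 4 * M := by
      have : (Bs.filter (· ∈ NG)).card ≤ NG.card :=
        Finset.card_le_card fun x hx => (Finset.mem_filter.1 hx).2
      exact_mod_cast this.trans hNG
    have := mul_le_mul_of_nonneg_right h4 hn'.le
    linarith
  have tot := Finset.sum_le_sum inner
  simp only [Finset.sum_const, nsmul_eq_mul] at tot
  change _ ≤ 4 * n * c * c * ∑ p ∈ Bs, ∑ p' ∈ Bs, ∑ k, kap (f1 p.1 k, f2 p.2 k) (f1 p'.1 k, f2 p'.2 k)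
      (f1 (q p).1 k, f2 (q p).2 k) (f1 (q p').1 k, f2 (q p').2 k) at hbes
  set b : ℝ := (Bs.card : ℝ) with hb
  have hb0 : 0 ≤ b := by positivity
  have h5 := hbes.trans (mul_le_mul_of_nonneg_left tot (by positivity))
  rcases hb0.eq_or_lt with h | h
  · rw [← h]; positivity
  have e8 : 4 * c * c * η = δ ^ 2 / 2 := by rw [hη]; field_simp; norm_num
  have h6 : (b * n ^ 2) * (b * δ ^ 2) ≤ (b * n ^ 2) * (b * (4 * c * c * η) + 16 * c ^ 2 * M) := by
    linarith
  have h7 := le_of_mul_le_mul_left h6 (by positivity)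
  rw [e8] at h7
  rw [div_mul_eq_mul_div, le_div_iff₀ (by positivity)]
  linarith

end AV

namespace AV

/-- pairwise comparison statistic of two message pairs -/
def Tst {X Y Z : Type*} {n M : ℕ} (h : Fin 3 → X × Y → X × Y → Z → ℝ)
    (f1 : Fin M → Fin n → X) (f2 : Fin M → Fin n → Y) (a b : Fin M × Fin M) (k : Fin n) (z : Z) : ℝ :=
  if a.2 = b.2 then h 0 (f1 a.1 k, f2 a.2 k) (f1 b.1 k, f2 b.2 k) z
  else if a.1 = b.1 then h 1 (f1 a.1 k, f2 a.2 k) (f1 b.1 k, f2 b.2 k) z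
  else h 2 (f1 a.1 k, f2 a.2 k) (f1 b.1 k, f2 b.2 k) z

lemma Tst_anti {X Y Z : Type*} {n M : ℕ} (h : Fin 3 → X × Y → X × Y → Z → ℝ)
    (ha0 : ∀ x x' y y' y'' z, h 0 (x, y) (x', y') z = - h 0 (x', y) (x, y'') z)
    (ha1 : ∀ x x' x'' y y' z, h 1 (x, y) (x', y') z = - h 1 (x, y') (x'', y) z)
    (ha2 : ∀ a b z, h 2 a b z = - h 2 b a z)
    (f1 : Fin M → Fin n → X) (f2 : Fin M → Fin n → Y) (a b : Fin M × Fin M) (k : Fin n) (z : Z) :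
    Tst h f1 f2 a b k z = - Tst h f1 f2 b a k z := by
  unfold Tst
  by_cases h1 : a.2 = b.2
  · rw [if_pos h1, if_pos h1.symm, h1]; exact ha0 _ _ _ _ _ _
  · rw [if_neg h1, if_neg (Ne.symm h1)]
    by_cases h2 : a.1 = b.1
    · rw [if_pos h2, if_pos h2.symm, h2]; exact ha1 _ _ _ _ _ _
    · rw [if_neg h2, if_neg (Ne.symm h2)]; exact ha2 _ _ _

lemma decoder {X Y Z S : Type*} [Fintype Z] {n M : ℕ} (hM : 2 ≤ M)
    (W : X × Y → S → Z → ℝ) (hW0 : ∀ a s z, 0 ≤ W a s z) (hW1 : ∀ a s, ∑ z, W a s z = 1)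
    (h : Fin 3 → X × Y → X × Y → Z → ℝ) (hh : ∀ t a b z, |h t a b z| ≤ 1)
    (ha0 : ∀ x x' y y' y'' z, h 0 (x, y) (x', y') z = - h 0 (x', y) (x, y'') z)
    (ha1 : ∀ x x' x'' y y' z, h 1 (x, y) (x', y') z = - h 1 (x, y') (x'', y) z)
    (ha2 : ∀ a b z, h 2 a b z = - h 2 b a z)
    (f1 : Fin M → Fin n → X) (f2 : Fin M → Fin n → Y) (δ : ℝ) (hδ : 0 < δ) (hδ1 : δ ≤ 1)
    (C : ℝ)
    (hbad : ∀ (t : Fin 3) (s : Fin n → S) (Bs : Finset (Fin M × Fin M)),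
      (∀ p ∈ Bs, ∃ q : Fin M × Fin M, q.1 ≠ p.1 ∧ q.2 ≠ p.2 ∧
      ∑ k, ∑ z, W (f1 p.1 k, f2 p.2 k) (s k) z * h t (f1 p.1 k, f2 p.2 k) (f1 q.1 k, f2 q.2 k) z ≤ n * δ) →
      (Bs.card : ℝ) ≤ C * M) :
    ∃ dec : (Fin n → Z) → Fin M × Fin M, ∀ s : Fin n → S,
      1 - (1 / ((M : ℝ) * (M : ℝ))) * ∑ m1, ∑ m2, ∑ z with dec z = (m1, m2),
        ∏ k, W (f1 m1 k, f2 m2 k) (s k) (z k) ≤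
        3 * C / M + (M : ℝ) ^ 2 * Real.exp (-(n * (δ ^ 2 / 4))) := by
  classical
  have hM0 : (0 : ℝ) < M := by exact_mod_cast (by omega : 0 < M)
  have : Nontrivial (Fin M) := Fin.nontrivial_iff_two_le.2 hM
  let win : Fin M × Fin M → (Fin n → Z) → Prop := fun a z =>
    ∀ b, b ≠ a → 0 < ∑ k, Tst h f1 f2 a b k (z k)
  have huniq : ∀ a b z, win a z → win b z → a = b := by
    intro a b z h1 h2
    by_contra hne
    have e1 := h1 b (Ne.symm hne)
    have e2 := h2 a hne
    have : ∑ k, Tst h f1 f2 a b k (z k) = - ∑ k, Tst h f1 f2 b a k (z k) := by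
      rw [← Finset.sum_neg_distrib]
      exact Finset.sum_congr rfl fun k _ => Tst_anti h ha0 ha1 ha2 f1 f2 a b k _
    linarith
  let dec : (Fin n → Z) → Fin M × Fin M := fun z =>
    if hz : ∃ a, win a z then hz.choose else (⟨0, by omega⟩, ⟨0, by omega⟩)
  have hdec : ∀ a z, win a z → dec z = a := by
    intro a z hz
    have hex : ∃ a, win a z := ⟨a, hz⟩
    simp only [dec, dif_pos hex]
    exact huniq _ _ _ hex.choose_spec hz
  refine ⟨dec, fun s => ?_⟩
  let wd : Fin M × Fin M → Fin n → X × Y := fun a k => (f1 a.1 k, f2 a.2 k)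
  let pr : Fin M × Fin M → (Fin n → Z) → ℝ := fun a z => ∏ k, W (wd a k) (s k) (z k)
  have hpr0 : ∀ a z, 0 ≤ pr a z := fun a z => Finset.prod_nonneg fun k _ => hW0 _ _ _
  have hpr1 : ∀ a, ∑ z, pr a z = 1 := by
    intro a
    have := Finset.prod_univ_sum (fun _ : Fin n => (Finset.univ : Finset Z))
      (fun k z => W (wd a k) (s k) z)
    simp only [Fintype.piFinset_univ, hW1, Finset.prod_const_one] at this
    exact this.symm
  let bq : Fin 3 → Fin M × Fin M → Prop := fun t p => ∃ q : Fin M × Fin M, q.1 ≠ p.1 ∧ q.2 ≠ p.2 ∧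
      ∑ k, ∑ z, W (wd p k) (s k) z * h t (wd p k) (wd q k) z ≤ n * δ
  let Bad : Fin 3 → Finset (Fin M × Fin M) := fun t => Finset.univ.filter (bq t)
  have hBad : ∀ t, ((Bad t).card : ℝ) ≤ C * M := fun t =>
    hbad t s (Bad t) fun p hp => (Finset.mem_filter.1 hp).2
  let BadU := Finset.univ.biUnion Bad
  have hBadU : (BadU.card : ℝ) ≤ 3 * C * M := by
    have h1 : (BadU.card : ℝ) ≤ ∑ t, ((Bad t).card : ℝ) := by
      exact_mod_cast Finset.card_biUnion_le
    have h2 := Finset.sum_le_sum fun t (_ : t ∈ (Finset.univ : Finset (Fin 3))) => hBad t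
    simp at h2
    linarith
  set ε := Real.exp (-(n * (δ ^ 2 / 4))) with hε
  have hsucc : ∀ a, 1 - (M : ℝ) ^ 2 * ε - (if a ∈ BadU then 1 else 0) ≤ ∑ z with dec z = a, pr a z := by
    intro a
    by_cases hab : a ∈ BadU
    · rw [if_pos hab]
      have : 0 ≤ ∑ z with dec z = a, pr a z := Finset.sum_nonneg fun z _ => hpr0 _ _
      have : 0 ≤ (M : ℝ) ^ 2 * ε := by positivity
      linarith
    · rw [if_neg hab]
      have hgood : ∀ t q, q.1 ≠ a.1 → q.2 ≠ a.2 →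
          n * δ < ∑ k, ∑ z, W (wd a k) (s k) z * h t (wd a k) (wd q k) z := by
        intro t q h1 h2
        by_contra hle
        refine hab (Finset.mem_biUnion.2 ⟨t, Finset.mem_univ _, Finset.mem_filter.2
          ⟨Finset.mem_univ _, q, h1, h2, not_lt.1 hle⟩⟩)
      have hmean : ∀ b, b ≠ a → n * δ <
          ∑ k, ∑ z, W (wd a k) (s k) z * Tst h f1 f2 a b k z := by
        intro b hb
        by_cases h1 : a.2 = b.2
        · obtain ⟨y, hy⟩ := exists_ne a.2
          have hx : b.1 ≠ a.1 := fun e => hb (Prod.ext e h1.symm)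
          have := hgood 0 (b.1, y) hx hy
          refine this.trans_le (le_of_eq ?_)
          refine Finset.sum_congr rfl fun k _ => Finset.sum_congr rfl fun z _ => ?_
          simp only [Tst, if_pos h1, wd]
          rw [ha0 _ _ _ _ (f2 b.2 k), ha0 (f1 b.1 k) _ _ _ (f2 b.2 k), neg_neg]
        · by_cases h2 : a.1 = b.1
          · obtain ⟨x, hx⟩ := exists_ne a.1
            have := hgood 1 (x, b.2) hx (Ne.symm h1)
            refine this.trans_le (le_of_eq ?_)
            refine Finset.sum_congr rfl fun k _ => Finset.sum_congr rfl fun z _ => ?_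
            simp only [Tst, if_neg h1, if_pos h2, wd]
            rw [ha1 _ _ (f1 b.1 k), ha1 _ _ (f1 b.1 k) (f2 b.2 k), neg_neg]
          · have := hgood 2 b (Ne.symm h2) (Ne.symm h1)
            refine this.trans_le (le_of_eq ?_)
            refine Finset.sum_congr rfl fun k _ => Finset.sum_congr rfl fun z _ => ?_
            simp only [Tst, if_neg h1, if_neg h2, wd]
      let L : Fin M × Fin M → Finset (Fin n → Z) := fun b =>
        Finset.univ.filter fun z => b ≠ a ∧ ∑ k, Tst h f1 f2 a b k (z k) ≤ 0
      have hL : ∀ b, ∑ z ∈ L b, pr a z ≤ ε := by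
        intro b
        by_cases hb : b = a
        · have : L b = ∅ := by simp [L, hb]
          rw [this]; simp; positivity
        · have := chernoff (K := Fin n) (fun k z => W (wd a k) (s k) z) (fun _ _ => hW0 _ _ _)
            (fun _ => hW1 _ _) (fun k z => - Tst h f1 f2 a b k z) (fun k z => ?_) (-δ) δ hδ.le
            (by linarith) ?_ (L b) ?_
          · simpa [hε, pr] using this
          · rw [abs_neg]; unfold Tst; split_ifs <;> exact hh _ _ _ _
          · have := hmean b hb
            simp only [mul_neg, Finset.sum_neg_distrib, Fintype.card_fin]
            linarith
          · intro z hz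
            have := (Finset.mem_filter.1 hz).2.2
            simp only [Finset.sum_neg_distrib, neg_add_cancel, mul_zero]
            linarith
      have hcov : (Finset.univ : Finset (Fin n → Z)) ⊆
          (Finset.univ.filter fun z => dec z = a) ∪ Finset.univ.biUnion L := by
        intro z _
        by_cases hw : win a z
        · exact Finset.mem_union_left _ (Finset.mem_filter.2 ⟨Finset.mem_univ _, hdec a z hw⟩)
        · simp only [win] at hw
          push Not at hw
          obtain ⟨b, hb, hb2⟩ := hw
          exact Finset.mem_union_right _ (Finset.mem_biUnion.2 ⟨b, Finset.mem_univ _,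
            Finset.mem_filter.2 ⟨Finset.mem_univ _, hb, hb2⟩⟩)
      have h1 := Finset.sum_le_sum_of_subset_of_nonneg hcov fun z _ _ => hpr0 a z
      rw [hpr1] at h1
      have h2 := Finset.sum_union_inter (s₁ := Finset.univ.filter fun z => dec z = a)
        (s₂ := Finset.univ.biUnion L) (f := pr a)
      have h3 : 0 ≤ ∑ z ∈ (Finset.univ.filter fun z => dec z = a) ∩ Finset.univ.biUnion L, pr a z :=
        Finset.sum_nonneg fun z _ => hpr0 _ _
      have h4 := sum_biUnion_le Finset.univ L (pr a) (hpr0 a)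
      have h5 := Finset.sum_le_sum fun b (_ : b ∈ (Finset.univ : Finset (Fin M × Fin M))) => hL b
      simp only [Finset.sum_const, Finset.card_univ, Fintype.card_prod, Fintype.card_fin, nsmul_eq_mul,
        Nat.cast_mul] at h5
      rw [sq]
      linarith
  have htot := Finset.sum_le_sum fun a (_ : a ∈ (Finset.univ : Finset (Fin M × Fin M))) => hsucc a
  rw [Finset.sum_sub_distrib, Finset.sum_const, Finset.sum_ite_mem, Finset.univ_inter] at htot
  simp only [Finset.sum_const, Finset.card_univ, Fintype.card_prod, Fintype.card_fin, nsmul_eq_mul,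
        Nat.cast_mul, mul_one] at htot
  rw [Fintype.sum_prod_type] at htot
  have hfin : (M : ℝ) * M * (1 - (3 * C / M + (M : ℝ) ^ 2 * ε)) ≤
      ∑ m1, ∑ m2, ∑ z with dec z = (m1, m2), ∏ k, W (f1 m1 k, f2 m2 k) (s k) (z k) := by
    refine le_trans ?_ htot
    have : (M : ℝ) * M * (3 * C / M) = 3 * C * M := by field_simp
    nlinarith
  have h9 : 1 - (3 * C / M + (M : ℝ) ^ 2 * ε) ≤ (1 / ((M : ℝ) * M)) *
      ∑ m1, ∑ m2, ∑ z with dec z = (m1, m2), ∏ k, W (f1 m1 k, f2 m2 k) (s k) (z k) := by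
    rw [one_div, ← div_eq_inv_mul, le_div_iff₀ (by positivity)]
    linarith
  linarith

end AV

namespace AV

lemma ev_small (A c β : ℝ) (hc : 0 < c) (hβ : 0 < β) :
    ∀ᶠ n : ℕ in Filter.atTop, A * Real.exp (-(n * c)) < β := by
  have h1 : Filter.Tendsto (fun n : ℕ => (n : ℝ) * c) Filter.atTop Filter.atTop :=
    Filter.Tendsto.atTop_mul_const hc tendsto_natCast_atTop_atTop
  have h2 : Filter.Tendsto (fun n : ℕ => A * Real.exp (-(n * c))) Filter.atTop (nhds (A * 0)) :=
    (Real.tendsto_exp_neg_atTop_nhds_zero.comp h1).const_mul A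
  rw [mul_zero] at h2
  exact h2.eventually (gt_mem_nhds hβ)

lemma classical {X Y Z S : Type*} [Fintype X] [Fintype Y] [Nonempty X] [Nonempty Y] [Fintype Z]
    (W : X × Y → S → Z → ℝ) (hW0 : ∀ a s z, 0 ≤ W a s z) (hW1 : ∀ a s, ∑ z, W a s z = 1)
    (h : Fin 3 → X × Y → X × Y → Z → ℝ) (hh : ∀ t a b z, |h t a b z| ≤ 1)
    (ha0 : ∀ x x' y y' y'' z, h 0 (x, y) (x', y') z = - h 0 (x', y) (x, y'') z)
    (ha1 : ∀ x x' x'' y y' z, h 1 (x, y) (x', y') z = - h 1 (x, y') (x'', y) z)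
    (ha2 : ∀ a b z, h 2 a b z = - h 2 b a z)
    (φ : Fin 3 → X × Y → ℝ) (hφ1 : ∀ t b, |φ t b| ≤ 1)
    (hφ : ∀ t b s, φ t b ≤ (Fintype.card (X × Y) : ℝ)⁻¹ * ∑ a, ∑ z, W a s z * h t a b z)
    (δ : ℝ) (hδ : 0 < δ) (hδ1 : δ ≤ 1)
    (hm : ∀ t, 3 * δ ≤ (Fintype.card (X × Y) : ℝ)⁻¹ * ∑ b, φ t b) :
    ∃ r : ℝ, 0 < r ∧ ∀ β : ℝ, 0 < β → ∃ N : ℕ, ∀ n ≥ N, ∃ M : ℕ, Real.exp (n * r) ≤ M ∧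
      ∃ (f1 : Fin M → Fin n → X) (f2 : Fin M → Fin n → Y) (dec : (Fin n → Z) → Fin M × Fin M),
      ∀ s : Fin n → S,
      1 - (1 / ((M : ℝ) * (M : ℝ))) * ∑ m1, ∑ m2, ∑ z with dec z = (m1, m2),
        ∏ k, W (f1 m1 k, f2 m2 k) (s k) (z k) ≤ β := by
  classical
  set c : ℝ := (Fintype.card (X × Y) : ℝ) with hc
  have hc1 : (1 : ℝ) ≤ c := by rw [hc]; exact_mod_cast Fintype.card_pos
  have hc0 : 0 < c := by linarith
  set η : ℝ := δ ^ 2 / (8 * c ^ 2) with hη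
  have hη0 : 0 < η := by positivity
  have hη1 : η ≤ δ / 2 := by
    rw [hη, div_le_iff₀ (by positivity)]
    have hcc : 1 ≤ c ^ 2 := one_le_pow₀ hc1
    have := mul_le_mul_of_nonneg_left hcc hδ.le
    nlinarith
  set r : ℝ := η ^ 2 / 64 with hr
  have hr0 : 0 < r := by positivity
  refine ⟨r, hr0, fun β hβ => ?_⟩
  set C : ℝ := 32 * c ^ 2 / δ ^ 2 with hC
  have hC0 : 0 < C := by positivity
  let κ : Option (Fin 3) → (X × Y) → (X × Y) → (X × Y) → (X × Y) → ℝ := fun i a b d e =>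
    match i with
    | none => kap a b d e
    | some t => (c⁻¹ * ∑ b, φ t b - φ t a) / 2
  have hmφ : ∀ t, |c⁻¹ * ∑ b, φ t b| ≤ 1 := by
    intro t
    rw [abs_mul, abs_of_pos (inv_pos.2 hc0), ← div_eq_inv_mul, div_le_one hc0]
    refine (Finset.abs_sum_le_sum_abs _ _).trans ?_
    refine (Finset.sum_le_sum fun b _ => hφ1 t b).trans ?_
    rw [Finset.sum_const, Finset.card_univ, nsmul_eq_mul, mul_one]
  have hκb : ∀ i a b d e, |κ i a b d e| ≤ 1 := by
    intro i a b d e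
    cases i with
    | none => exact kap_abs _ _ _ _
    | some t =>
      have h1 := abs_le.1 (hmφ t)
      have h2 := abs_le.1 (hφ1 t a)
      simp only [κ]
      rw [abs_le]; constructor <;> linarith
  have hκz : ∀ i b d e, ∑ a, κ i a b d e = 0 := by
    intro i b d e
    cases i with
    | none => exact kap_sum _ _ _
    | some t =>
      simp only [κ]
      rw [← Finset.sum_div, Finset.sum_sub_distrib, Finset.sum_const, Finset.card_univ, nsmul_eq_mul,
        ← hc, mul_inv_cancel_left₀ hc0.ne', sub_self, zero_div]
  have ev1 := ev_small (4 * 256) (η ^ 2 / 8) 1 (by positivity) one_pos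
  have ev2 := ev_small (3 * C) r (β / 2) hr0 (by positivity)
  have ev3 := ev_small 4 (δ ^ 2 / 8) (β / 2) (by positivity) (by positivity)
  have ev4 := ev_small 1 r (1 / 2) hr0 (by norm_num)
  obtain ⟨N, hN⟩ := Filter.eventually_atTop.1
    (ev1.and (ev2.and (ev3.and (ev4.and (Filter.eventually_ge_atTop 1)))))
  refine ⟨N, fun n hn => ?_⟩
  obtain ⟨h1, h2, h3, h4, hn1⟩ := hN n hn
  set E := Real.exp (n * r) with hE
  have hE0 : 0 < E := Real.exp_pos _
  have hEi : Real.exp (-(n * r)) = E⁻¹ := Real.exp_neg _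
  have hE2 : 2 < E := by
    rw [hEi, one_mul] at h4
    rw [one_div] at h4
    exact (inv_lt_inv₀ hE0 (by norm_num)).1 h4
  refine ⟨⌈E⌉₊, Nat.le_ceil _, ?_⟩
  set M := ⌈E⌉₊ with hMdef
  have hME : E ≤ M := Nat.le_ceil _
  have hME2 : (M : ℝ) ≤ 2 * E := by
    have := (Nat.ceil_lt_add_one hE0.le).le
    linarith
  have hM2 : 2 ≤ M := by
    have : (2 : ℝ) ≤ M := by linarith
    exact_mod_cast this
  have hM0 : (0 : ℝ) < M := by linarith
  have hpow : ∀ j : ℕ, (M : ℝ) ^ j ≤ 2 ^ j * Real.exp (j * (n * r)) := by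
    intro j
    rw [Real.exp_nat_mul, ← mul_pow]
    exact pow_le_pow_left₀ hM0.le hME2 j
  obtain ⟨f1, f2, hf⟩ := codebook κ hκb hκz η hη0.le (by linarith) n M (by
    have e1 : Real.exp ((8 : ℕ) * (n * r)) * Real.exp (-(n * (η ^ 2 / 4))) =
        Real.exp (-(n * (η ^ 2 / 8))) := by
      rw [← Real.exp_add]; congr 1; rw [hr]; push_cast; ring
    have := mul_le_mul_of_nonneg_right (hpow 8) (Real.exp_pos (-(n * (η ^ 2 / 4)))).le
    rw [mul_assoc, e1] at this
    have h5 : (Fintype.card (Option (Fin 3)) : ℝ) = 4 := by simp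
    rw [h5]
    norm_num at this
    linarith)
  have : Nontrivial (Fin M) := Fin.nontrivial_iff_two_le.2 hM2
  obtain ⟨dec, hdec⟩ := decoder (S := S) hM2 W hW0 hW1 h hh ha0 ha1 ha2 f1 f2 δ hδ hδ1 C (by
    intro t s Bs hB
    refine badCount (fun a b s => ∑ z, W a s z * h t a b z) ?_ (φ t) (hφ t) n M hn1 δ η hδ hη f1 f2
      ?_ ?_ s Bs hB
    · intro a b s
      refine (Finset.abs_sum_le_sum_abs _ _).trans ?_
      rw [← hW1 a s]
      refine Finset.sum_le_sum fun z _ => ?_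
      rw [abs_mul, abs_of_nonneg (hW0 _ _ _)]
      exact mul_le_of_le_one_right (hW0 _ _ _) (hh _ _ _ _)
    · intro m1 m2 l1 l2 u1 u2 v1 v2 a1 a2 a3 a4 a5 a6
      exact hf none m1 m2 l1 l2 u1 u2 v1 v2 a1 a2 a3 a4 a5 a6
    · intro m1 m2
      obtain ⟨x, hx⟩ := exists_ne m1
      obtain ⟨y, hy⟩ := exists_ne m2
      have := hf (some t) m1 m2 x y x y x y hx.symm hx.symm hx.symm hy.symm hy.symm hy.symm
      simp only [κ] at this
      rw [← Finset.sum_div, Finset.sum_sub_distrib, Finset.sum_const, Finset.card_univ, nsmul_eq_mul,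
        Fintype.card_fin] at this
      have h6 := hm t
      have hn0 : (0 : ℝ) ≤ n := by positivity
      have h7 := mul_le_mul_of_nonneg_left h6 hn0
      have h8 := mul_le_mul_of_nonneg_left hη1 hn0
      linarith)
  refine ⟨f1, f2, dec, fun s => (hdec s).trans ?_⟩
  have p1 : 3 * C / M ≤ β / 2 := by
    rw [hEi] at h2
    refine le_trans ?_ h2.le
    rw [div_eq_mul_inv]
    gcongr
  have p2 : (M : ℝ) ^ 2 * Real.exp (-(n * (δ ^ 2 / 4))) ≤ β / 2 := by
    have := mul_le_mul_of_nonneg_right (hpow 2) (Real.exp_pos (-(n * (δ ^ 2 / 4)))).le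
    refine this.trans (le_trans ?_ h3.le)
    rw [mul_assoc, ← Real.exp_add]
    norm_num
    rw [hr]
    have hη2 : η ^ 2 ≤ δ ^ 2 := by nlinarith
    have hn0 : (0 : ℝ) ≤ n := by positivity
    have := mul_le_mul_of_nonneg_left hη2 hn0
    have : 0 ≤ (n : ℝ) * δ ^ 2 := by positivity
    linarith
  linarith

end AV

namespace AV

lemma traceNorm_eq {m : Type*} [Fintype m] [DecidableEq m] (A : Matrix m m ℂ) :
    ∃ l : m → ℝ, (∀ i, 0 ≤ l i) ∧ traceNorm A = ∑ i, Real.sqrt (l i) ∧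
      ∑ i, l i = ∑ i, ∑ j, ‖A i j‖ ^ 2 := by
  have hA := Matrix.isHermitian_conjTranspose_mul_self A
  refine ⟨hA.eigenvalues, (Matrix.posSemidef_conjTranspose_mul_self A).eigenvalues_nonneg, ?_, ?_⟩
  · unfold traceNorm matFun
    rw [dif_pos hA, Matrix.trace_mul_comm, ← mul_assoc]
    simp [Matrix.trace_diagonal]
  · have h := hA.trace_eq_sum_eigenvalues
    have h2 : (Aᴴ * A).trace = ((∑ i, ∑ j, ‖A i j‖ ^ 2 : ℝ) : ℂ) := by
      simp only [Matrix.trace, Matrix.diag, Matrix.mul_apply, Matrix.conjTranspose_apply]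
      rw [Finset.sum_comm]
      push_cast
      refine Finset.sum_congr rfl fun i _ => Finset.sum_congr rfl fun j _ => ?_
      rw [← Complex.conj_mul']; rfl
    rw [h2] at h
    have : ((∑ i, ∑ j, ‖A i j‖ ^ 2 : ℝ) : ℂ) = ((∑ i, hA.eigenvalues i : ℝ) : ℂ) := by
      rw [h]; simp
    exact_mod_cast this.symm

lemma traceNorm_nonneg {m : Type*} [Fintype m] [DecidableEq m] (A : Matrix m m ℂ) :
    0 ≤ traceNorm A := by
  obtain ⟨l, _, h2, _⟩ := traceNorm_eq A
  rw [h2]; exact Finset.sum_nonneg fun _ _ => Real.sqrt_nonneg _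

lemma entry_le_traceNorm {m : Type*} [Fintype m] [DecidableEq m] (A : Matrix m m ℂ) (i j : m) :
    ‖A i j‖ ≤ traceNorm A := by
  obtain ⟨l, h1, h2, h3⟩ := traceNorm_eq A
  refine le_of_sq_le_sq ?_ (traceNorm_nonneg A)
  have : ‖A i j‖ ^ 2 ≤ ∑ i, l i := by
    rw [h3]
    refine le_trans ?_ (Finset.single_le_sum (f := fun i => ∑ j, ‖A i j‖ ^ 2)
      (fun i _ => Finset.sum_nonneg fun _ _ => sq_nonneg _) (Finset.mem_univ i))
    exact Finset.single_le_sum (f := fun j => ‖A i j‖ ^ 2)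
      (fun i _ => sq_nonneg _) (Finset.mem_univ j)
  refine this.trans ?_
  rw [h2]
  calc ∑ i, l i = ∑ i, Real.sqrt (l i) ^ 2 := by
        refine Finset.sum_congr rfl fun i _ => (Real.sq_sqrt (h1 i)).symm
    _ ≤ _ := Finset.sum_sq_le_sq_sum_of_nonneg fun _ _ => Real.sqrt_nonneg _

lemma traceNorm_le {d : ℕ} (A : Matrix (Fin d) (Fin d) ℂ) (ε : ℝ) (hε : 0 ≤ ε)
    (h : ∀ i j, ‖A i j‖ ≤ ε) : traceNorm A ≤ d * (d * ε) := by
  obtain ⟨l, h1, h2, h3⟩ := traceNorm_eq A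
  have hs : ∑ i, l i ≤ (d * ε) ^ 2 := by
    rw [h3]
    calc ∑ i, ∑ j, ‖A i j‖ ^ 2 ≤ ∑ i : Fin d, ∑ j : Fin d, ε ^ 2 :=
          Finset.sum_le_sum fun i _ => Finset.sum_le_sum fun j _ =>
            pow_le_pow_left₀ (norm_nonneg _) (h i j) 2
      _ = _ := by simp; ring
  rw [h2]
  have : ∀ i, Real.sqrt (l i) ≤ d * ε := by
    intro i
    refine Real.sqrt_le_iff.2 ⟨by positivity, le_trans ?_ hs⟩
    exact Finset.single_le_sum (f := l) (fun i _ => h1 i) (Finset.mem_univ i)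
  refine (Finset.sum_le_sum fun i _ => this i).trans ?_
  simp

/-- outcome alphabet of an informationally complete measurement -/
abbrev ZZ (d : ℕ) := Fin d × Fin d × Fin 4

def vv {d : ℕ} (z : ZZ d) : Fin d → ℂ :=
  Pi.single z.1 1 + Complex.I ^ (z.2.2 : ℕ) • Pi.single z.2.1 1

def EE {d : ℕ} (z : ZZ d) : Matrix (Fin d) (Fin d) ℂ :=
  ((8 * d : ℝ)⁻¹) • Matrix.vecMulVec (vv z) (star (vv z))

lemma EE_psd {d : ℕ} (z : ZZ d) : (EE z).PosSemidef :=
  (Matrix.posSemidef_vecMulVec_self_star _).smul (by positivity)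

lemma star_vv {d : ℕ} (z : ZZ d) : star (vv z) =
    Pi.single z.1 1 + (star Complex.I) ^ (z.2.2 : ℕ) • Pi.single z.2.1 1 := by
  unfold vv
  rw [star_add, star_smul, star_pow, Pi.star_single, Pi.star_single, star_one]

lemma EE_trace {d : ℕ} (z : ZZ d) (A : Matrix (Fin d) (Fin d) ℂ) :
    (EE z * A).trace = ((8 * d : ℝ)⁻¹ : ℝ) * (A z.1 z.1 + Complex.I ^ (z.2.2 : ℕ) * A z.1 z.2.1
      + (star Complex.I) ^ (z.2.2 : ℕ) * A z.2.1 z.1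
      + A z.2.1 z.2.1) := by
  have hab : star Complex.I ^ (z.2.2 : ℕ) * Complex.I ^ (z.2.2 : ℕ) = 1 := by
    rw [← mul_pow]; simp
  unfold EE
  rw [Matrix.smul_mul, Matrix.trace_smul, Matrix.vecMulVec_mul, Matrix.trace_vecMulVec, star_vv]
  rw [Complex.real_smul]
  congr 1
  unfold vv
  rw [Matrix.add_vecMul, Matrix.smul_vecMul, Matrix.single_one_vecMul, Matrix.single_one_vecMul]
  generalize star Complex.I ^ (z.2.2 : ℕ) = a at *
  generalize Complex.I ^ (z.2.2 : ℕ) = b at *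
  simp [add_dotProduct, dotProduct_add]
  linear_combination (A z.2.1 z.2.1) * hab

lemma EE_sum {d : ℕ} : ∑ z : ZZ d, EE z = 1 := by
  ext p q
  rcases Nat.eq_zero_or_pos d with h | h
  · subst h; exact p.elim0
  have hd : (d : ℂ) ≠ 0 := by exact_mod_cast h.ne'
  rw [Matrix.sum_apply]
  simp only [EE, Matrix.smul_apply, Matrix.vecMulVec_apply, star_vv]
  simp only [vv, Fintype.sum_prod_type, Fin.sum_univ_four]
  simp only [Pi.add_apply, Pi.smul_apply, Complex.real_smul, smul_eq_mul, ← mul_add]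
  have : ∀ i j : Fin d, ∀ a b c e : ℂ,
     ((a + Complex.I ^ ((0 : Fin 4) : ℕ) * b) * (c + star Complex.I ^ ((0 : Fin 4) : ℕ) * e) +
     (a + Complex.I ^ ((1 : Fin 4) : ℕ) * b) * (c + star Complex.I ^ ((1 : Fin 4) : ℕ) * e) +
     (a + Complex.I ^ ((2 : Fin 4) : ℕ) * b) * (c + star Complex.I ^ ((2 : Fin 4) : ℕ) * e) +
     (a + Complex.I ^ ((3 : Fin 4) : ℕ) * b) * (c + star Complex.I ^ ((3 : Fin 4) : ℕ) * e)) =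
       4 * (a * c) + 4 * (b * e) := by
    intro i j a b c e
    have h2 : Complex.I ^ 2 = -1 := Complex.I_sq
    have h3 : Complex.I ^ 3 = -Complex.I := Complex.I_pow_three
    have h4 : Complex.I ^ 4 = 1 := Complex.I_pow_four
    have hs : star Complex.I = - Complex.I := Complex.conj_I
    simp [hs, h3]
    ring_nf
    simp only [h2, h3, h4]
    ring
  simp only [← Finset.mul_sum]
  rw [show (∑ i : Fin d, ∑ j : Fin d, _) = ∑ i : Fin d, ∑ j : Fin d,
    (4 * ((Pi.single i 1 : Fin d → ℂ) p * (Pi.single i 1 : Fin d → ℂ) q) +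
     4 * ((Pi.single j 1 : Fin d → ℂ) p * (Pi.single j 1 : Fin d → ℂ) q)) from
    Finset.sum_congr rfl fun i _ => Finset.sum_congr rfl fun j _ => this i j _ _ _ _]
  simp only [Finset.sum_add_distrib, ← Finset.mul_sum, Finset.sum_const, Finset.card_univ]
  have e : ∑ i : Fin d, (Pi.single i 1 : Fin d → ℂ) p * (Pi.single i 1 : Fin d → ℂ) q =
      (1 : Matrix (Fin d) (Fin d) ℂ) p q := by
    simp [Pi.single_apply, Matrix.one_apply]
  have e' : ∑ i : Fin d, (d : ℂ) * ((Pi.single i 1 : Fin d → ℂ) p * (Pi.single i 1 : Fin d → ℂ) q) =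
      d * (1 : Matrix (Fin d) (Fin d) ℂ) p q := by
    rw [← Finset.mul_sum, e]
  simp only [nsmul_eq_mul, Fintype.card_fin, e, e']
  push_cast
  field_simp
  simp only [mul_assoc, e']
  ring

lemma EE_recon {d : ℕ} (hd : 0 < d) (A : Matrix (Fin d) (Fin d) ℂ) (i j : Fin d) :
    A i j = 2 * d * (((EE (i, j, 0) * A).trace - (EE (i, j, 2) * A).trace)
      - Complex.I * ((EE (i, j, 1) * A).trace - (EE (i, j, 3) * A).trace)) := by
  have hd : (d : ℂ) ≠ 0 := by exact_mod_cast hd.ne'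
  simp only [EE_trace]
  have h2 : Complex.I ^ 2 = -1 := Complex.I_sq
  have h3 : Complex.I ^ 3 = -Complex.I := Complex.I_pow_three
  have hs : star Complex.I = - Complex.I := Complex.conj_I
  simp [hs, h3]
  field_simp
  ring_nf
  simp only [h2, Complex.I_pow_four]
  ring

lemma entry_bound {d : ℕ} (hd : 0 < d) (A : Matrix (Fin d) (Fin d) ℂ) (c : ℝ)
    (h : ∀ z : ZZ d, ‖(EE z * A).trace‖ ≤ c) (i j : Fin d) : ‖A i j‖ ≤ 8 * d * c := by
  rw [EE_recon hd A i j, norm_mul]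
  have h1 : ‖((EE (i, j, 0) * A).trace - (EE (i, j, 2) * A).trace)
      - Complex.I * ((EE (i, j, 1) * A).trace - (EE (i, j, 3) * A).trace)‖ ≤ (c + c) + (c + c) := by
    refine (norm_sub_le _ _).trans (add_le_add ((norm_sub_le _ _).trans (add_le_add (h _) (h _))) ?_)
    rw [norm_mul, Complex.norm_I, one_mul]
    exact (norm_sub_le _ _).trans (add_le_add (h _) (h _))
  have h2 : ‖(2 * d : ℂ)‖ = 2 * d := by simp
  rw [h2]
  have := mul_le_mul_of_nonneg_left h1 (by positivity : (0 : ℝ) ≤ 2 * d)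
  linarith

open scoped MatrixOrder Matrix.Norms.L2Operator in
lemma psd_factor {m : Type*} [Fintype m] {A : Matrix m m ℂ} (hA : A.PosSemidef) :
    ∃ C : Matrix m m ℂ, A = Cᴴ * C := by
  classical
  exact CStarAlgebra.nonneg_iff_eq_star_mul_self.1 hA.nonneg

lemma trace_mul_nonneg {m : Type*} [Fintype m] {A B : Matrix m m ℂ} (hA : A.PosSemidef)
    (hB : B.PosSemidef) : 0 ≤ (A * B).trace := by
  classical
  obtain ⟨C, rfl⟩ := psd_factor hA
  rw [mul_assoc, Matrix.trace_mul_comm]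
  have := hB.mul_mul_conjTranspose_same C
  exact this.trace_nonneg

lemma EE_dens {d : ℕ} {A : Matrix (Fin d) (Fin d) ℂ} (hA : IsDensity A) :
    (∀ z : ZZ d, 0 ≤ ((EE z * A).trace).re) ∧ ∑ z : ZZ d, ((EE z * A).trace).re = 1 := by
  constructor
  · intro z
    exact (Complex.le_def.1 (trace_mul_nonneg (EE_psd z) hA.1)).1
  · rw [← Complex.re_sum, ← Matrix.trace_sum, ← Finset.sum_mul, EE_sum, one_mul, hA.2]; rfl

lemma trace_real {d : ℕ} {A B : Matrix (Fin d) (Fin d) ℂ} (hA : A.IsHermitian) (hB : B.IsHermitian) :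
    (((A * B).trace).re : ℂ) = (A * B).trace := by
  apply Complex.conj_eq_iff_re.1
  have := Matrix.trace_conjTranspose (A * B)
  rw [Matrix.conjTranspose_mul, hA.eq, hB.eq, Matrix.trace_mul_comm] at this
  exact this.symm

lemma dens_bound {d : ℕ} {A : Matrix (Fin d) (Fin d) ℂ} (hA : IsDensity A) (i j : Fin d) :
    ‖A i j‖ ≤ 8 * d := by
  have hd : 0 < d := i.pos
  have := entry_bound hd A 1 (fun z => ?_) i j
  · simpa using this
  · obtain ⟨h1, h2⟩ := EE_dens hA
    rw [← trace_real (EE_psd z).isHermitian hA.1.isHermitian, Complex.norm_real, Real.norm_of_nonneg (h1 z),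
      ← h2]
    exact Finset.single_le_sum (f := fun z => ((EE z * A).trace).re) (fun z _ => h1 z) (Finset.mem_univ z)

end AV

namespace AV

lemma hb {Sg L : Type*} [Fintype L] (T : Sg → (L → ℝ)) (c : ℝ) (hc : 0 < c)
    (h : ∀ t ∈ convexHull ℝ (Set.range T), ∃ l, c ≤ |t l|) :
    ∃ g : L → ℝ, (∀ l, |g l| ≤ 1 / 2) ∧ ∃ δ : ℝ, 0 < δ ∧ ∀ σ, δ ≤ ∑ l, g l * T σ l := by
  classical
  set K := closure (convexHull ℝ (Set.range T)) with hK
  have h0 : (0 : L → ℝ) ∉ K := by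
    intro h0
    obtain ⟨t, ht, hd⟩ := Metric.mem_closure_iff.1 h0 c hc
    obtain ⟨l, hl⟩ := h t ht
    rw [dist_zero_left] at hd
    have := norm_le_pi_norm t l
    rw [Real.norm_eq_abs] at this
    linarith
  obtain ⟨f, u, hf0, hf⟩ := geometric_hahn_banach_point_closed
    ((convex_convexHull ℝ _).closure) isClosed_closure h0
  rw [map_zero] at hf0
  set G : L → ℝ := fun l => f (Pi.single l 1) with hG
  have hfG : ∀ v : L → ℝ, f v = ∑ l, G l * v l := by
    intro v
    conv_lhs => rw [← Finset.univ_sum_single v]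
    rw [map_sum]
    refine Finset.sum_congr rfl fun l _ => ?_
    have : (Pi.single l (v l) : L → ℝ) = v l • Pi.single l 1 := by
      rw [← Pi.single_smul]; simp
    rw [this, map_smul, smul_eq_mul, mul_comm]
  set B : ℝ := 2 * (∑ l, |G l| + 1) with hB
  have hs : 0 ≤ ∑ l, |G l| := Finset.sum_nonneg fun _ _ => abs_nonneg _
  have hB0 : 0 < B := by positivity
  refine ⟨fun l => G l / B, fun l => ?_, u / B, by positivity, fun σ => ?_⟩
  · rw [abs_div, abs_of_pos hB0, div_le_iff₀ hB0]
    have := Finset.single_le_sum (f := fun l => |G l|) (fun i _ => abs_nonneg _) (Finset.mem_univ l)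
    rw [hB]; linarith
  · have := hf (T σ) (subset_closure (subset_convexHull ℝ _ ⟨σ, rfl⟩))
    rw [hfG] at this
    have e : ∑ l, G l / B * T σ l = (∑ l, G l * T σ l) / B := by
      rw [Finset.sum_div]; exact Finset.sum_congr rfl fun l _ => by ring
    rw [e]
    gcongr

lemma trace_mInt {S : Type*} [MeasurableSpace S] {d : ℕ} (μ : Measure S)
    (E : Matrix (Fin d) (Fin d) ℂ) (f : S → Matrix (Fin d) (Fin d) ℂ)
    (hf : ∀ i j, Integrable (fun s => f s i j) μ) :
    Integrable (fun s => (E * f s).trace) μ ∧ (E * mInt μ f).trace = ∫ s, (E * f s).trace ∂μ := by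
  simp only [Matrix.trace, Matrix.diag, Matrix.mul_apply, mInt, Matrix.of_apply]
  have h1 : ∀ i j, Integrable (fun s => E i j * f s j i) μ := fun i j => (hf j i).const_mul _
  constructor
  · exact integrable_finsetSum _ fun i _ => integrable_finsetSum _ fun j _ => h1 i j
  · rw [integral_finsetSum _ fun i _ => integrable_finsetSum _ fun j _ => h1 i j]
    refine Finset.sum_congr rfl fun i _ => ?_
    rw [integral_finsetSum _ fun j _ => h1 i j]
    refine Finset.sum_congr rfl fun j _ => ?_
    rw [integral_const_mul]

lemma mInt_herm {S : Type*} [MeasurableSpace S] {d : ℕ} (μ : Measure S)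
    (f : S → Matrix (Fin d) (Fin d) ℂ) (hf : ∀ s, (f s).IsHermitian) : (mInt μ f).IsHermitian := by
  ext i j
  simp only [Matrix.conjTranspose_apply, mInt, Matrix.of_apply]
  have : ∀ s, f s i j = star (f s j i) := fun s => ((hf s).apply i j).symm
  simp only [this]
  exact integral_conj.symm

lemma dens_integrable {S : Type*} [MeasurableSpace S] {d : ℕ} (μ : Measure S) [IsFiniteMeasure μ]
    (f : S → Matrix (Fin d) (Fin d) ℂ) (hf : ∀ s, IsDensity (f s))
    (hm : ∀ i j, Measurable fun s => f s i j) (i j : Fin d) : Integrable (fun s => f s i j) μ :=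
  Integrable.of_bound (hm i j).aestronglyMeasurable (8 * d) (ae_of_all _ fun s => dens_bound (hf s) i j)

lemma trace_mInt_re {S : Type*} [MeasurableSpace S] {d : ℕ} (μ : Measure S) [IsFiniteMeasure μ]
    (f : S → Matrix (Fin d) (Fin d) ℂ) (hf : ∀ s, IsDensity (f s))
    (hm : ∀ i j, Measurable fun s => f s i j) (E : Matrix (Fin d) (Fin d) ℂ) :
    Integrable (fun s => ((E * f s).trace).re) μ ∧
    ((E * mInt μ f).trace).re = ∫ s, ((E * f s).trace).re ∂μ := by
  obtain ⟨h1, h2⟩ := trace_mInt μ E f (dens_integrable μ f hf hm)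
  refine ⟨h1.re, ?_⟩
  rw [h2]
  exact (integral_re h1).symm

lemma dual {P Q S : Type*} [Fintype P] [Fintype Q] [Nonempty P] [Nonempty Q] [Nonempty S]
    [MeasurableSpace S] {d : ℕ} (hd : 0 < d) (r : P → Q → S → Matrix (Fin d) (Fin d) ℂ)
    (hr : ∀ x y s, IsDensity (r x y s)) (hm : ∀ x y i j, Measurable fun s => r x y s i j)
    (θ : ℝ) (hθ : 0 < θ)
    (H : ∀ U : P → Measure S, (∀ x, IsProbabilityMeasure (U x)) →
      ∃ x x' y, θ ≤ traceNorm (mInt (U x') (r x y) - mInt (U x) (r x' y))) :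
    ∃ (h : P → P → Q → ZZ d → ℝ) (φ : P → ℝ) (δ : ℝ), (∀ x x' y z, |h x x' y z| ≤ 1) ∧
      (∀ x x' y z, h x x' y z = - h x' x y z) ∧ (∀ x, |φ x| ≤ 1) ∧ 0 < δ ∧
      (∀ x' s, φ x' ≤ ((Fintype.card P : ℝ) * Fintype.card Q)⁻¹ *
        ∑ x, ∑ y, ∑ z, ((EE z * r x y s).trace).re * h x x' y z) ∧
      3 * δ ≤ (Fintype.card P : ℝ)⁻¹ * ∑ x, φ x := by
  classical
  set W : P → Q → S → ZZ d → ℝ := fun x y s z => ((EE z * r x y s).trace).re with hW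
  have W0 : ∀ x y s z, 0 ≤ W x y s z := fun x y s z => (EE_dens (hr x y s)).1 z
  have W1 : ∀ x y s, ∑ z, W x y s z = 1 := fun x y s => (EE_dens (hr x y s)).2
  set T : (P → S) → (P × P × Q × ZZ d → ℝ) :=
    fun σ l => W l.1 l.2.2.1 (σ l.2.1) l.2.2.2 - W l.2.1 l.2.2.1 (σ l.1) l.2.2.2 with hT
  set TT : (P → Measure S) → (P × P × Q × ZZ d → ℝ) :=
    fun U l => ∫ s, W l.1 l.2.2.1 s l.2.2.2 ∂(U l.2.1) - ∫ s, W l.2.1 l.2.2.1 s l.2.2.2 ∂(U l.1) with hTT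
  have Wint : ∀ (μ : Measure S) [IsFiniteMeasure μ] x y z, Integrable (fun s => W x y s z) μ :=
    fun μ _ x y z => (trace_mInt_re μ (r x y) (hr x y) (hm x y) (EE z)).1
  have Wme : ∀ x y z, StronglyMeasurable (fun s => W x y s z) := by
    intro x y z
    apply Measurable.stronglyMeasurable
    have : Measurable fun s => (EE z * r x y s).trace := by
      simp only [Matrix.trace, Matrix.diag, Matrix.mul_apply]
      exact Finset.measurable_fun_sum _ fun i _ => Finset.measurable_fun_sum _ fun j _ =>
        (hm x y j i).const_mul _
    exact Complex.measurable_re.comp this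
  set c : ℝ := θ / (d * (d * (8 * d))) / 2 with hc
  have hd' : (0 : ℝ) < d := by exact_mod_cast hd
  have hc0 : 0 < c := by positivity
  have hull : convexHull ℝ (Set.range T) ⊆ {t | ∃ U : P → Measure S,
      (∀ x, IsProbabilityMeasure (U x)) ∧ TT U = t} := by
    refine convexHull_min ?_ ?_
    · rintro _ ⟨σ, rfl⟩
      refine ⟨fun x => Measure.dirac (σ x), fun x => inferInstance, ?_⟩
      funext l
      simp only [hTT, hT]
      rw [integral_dirac' _ _ (Wme _ _ _), integral_dirac' _ _ (Wme _ _ _)]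
    · rintro _ ⟨U, hU, rfl⟩ _ ⟨V, hV, rfl⟩ a b ha hb hab
      refine ⟨fun x => ENNReal.ofReal a • U x + ENNReal.ofReal b • V x, fun x => ⟨?_⟩, ?_⟩
      · have := hU x
        have := hV x
        simp only [Measure.add_apply, Measure.smul_apply, measure_univ, smul_eq_mul, mul_one]
        rw [← ENNReal.ofReal_add ha hb, hab, ENNReal.ofReal_one]
      · funext l
        have key : ∀ x y z p, ∫ s, W x y s z ∂(ENNReal.ofReal a • U p + ENNReal.ofReal b • V p) =
            a * ∫ s, W x y s z ∂(U p) + b * ∫ s, W x y s z ∂(V p) := by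
          intro x y z p
          have := hU p
          have := hV p
          rw [integral_add_measure, integral_smul_measure, integral_smul_measure,
            ENNReal.toReal_ofReal ha, ENNReal.toReal_ofReal hb]
          · rfl
          · exact (Wint (U p) x y z).smul_measure ENNReal.ofReal_ne_top
          · exact (Wint (V p) x y z).smul_measure ENNReal.ofReal_ne_top
        simp only [hTT, key, Pi.add_apply, Pi.smul_apply, smul_eq_mul]
        ring
  obtain ⟨g, hg1, δ, hδ, hg⟩ := hb T c hc0 (by
    intro t ht
    obtain ⟨U, hU, rfl⟩ := hull ht
    obtain ⟨x, x', y, hθ'⟩ := H U hU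
    by_contra! hcon
    have := hU x
    have := hU x'
    set A := mInt (U x') (r x y) - mInt (U x) (r x' y) with hA
    have hAh : A.IsHermitian := (mInt_herm _ _ fun s => (hr _ _ s).1.isHermitian).sub
      (mInt_herm _ _ fun s => (hr _ _ s).1.isHermitian)
    have hz : ∀ z : ZZ d, ‖(EE z * A).trace‖ ≤ c := by
      intro z
      rw [← trace_real (EE_psd z).isHermitian hAh, Complex.norm_real, Real.norm_eq_abs]
      have e : ((EE z * A).trace).re = TT U (x, x', y, z) := by
        rw [hA, mul_sub, Matrix.trace_sub, Complex.sub_re,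
          (trace_mInt_re (U x') (r x y) (hr x y) (hm x y) (EE z)).2,
          (trace_mInt_re (U x) (r x' y) (hr x' y) (hm x' y) (EE z)).2]
      rw [e]
      exact (hcon _).le
    have h1 := traceNorm_le A (8 * d * c) (by positivity) (entry_bound hd A c hz)
    have h2 : d * (d * (8 * d * c)) = θ / 2 := by
      rw [hc]; field_simp
    linarith)
  set h : P → P → Q → ZZ d → ℝ := fun x x' y z => g (x, x', y, z) - g (x', x, y, z) with hh
  have hh1 : ∀ x x' y z, |h x x' y z| ≤ 1 := by
    intro x x' y z
    refine (abs_sub _ _).trans ?_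
    linarith [hg1 (x, x', y, z), hg1 (x', x, y, z)]
  set κ : ℝ := (Fintype.card P : ℝ) * Fintype.card Q with hκ
  have hP : (0 : ℝ) < Fintype.card P := by exact_mod_cast Fintype.card_pos
  have hQ : (0 : ℝ) < Fintype.card Q := by exact_mod_cast Fintype.card_pos
  have hκ0 : 0 < κ := by positivity
  set ψ : P → S → ℝ := fun x' s => κ⁻¹ * ∑ x, ∑ y, ∑ z, W x y s z * h x x' y z with hψ
  have hψ1 : ∀ x s, |ψ x s| ≤ 1 := by
    intro x' s
    rw [hψ]
    simp only
    rw [abs_mul, abs_of_pos (inv_pos.2 hκ0), inv_mul_le_iff₀ hκ0, mul_one]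
    calc |∑ x, ∑ y, ∑ z, W x y s z * h x x' y z| ≤ ∑ x : P, ∑ y : Q, (1 : ℝ) := by
          refine (Finset.abs_sum_le_sum_abs _ _).trans (Finset.sum_le_sum fun x _ => ?_)
          refine (Finset.abs_sum_le_sum_abs _ _).trans (Finset.sum_le_sum fun y _ => ?_)
          refine (Finset.abs_sum_le_sum_abs _ _).trans ?_
          rw [← W1 x y s]
          refine Finset.sum_le_sum fun z _ => ?_
          rw [abs_mul, abs_of_nonneg (W0 x y s z)]
          exact mul_le_of_le_one_right (W0 _ _ _ _) (hh1 _ _ _ _)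
      _ = κ := by simp [hκ]
  have hψσ : ∀ σ : P → S, δ / κ ≤ ∑ x', ψ x' (σ x') := by
    intro σ
    have e : ∑ x', ψ x' (σ x') = κ⁻¹ * ∑ l, g l * T σ l := by
      simp only [hψ, ← Finset.mul_sum]
      congr 1
      simp only [hh, hT, Fintype.sum_prod_type, mul_sub, Finset.sum_sub_distrib]
      congr 1
      · rw [Finset.sum_comm]
        refine Finset.sum_congr rfl fun x _ => Finset.sum_congr rfl fun x' _ => Finset.sum_congr rfl
          fun y _ => Finset.sum_congr rfl fun _ _ => Finset.sum_congr rfl fun _ _ =>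
            Finset.sum_congr rfl fun _ _ => by ring
      · refine Finset.sum_congr rfl fun x _ => Finset.sum_congr rfl fun x' _ => Finset.sum_congr rfl
          fun y _ => Finset.sum_congr rfl fun _ _ => Finset.sum_congr rfl fun _ _ =>
            Finset.sum_congr rfl fun _ _ => by ring
    rw [e, div_eq_inv_mul]
    exact mul_le_mul_of_nonneg_left (hg σ) (inv_pos.2 hκ0).le
  have hbdd : ∀ x, BddBelow (Set.range (ψ x)) := fun x => ⟨-1, by
    rintro _ ⟨s, rfl⟩; exact (abs_le.1 (hψ1 x s)).1⟩
  refine ⟨h, fun x => ⨅ s, ψ x s, (Fintype.card P : ℝ)⁻¹ * (δ / κ) / 3, hh1, ?_, ?_, by positivity, ?_, ?_⟩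
  · intro x x' y z; simp [hh]
  · intro x
    rw [abs_le]
    refine ⟨le_ciInf fun s => (abs_le.1 (hψ1 x s)).1, ?_⟩
    exact (ciInf_le (hbdd x) (Classical.arbitrary S)).trans (abs_le.1 (hψ1 x _)).2
  · intro x' s
    exact ciInf_le (hbdd x') s
  · have : δ / κ ≤ ∑ x, ⨅ s, ψ x s := by
      refine le_of_forall_pos_le_add fun ε hε => ?_
      have : ∀ x, ∃ s, ψ x s < (⨅ s, ψ x s) + ε / Fintype.card P := fun x =>
        exists_lt_of_ciInf_lt (by simp only [lt_add_iff_pos_right]; positivity)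
      choose σ hσ using this
      refine (hψσ σ).trans ((Finset.sum_le_sum fun x _ => (hσ x).le).trans ?_)
      rw [Finset.sum_add_distrib]
      simp only [Finset.sum_const, Finset.card_univ, nsmul_eq_mul]
      rw [mul_div_cancel₀ _ hP.ne']
    have := mul_le_mul_of_nonneg_left this (inv_pos.2 hP).le
    linarith

end AV

namespace AV

lemma tensorFam_mul {k m : Type*} [Fintype k] [DecidableEq k] [Fintype m]
    (A B : k → Matrix m m ℂ) : tensorFam A * tensorFam B = tensorFam fun a => A a * B a := by
  ext i j
  simp only [tensorFam, Matrix.mul_apply, Matrix.of_apply, ← Finset.prod_mul_distrib]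
  rw [Finset.prod_univ_sum]
  simp

lemma tensorFam_conj {k m : Type*} [Fintype k]
    (A : k → Matrix m m ℂ) : (tensorFam A)ᴴ = tensorFam fun a => (A a)ᴴ := by
  ext i j
  simp [tensorFam, Matrix.conjTranspose_apply]

lemma tensorFam_psd {k m : Type*} [Fintype k] [DecidableEq k] [Fintype m]
    (A : k → Matrix m m ℂ) (hA : ∀ a, (A a).PosSemidef) : (tensorFam A).PosSemidef := by
  choose C hC using fun a => psd_factor (hA a)
  have : tensorFam A = (tensorFam C)ᴴ * tensorFam C := by
    rw [tensorFam_conj, tensorFam_mul]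
    congr 1; funext a; exact hC a
  rw [this]
  exact Matrix.posSemidef_conjTranspose_mul_self _

lemma tensorFam_trace {k m : Type*} [Fintype k] [DecidableEq k] [Fintype m]
    (A : k → Matrix m m ℂ) : (tensorFam A).trace = ∏ a, (A a).trace := by
  simp only [Matrix.trace, Matrix.diag, tensorFam, Matrix.of_apply]
  rw [Finset.prod_univ_sum]
  simp

lemma tensorFam_sum {k m Z : Type*} [Fintype k] [DecidableEq k] [Fintype m] [DecidableEq m] [Fintype Z]
    (E : Z → Matrix m m ℂ) (hE : ∑ z, E z = 1) :
    ∑ z : k → Z, tensorFam (fun a => E (z a)) = 1 := by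
  ext i j
  rw [Matrix.sum_apply]
  simp only [tensorFam, Matrix.of_apply]
  have := Finset.prod_univ_sum (fun _ : k => (Finset.univ : Finset Z)) (fun a z => E z (i a) (j a))
  rw [Fintype.piFinset_univ] at this
  rw [← this]
  simp only [← Matrix.sum_apply, hE, Matrix.one_apply]
  rw [Finset.prod_ite_zero]
  simp [funext_iff]

lemma tensorFam_one {k m : Type*} [Fintype k] [DecidableEq k] [Fintype m] [DecidableEq m] :
    tensorFam (fun _ : k => (1 : Matrix m m ℂ)) = 1 := by
  ext i j
  simp only [tensorFam, Matrix.of_apply, Matrix.one_apply]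
  rw [Finset.prod_ite_zero]
  simp [funext_iff]

/-- the packing data for a single symmetrizability type, in the three-type format -/
lemma all_dual {𝒳 𝒴 𝒮 : Type*} [Fintype 𝒳] [DecidableEq 𝒳] [Fintype 𝒴] [DecidableEq 𝒴]
    [Nonempty 𝒳] [Nonempty 𝒴] [Nonempty 𝒮] [MeasurableSpace 𝒮] {d : ℕ} (hd : 0 < d)
    (ρ : 𝒳 → 𝒴 → 𝒮 → Matrix (Fin d) (Fin d) ℂ)
    (hρ : ∀ x y s, IsDensity (ρ x y s))
    (hmeas : ∀ x y i j, Measurable fun s => ρ x y s i j)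
    (h1 : theta1 ρ ≠ 0) (h2 : theta2 ρ ≠ 0) (h3 : theta3 ρ ≠ 0) :
    ∃ r, 0 < r ∧ ∀ β, 0 < β → ∃ N : ℕ, ∀ n ≥ N, ∃ M : ℕ, Real.exp (n * r) ≤ M ∧
      ∃ (f1 : Fin M → Fin n → 𝒳) (f2 : Fin M → Fin n → 𝒴) (dec : (Fin n → ZZ d) → Fin M × Fin M),
      ∀ s : Fin n → 𝒮, 1 - (1/((M:ℝ)*M)) * ∑ m1, ∑ m2, ∑ z with dec z = (m1,m2),
        ∏ k, ((EE (z k) * ρ (f1 m1 k) (f2 m2 k) (s k)).trace).re ≤ β := by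
  have H1 : ∃ θ, 0 < θ ∧ ∀ U : 𝒳 → Measure 𝒮, (∀ x, IsProbabilityMeasure (U x)) →
      ∃ x x' y, θ ≤ traceNorm (mInt (U x') (ρ x y) - mInt (U x) (ρ x' y)) := by
    have hn : ∀ U : {U : 𝒳 → Measure 𝒮 // ∀ x, IsProbabilityMeasure (U x)},
        0 ≤ ⨆ x : 𝒳, ⨆ x' : 𝒳, ⨆ y : 𝒴,
      traceNorm (mInt (U.1 x') (fun s => ρ x y s) - mInt (U.1 x) (fun s => ρ x' y s)) := fun U =>
      Real.iSup_nonneg fun _ => Real.iSup_nonneg fun _ => Real.iSup_nonneg fun _ => traceNorm_nonneg _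
    have hp : 0 < theta1 ρ := lt_of_le_of_ne (Real.iInf_nonneg hn) h1.symm
    refine ⟨theta1 ρ / 2, by positivity, fun U hU => ?_⟩
    by_contra! hcon
    have : theta1 ρ ≤ theta1 ρ / 2 := by
      refine (ciInf_le ⟨0, by rintro _ ⟨U, rfl⟩; exact hn U⟩ ⟨U, hU⟩).trans ?_
      exact Real.iSup_le (fun _ => Real.iSup_le (fun _ => Real.iSup_le (fun _ => (hcon _ _ _).le)
        (by positivity)) (by positivity)) (by positivity)
    linarith
  have H2 : ∃ θ, 0 < θ ∧ ∀ U : 𝒴 → Measure 𝒮, (∀ x, IsProbabilityMeasure (U x)) →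
      ∃ y y' x, θ ≤ traceNorm (mInt (U y') (ρ x y) - mInt (U y) (ρ x y')) := by
    have hn : ∀ U : {U : 𝒴 → Measure 𝒮 // ∀ x, IsProbabilityMeasure (U x)},
        0 ≤ ⨆ x : 𝒳, ⨆ y : 𝒴, ⨆ y' : 𝒴,
      traceNorm (mInt (U.1 y') (fun s => ρ x y s) - mInt (U.1 y) (fun s => ρ x y' s)) := fun U =>
      Real.iSup_nonneg fun _ => Real.iSup_nonneg fun _ => Real.iSup_nonneg fun _ => traceNorm_nonneg _
    have hp : 0 < theta2 ρ := lt_of_le_of_ne (Real.iInf_nonneg hn) h2.symm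
    refine ⟨theta2 ρ / 2, by positivity, fun U hU => ?_⟩
    by_contra! hcon
    have : theta2 ρ ≤ theta2 ρ / 2 := by
      refine (ciInf_le ⟨0, by rintro _ ⟨U, rfl⟩; exact hn U⟩ ⟨U, hU⟩).trans ?_
      exact Real.iSup_le (fun _ => Real.iSup_le (fun _ => Real.iSup_le (fun _ => (hcon _ _ _).le)
        (by positivity)) (by positivity)) (by positivity)
    linarith
  have H3 : ∃ θ, 0 < θ ∧ ∀ U : 𝒳 × 𝒴 → Measure 𝒮, (∀ x, IsProbabilityMeasure (U x)) →
      ∃ a b, ∃ _ : Unit, θ ≤ traceNorm (mInt (U b) (ρ a.1 a.2) - mInt (U a) (ρ b.1 b.2)) := by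
    have hn : ∀ U : {U : 𝒳 → 𝒴 → Measure 𝒮 // ∀ x y, IsProbabilityMeasure (U x y)},
        0 ≤ ⨆ x : 𝒳, ⨆ x' : 𝒳, ⨆ y : 𝒴, ⨆ y' : 𝒴,
      traceNorm (mInt (U.1 x' y') (fun s => ρ x y s) - mInt (U.1 x y) (fun s => ρ x' y' s)) := fun U =>
      Real.iSup_nonneg fun _ => Real.iSup_nonneg fun _ => Real.iSup_nonneg fun _ =>
        Real.iSup_nonneg fun _ => traceNorm_nonneg _
    have hp : 0 < theta3 ρ := lt_of_le_of_ne (Real.iInf_nonneg hn) h3.symm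
    refine ⟨theta3 ρ / 2, by positivity, fun U hU => ?_⟩
    by_contra! hcon
    have : theta3 ρ ≤ theta3 ρ / 2 := by
      refine (ciInf_le ⟨0, by rintro _ ⟨U, rfl⟩; exact hn U⟩ ⟨fun x y => U (x, y), fun x y => hU _⟩).trans ?_
      exact Real.iSup_le (fun _ => Real.iSup_le (fun _ => Real.iSup_le (fun _ => Real.iSup_le (fun _ =>
        (hcon (_, _) (_, _) ()).le)
        (by positivity)) (by positivity)) (by positivity)) (by positivity)
    linarith
  obtain ⟨θ1, hθ1, H1⟩ := H1
  obtain ⟨θ2, hθ2, H2⟩ := H2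
  obtain ⟨θ3, hθ3, H3⟩ := H3
  obtain ⟨g1, φ1, δ1, a1, b1, c1, d1, e1, k1⟩ := dual hd ρ hρ hmeas θ1 hθ1 H1
  obtain ⟨g2, φ2, δ2, a2, b2, c2, d2, e2, k2⟩ := dual hd (fun y x => ρ x y) (fun y x => hρ x y)
    (fun y x => hmeas x y) θ2 hθ2 H2
  obtain ⟨g3, φ3, δ3, a3, b3, c3, d3, e3, k3⟩ := dual hd (fun (a : 𝒳 × 𝒴) (_ : Unit) => ρ a.1 a.2)
    (fun a _ => hρ a.1 a.2) (fun a _ => hmeas a.1 a.2) θ3 hθ3 H3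
  have hX : (0 : ℝ) < Fintype.card 𝒳 := by exact_mod_cast Fintype.card_pos
  have hY : (0 : ℝ) < Fintype.card 𝒴 := by exact_mod_cast Fintype.card_pos
  have := classical (X := 𝒳) (Y := 𝒴) (Z := ZZ d) (S := 𝒮)
    (fun a s z => ((EE z * ρ a.1 a.2 s).trace).re)
    (fun a s z => (EE_dens (hρ a.1 a.2 s)).1 z) (fun a s => (EE_dens (hρ a.1 a.2 s)).2)
    (fun t a b z => match t with
      | 0 => g1 a.1 b.1 a.2 z
      | 1 => g2 a.2 b.2 a.1 z
      | 2 => g3 a b () z)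
    (by
      intro t a b z
      match t with
      | 0 => exact a1 _ _ _ _
      | 1 => exact a2 _ _ _ _
      | 2 => exact a3 _ _ _ _)
    (by intro x x' y y' y'' z; exact b1 _ _ _ _)
    (by intro x x' x'' y y' z; exact b2 _ _ _ _)
    (by intro a b z; exact b3 _ _ _ _)
    (fun t b => match t with
      | 0 => φ1 b.1
      | 1 => φ2 b.2
      | 2 => φ3 b)
    (by
      intro t b
      match t with
      | 0 => exact c1 _
      | 1 => exact c2 _
      | 2 => exact c3 _)
    (by
      intro t b s
      match t with
      | 0 =>
        refine (e1 b.1 s).trans (le_of_eq ?_)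
        simp [Fintype.sum_prod_type]
      | 1 =>
        refine (e2 b.2 s).trans (le_of_eq ?_)
        rw [Fintype.sum_prod_type_right, mul_comm (Fintype.card 𝒴 : ℝ)]
        simp 
      | 2 =>
        refine (e3 b s).trans (le_of_eq ?_)
        simp)
    (min 1 (min δ1 (min δ2 δ3))) (by positivity) (min_le_left _ _)
    (by
      intro t
      match t with
      | 0 =>
        have : min 1 (min δ1 (min δ2 δ3)) ≤ δ1 := by simp
        have e : (Fintype.card (𝒳 × 𝒴) : ℝ)⁻¹ * ∑ b : 𝒳 × 𝒴, φ1 b.1 = (Fintype.card 𝒳 : ℝ)⁻¹ * ∑ x, φ1 x := by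
          rw [Fintype.sum_prod_type]
          simp [← Finset.mul_sum]
          field_simp
        simp only
        rw [e]; linarith
      | 1 =>
        have : min 1 (min δ1 (min δ2 δ3)) ≤ δ2 := by simp
        have e : (Fintype.card (𝒳 × 𝒴) : ℝ)⁻¹ * ∑ b : 𝒳 × 𝒴, φ2 b.2 = (Fintype.card 𝒴 : ℝ)⁻¹ * ∑ x, φ2 x := by
          rw [Fintype.sum_prod_type]
          simp
          field_simp
        simp only
        rw [e]; linarith
      | 2 =>
        have : min 1 (min δ1 (min δ2 δ3)) ≤ δ3 := by simp
        simp only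
        linarith)
  exact this

lemma direct {𝒳 𝒴 𝒮 : Type*} [Fintype 𝒳] [DecidableEq 𝒳] [Fintype 𝒴] [DecidableEq 𝒴]
    [Nonempty 𝒳] [Nonempty 𝒴] [Nonempty 𝒮] [MeasurableSpace 𝒮] {d : ℕ} (hd : 0 < d)
    (ρ : 𝒳 → 𝒴 → 𝒮 → Matrix (Fin d) (Fin d) ℂ)
    (hρ : ∀ x y s, IsDensity (ρ x y s))
    (hmeas : ∀ x y i j, Measurable fun s => ρ x y s i j)
    (h1 : theta1 ρ ≠ 0) (h2 : theta2 ρ ≠ 0) (h3 : theta3 ρ ≠ 0) :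
    (interior (Rd ρ)).Nonempty := by
  obtain ⟨r, hr, H⟩ := all_dual hd ρ hρ hmeas h1 h2 h3
  have hl2 : 0 < Real.log 2 := Real.log_pos (by norm_num)
  set c := r / Real.log 2 with hc
  have hc0 : 0 < c := by positivity
  have hA : ∀ R1 R2 : ℝ, 0 ≤ R1 → R1 ≤ c → 0 ≤ R2 → R2 ≤ c → AchievableDet ρ R1 R2 := by
    intro R1 R2 hR1 hR1' hR2 hR2'
    refine ⟨hR1, hR2, fun β hβ δ₁ hδ₁ δ₂ hδ₂ => ?_⟩
    obtain ⟨N, hN⟩ := H (β / 2) (by positivity)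
    refine ⟨max N 1, fun n hn => ?_⟩
    obtain ⟨M, hM, f1, f2, dec, hs⟩ := hN n ((le_max_left _ _).trans hn)
    have hn1 : (0 : ℝ) < n := by
      have := (le_max_right N 1).trans hn
      exact_mod_cast this
    have hrate : c ≤ (1 / (n : ℝ)) * Real.logb 2 M := by
      have h := Real.log_le_log (Real.exp_pos _) hM
      rw [Real.log_exp] at h
      rw [hc, Real.logb, one_div, ← mul_div_assoc]
      gcongr
      rw [le_inv_mul_iff₀ hn1]
      exact h
    refine ⟨M, M, f1, f2, fun m1 m2 => ∑ z with dec z = (m1, m2), tensorFam fun k => EE (z k), ?_, ?_,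
      by linarith, by linarith, ?_⟩
    · intro m1 m2
      exact Matrix.posSemidef_sum _ fun z _ => tensorFam_psd _ fun k => EE_psd _
    · rw [← tensorFam_sum (k := Fin n) (fun z : ZZ d => EE z) EE_sum]
      rw [← Finset.sum_fiberwise (Finset.univ) dec, Fintype.sum_prod_type]
    · refine lt_of_le_of_lt (ciSup_le fun s => ?_) (half_lt_self hβ)
      refine le_trans (le_of_eq ?_) (hs s)
      congr 2
      refine Finset.sum_congr rfl fun m1 _ => Finset.sum_congr rfl fun m2 _ => ?_
      rw [Finset.sum_mul, Matrix.trace_sum, Complex.re_sum]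
      refine Finset.sum_congr rfl fun z _ => ?_
      rw [tensorFam_mul, tensorFam_trace]
      rw [Finset.prod_congr rfl fun k _ => (trace_real (EE_psd (z k)).isHermitian
        (hρ (f1 m1 k) (f2 m2 k) (s k)).1.isHermitian).symm]
      rw [← Complex.ofReal_prod, Complex.ofReal_re]
  have hsub : Set.Ioo 0 c ×ˢ Set.Ioo 0 c ⊆ Rd ρ := by
    rintro ⟨a, b⟩ ⟨⟨ha, ha'⟩, hb, hb'⟩
    exact subset_closure (hA a b ha.le ha'.le hb.le hb'.le)
  exact ⟨(c / 2, c / 2), mem_interior.2 ⟨_, hsub, isOpen_Ioo.prod isOpen_Ioo,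
    ⟨by positivity, half_lt_self hc0⟩, by positivity, half_lt_self hc0⟩⟩

end AV

namespace AV

lemma prod_sub_le {k : Type*} (s : Finset k) (a b : k → ℂ) (B ε : ℝ) (hB : 1 ≤ B) (hε : 0 ≤ ε)
    (ha : ∀ i, ‖a i‖ ≤ B) (hb : ∀ i, ‖b i‖ ≤ B) (h : ∀ i, ‖a i - b i‖ ≤ ε) :
    ‖∏ i ∈ s, a i - ∏ i ∈ s, b i‖ ≤ s.card * B ^ s.card * ε := by
  classical
  induction s using Finset.induction_on with
  | empty => simp
  | insert x s hx ih =>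
    rw [Finset.prod_insert hx, Finset.prod_insert hx, Finset.card_insert_of_notMem hx]
    have e : a x * ∏ i ∈ s, a i - b x * ∏ i ∈ s, b i =
        a x * (∏ i ∈ s, a i - ∏ i ∈ s, b i) + (a x - b x) * ∏ i ∈ s, b i := by ring
    rw [e]
    have hp : ‖∏ i ∈ s, b i‖ ≤ B ^ s.card := by
      rw [norm_prod, ← Finset.prod_const]
      exact Finset.prod_le_prod (fun i _ => norm_nonneg _) fun i _ => hb i
    have hBs : B ^ s.card ≤ B ^ (s.card + 1) := pow_le_pow_right₀ hB (Nat.le_succ _)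
    calc _ ≤ ‖a x‖ * ‖∏ i ∈ s, a i - ∏ i ∈ s, b i‖ + ‖a x - b x‖ * ‖∏ i ∈ s, b i‖ := by
          refine (norm_add_le _ _).trans ?_
          rw [norm_mul, norm_mul]
      _ ≤ B * (s.card * B ^ s.card * ε) + ε * B ^ s.card := by
          gcongr
          · exact ha x
          · exact h x
      _ ≤ B * (s.card * B ^ s.card * ε) + ε * B ^ (s.card + 1) := by gcongr
      _ = _ := by push_cast; ring

lemma pi_int {S : Type*} [MeasurableSpace S] {d n : ℕ} (V : Fin n → Measure S)
    [∀ k, IsProbabilityMeasure (V k)] (r : Fin n → S → Matrix (Fin d) (Fin d) ℂ)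
    (hr : ∀ k s, IsDensity (r k s)) (hm : ∀ k i j, Measurable fun s => r k s i j)
    (D : Matrix (Fin n → Fin d) (Fin n → Fin d) ℂ) :
    Integrable (fun s : Fin n → S => ((D * tensorFam fun k => r k (s k)).trace).re) (Measure.pi V) ∧
    ∫ s : Fin n → S, ((D * tensorFam fun k => r k (s k)).trace).re ∂(Measure.pi V) =
      ((D * tensorFam fun k => mInt (V k) (r k)).trace).re := by
  have h0 : ∀ p q : Fin n → Fin d, Integrable (fun s : Fin n → S => D p q * ∏ k, r k (s k) (q k) (p k))
      (Measure.pi V) := by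
    intro p q
    refine Integrable.const_mul ?_ _
    exact Integrable.fintype_prod (f := fun k s => r k s (q k) (p k)) fun k =>
      dens_integrable (V k) (r k) (hr k) (hm k) _ _
  have h1 : Integrable (fun s : Fin n → S => (D * tensorFam fun k => r k (s k)).trace) (Measure.pi V) := by
    simp only [Matrix.trace, Matrix.diag, Matrix.mul_apply, tensorFam, Matrix.of_apply]
    exact integrable_finsetSum _ fun i _ => integrable_finsetSum _ fun j _ => h0 i j
  refine ⟨h1.re, ?_⟩
  have h2 : ∫ s : Fin n → S, (D * tensorFam fun k => r k (s k)).trace ∂(Measure.pi V) =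
      (D * tensorFam fun k => mInt (V k) (r k)).trace := by
    simp only [Matrix.trace, Matrix.diag, Matrix.mul_apply, tensorFam, Matrix.of_apply, mInt]
    rw [integral_finsetSum _ fun i _ => integrable_finsetSum _ fun j _ => h0 i j]
    refine Finset.sum_congr rfl fun p _ => ?_
    rw [integral_finsetSum _ fun j _ => h0 p j]
    refine Finset.sum_congr rfl fun q _ => ?_
    rw [integral_const_mul]
    rw [integral_fintype_prod_eq_prod (fun k s => r k s (q k) (p k))]
  rw [← h2]
  exact integral_re h1

lemma tensor_dens_trace {S : Type*} {d n : ℕ} (r : Fin n → Matrix (Fin d) (Fin d) ℂ)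
    (hr : ∀ k, IsDensity (r k)) : (tensorFam r).PosSemidef ∧ (tensorFam r).trace = 1 := by
  refine ⟨tensorFam_psd _ fun k => (hr k).1, ?_⟩
  rw [tensorFam_trace]
  exact Finset.prod_eq_one fun k _ => (hr k).2

lemma conv {S : Type*} [MeasurableSpace S] {d n : ℕ} {I J : Type*} [Fintype I] [Fintype J]
    [DecidableEq I] [DecidableEq J]
    (r : I → J → Fin n → S → Matrix (Fin d) (Fin d) ℂ)
    (hr : ∀ i j k s, IsDensity (r i j k s)) (hm : ∀ i j k p q, Measurable fun s => r i j k s p q)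
    (D : I → J → Matrix (Fin n → Fin d) (Fin n → Fin d) ℂ)
    (hD : ∀ i j, (D i j).PosSemidef) (hD1 : ∑ i, ∑ j, D i j = 1)
    (hI : 2 ≤ Fintype.card I) (hJ : 1 ≤ Fintype.card J)
    (H : ∀ ε : ℝ, 0 < ε → ∃ V : I → Fin n → Measure S, (∀ i k, IsProbabilityMeasure (V i k)) ∧
      ∀ i i' j k p q, ‖mInt (V i' k) (r i j k) p q - mInt (V i k) (r i' j k) p q‖ ≤ ε)
    (hs : ∀ s : Fin n → S, 7 / 8 * ((Fintype.card I : ℝ) * Fintype.card J) ≤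
      ∑ i, ∑ j, ((D i j * tensorFam fun k => r i j k (s k)).trace).re) : False := by
  set B : ℝ := 8 * d + 1 with hB
  have hB1 : 1 ≤ B := by rw [hB]; have : (0 : ℝ) ≤ d := Nat.cast_nonneg d; linarith
  set C : ℝ := 1 + ∑ i, ∑ j, ∑ p, ∑ q, ‖D i j p q‖ * (n * B ^ n) with hC
  have hC0 : 0 < C := by positivity
  obtain ⟨V, hV, hVε⟩ := H (1 / (8 * C)) (by positivity)
  -- G i i' l j = value of message l under state i, jammer i'
  set G : I → I → I → J → ℝ := fun i i' l j =>
    ((D l j * tensorFam fun k => mInt (V i' k) (r i j k)).trace).re with hG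
  have G2 : ∀ i i' l j, G i i' l j = ∫ s : Fin n → S, ((D l j * tensorFam fun k => r i j k (s k)).trace).re
      ∂(Measure.pi (V i')) := fun i i' l j => ((pi_int (V i') (r i j) (hr i j) (hm i j) (D l j)).2).symm
  have Gint : ∀ i i' l j, Integrable (fun s : Fin n → S =>
    ((D l j * tensorFam fun k => r i j k (s k)).trace).re) (Measure.pi (V i')) :=
    fun i i' l j => (pi_int (V i') (r i j) (hr i j) (hm i j) (D l j)).1
  -- partial POVM
  have hpart : ∀ (T : Finset I) (j : J), (1 - ∑ l ∈ T, D l j).PosSemidef := by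
    intro T j
    have e : 1 - ∑ l ∈ T, D l j = ∑ a ∈ Finset.univ \ (T ×ˢ {j}), D a.1 a.2 := by
      rw [sub_eq_iff_eq_add, ← hD1]
      have e2 : ∑ l ∈ T, D l j = ∑ a ∈ T ×ˢ {j}, D a.1 a.2 := by
        rw [Finset.sum_product]; simp
      rw [e2, Finset.sum_sdiff (Finset.subset_univ _), Fintype.sum_prod_type]
    rw [e]
    exact Matrix.posSemidef_sum _ fun a _ => hD _ _
  have Gle : ∀ i i' (T : Finset I) j, ∑ l ∈ T, G i i' l j ≤ 1 := by
    intro i i' T j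
    simp only [G2]
    rw [← integral_finsetSum _ fun l _ => Gint i i' l j]
    have : ∫ s : Fin n → S, (1 : ℝ) ∂(Measure.pi (V i')) = 1 := by simp
    rw [← this]
    refine integral_mono (integrable_finsetSum _ fun l _ => Gint i i' l j) (integrable_const _) ?_
    intro s
    obtain ⟨t1, t2⟩ := tensor_dens_trace (S := S) (fun k => r i j k (s k)) (fun k => hr i j k (s k))
    have := (Complex.le_def.1 (trace_mul_nonneg (hpart T j) t1)).1
    rw [sub_mul, one_mul, Matrix.trace_sub, t2, Finset.sum_mul, Matrix.trace_sum] at this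
    simp only [Complex.sub_re, Complex.one_re, Complex.zero_re, Complex.re_sum] at this
    simp only
    linarith
  have hent : ∀ i i' j k p q, ‖mInt (V i' k) (r i j k) p q‖ ≤ B := by
    intro i i' j k p q
    simp only [mInt, Matrix.of_apply]
    have := norm_integral_le_of_norm_le_const (μ := V i' k) (C := (8 * d : ℝ))
      (ae_of_all _ fun s => dens_bound (hr i j k s) p q)
    simp at this
    rw [hB]; linarith
  have Gsym : ∀ i i' l j, G i' i l j ≤ G i i' l j + 1 / 8 := by
    intro i i' l j
    have e : G i' i l j - G i i' l j = ((D l j * ((tensorFam fun k => mInt (V i k) (r i' j k)) -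
        tensorFam fun k => mInt (V i' k) (r i j k))).trace).re := by
      rw [mul_sub, Matrix.trace_sub, Complex.sub_re]
    have h1 : ‖(D l j * ((tensorFam fun k => mInt (V i k) (r i' j k)) -
        tensorFam fun k => mInt (V i' k) (r i j k))).trace‖ ≤ C * (1 / (8 * C)) := by
      simp only [Matrix.trace, Matrix.diag, Matrix.mul_apply]
      have h2 : ‖∑ p, ∑ q, D l j p q * ((tensorFam fun k => mInt (V i k) (r i' j k)) -
        tensorFam fun k => mInt (V i' k) (r i j k)) q p‖ ≤
          ∑ p, ∑ q, ‖D l j p q‖ * (n * B ^ n) * (1 / (8 * C)) := by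
        refine norm_sum_le_of_le _ fun p _ => norm_sum_le_of_le _ fun q _ => ?_
        rw [norm_mul, mul_assoc]
        gcongr
        simp only [Matrix.sub_apply, tensorFam, Matrix.of_apply]
        have := prod_sub_le Finset.univ (fun k => mInt (V i k) (r i' j k) (q k) (p k))
          (fun k => mInt (V i' k) (r i j k) (q k) (p k)) B (1 / (8 * C)) hB1 (by positivity)
          (fun k => hent _ _ _ _ _ _) (fun k => hent _ _ _ _ _ _) (fun k => hVε _ _ _ _ _ _)
        simpa using this
      refine h2.trans ?_
      simp only [← Finset.sum_mul]
      gcongr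
      rw [hC]
      have h3 : ∑ p, ∑ q, ‖D l j p q‖ * (n * B ^ n) ≤ ∑ i, ∑ j, ∑ p, ∑ q, ‖D i j p q‖ * (n * B ^ n) := by
        refine le_trans ?_ (Finset.single_le_sum (f := fun i => ∑ j, ∑ p, ∑ q, ‖D i j p q‖ * (n * B ^ n))
          (fun _ _ => by positivity) (Finset.mem_univ l))
        exact Finset.single_le_sum (f := fun j => ∑ p, ∑ q, ‖D l j p q‖ * (n * B ^ n))
          (fun _ _ => by positivity) (Finset.mem_univ j)
      simp only [← Finset.sum_mul] at h3 ⊢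
      linarith
    have h4 : C * (1 / (8 * C)) = 1 / 8 := by field_simp
    have h5 := (Complex.re_le_norm _).trans h1
    rw [← e, h4] at h5
    linarith
  -- pair bound
  have pair : ∀ i i' j, G i i' i j + G i' i i' j ≤ 9 / 8 + if i = i' then 7 / 8 else 0 := by
    intro i i' j
    split_ifs with h
    · subst h
      have := Gle i i {i} j
      simp at this
      linarith
    · have := Gle i i' {i, i'} j
      rw [Finset.sum_pair h] at this
      have := Gsym i i' i' j
      linarith
  have up : ∑ i', ∑ i, ∑ j, (G i i' i j + G i' i i' j) ≤
      ∑ i' : I, ∑ i : I, ∑ j : J, (9 / 8 + if i = i' then (7 / 8 : ℝ) else 0) :=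
    Finset.sum_le_sum fun i' _ => Finset.sum_le_sum fun i _ => Finset.sum_le_sum fun j _ => pair i i' j
  have lo : ∀ i', 7 / 8 * ((Fintype.card I : ℝ) * Fintype.card J) ≤ ∑ i, ∑ j, G i i' i j := by
    intro i'
    simp only [G2]
    have : ∫ s : Fin n → S, (7 / 8 * ((Fintype.card I : ℝ) * Fintype.card J)) ∂(Measure.pi (V i')) =
      7 / 8 * ((Fintype.card I : ℝ) * Fintype.card J) := by simp
    rw [← this, ← Finset.sum_congr rfl fun i _ => integral_finsetSum _ fun j _ => Gint i i' i j,
      ← integral_finsetSum _ fun i _ => integrable_finsetSum _ fun j _ => Gint i i' i j]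
    exact integral_mono (integrable_const _) (integrable_finsetSum _ fun i _ =>
      integrable_finsetSum _ fun j _ => Gint i i' i j) hs
  have lo2 := Finset.sum_le_sum fun i' (_ : i' ∈ Finset.univ) => lo i'
  have esym : ∑ i', ∑ i, ∑ j, G i' i i' j = ∑ i', ∑ i, ∑ j, G i i' i j := Finset.sum_comm
  simp only [Finset.sum_add_distrib] at up
  rw [esym] at up
  simp at up lo2
  have hI' : (2 : ℝ) ≤ Fintype.card I := by exact_mod_cast hI
  have hJ' : (1 : ℝ) ≤ Fintype.card J := by exact_mod_cast hJ
  set a : ℝ := (Fintype.card I : ℝ)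
  set b : ℝ := (Fintype.card J : ℝ)
  have : a * (a * b) * (7/4) ≤ a * (a * b) * (9/8) + a * b * (7 / 8) := by nlinarith
  have h6 : 0 < a * b := by positivity
  nlinarith

/-- extract the uniform success bound from an achievable pair with positive first (second) rate -/
lemma extract {𝒳 𝒴 𝒮 : Type*} [Fintype 𝒳] [DecidableEq 𝒳] [Fintype 𝒴] [DecidableEq 𝒴] {d : ℕ}
    [Nonempty 𝒮]
    (ρ : 𝒳 → 𝒴 → 𝒮 → Matrix (Fin d) (Fin d) ℂ) (hρ : ∀ x y s, IsDensity (ρ x y s)) (R1 R2 : ℝ)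
    (h : AchievableDet ρ R1 R2) :
    ∃ (n M₁ M₂ : ℕ) (f₁ : Fin M₁ → (Fin n → 𝒳)) (f₂ : Fin M₂ → (Fin n → 𝒴))
      (D : Fin M₁ → Fin M₂ → Matrix (Fin n → Fin d) (Fin n → Fin d) ℂ),
      (∀ m₁ m₂, (D m₁ m₂).PosSemidef) ∧ (∑ m₁, ∑ m₂, D m₁ m₂ = 1) ∧ 1 ≤ M₁ ∧ 1 ≤ M₂ ∧
      (0 < R1 → 2 ≤ M₁) ∧ (0 < R2 → 2 ≤ M₂) ∧
      ∀ s : Fin n → 𝒮, 7 / 8 * ((M₁ : ℝ) * M₂) ≤ ∑ m₁, ∑ m₂,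
          (Matrix.trace (D m₁ m₂ *
            tensorFam fun k => ρ (f₁ m₁ k) (f₂ m₂ k) (s k))).re := by
  obtain ⟨h1, h2, h⟩ := h
  obtain ⟨N, hN⟩ := h (1 / 8) (by norm_num) (if 0 < R1 then R1 else 1) (by split_ifs <;> linarith)
    (if 0 < R2 then R2 else 1) (by split_ifs <;> linarith)
  obtain ⟨M₁, M₂, f₁, f₂, D, hD, hD1, hr1, hr2, hs⟩ := hN N le_rfl
  have hpos : ∀ s : Fin N → 𝒮, 0 ≤ ∑ m₁, ∑ m₂,
          (Matrix.trace (D m₁ m₂ *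
            tensorFam fun k => ρ (f₁ m₁ k) (f₂ m₂ k) (s k))).re := fun s =>
    Finset.sum_nonneg fun m₁ _ => Finset.sum_nonneg fun m₂ _ =>
      (Complex.le_def.1 (trace_mul_nonneg (hD m₁ m₂) (tensorFam_psd _ fun k => (hρ _ _ _).1))).1
  have hs' : ∀ s : Fin N → 𝒮, 1 - (1 / ((M₁ : ℝ) * (M₂ : ℝ))) * ∑ m₁, ∑ m₂,
          (Matrix.trace (D m₁ m₂ *
            tensorFam fun k => ρ (f₁ m₁ k) (f₂ m₂ k) (s k))).re < 1 / 8 := by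
    intro s
    refine lt_of_le_of_lt (le_ciSup (f := fun s : Fin N → 𝒮 => 1 - (1 / ((M₁ : ℝ) * (M₂ : ℝ))) * ∑ m₁, ∑ m₂,
          (Matrix.trace (D m₁ m₂ *
            tensorFam fun k => ρ (f₁ m₁ k) (f₂ m₂ k) (s k))).re) ⟨1, ?_⟩ s) hs
    rintro _ ⟨s, rfl⟩
    have : 0 ≤ (1 / ((M₁ : ℝ) * (M₂ : ℝ))) * ∑ m₁, ∑ m₂,
          (Matrix.trace (D m₁ m₂ *
            tensorFam fun k => ρ (f₁ m₁ k) (f₂ m₂ k) (s k))).re := mul_nonneg (by positivity) (hpos s)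
    simp only
    linarith
  have hM : (M₁ : ℝ) * M₂ ≠ 0 := by
    intro h0
    have := hs' (fun _ => Classical.arbitrary 𝒮)
    rw [h0] at this
    norm_num at this
  have hM1 : M₁ ≠ 0 := by rintro rfl; simp at hM
  have hM2 : M₂ ≠ 0 := by rintro rfl; simp at hM
  have aux : ∀ (R : ℝ) (M : ℕ), M ≠ 0 → 0 < R →
      (1 / (N : ℝ)) * Real.logb 2 M > R - (if 0 < R then R else 1) → 2 ≤ M := by
    intro R M hM hR h
    rw [if_pos hR, sub_self] at h
    by_contra hlt
    have : M = 1 := by omega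
    subst this
    simp at h
  refine ⟨N, M₁, M₂, f₁, f₂, D, hD, hD1, Nat.one_le_iff_ne_zero.2 hM1, Nat.one_le_iff_ne_zero.2 hM2,
    fun h => aux R1 M₁ hM1 h hr1, fun h => aux R2 M₂ hM2 h hr2, fun s => ?_⟩
  have := hs' s
  have hMp : 0 < (M₁ : ℝ) * M₂ := lt_of_le_of_ne (by positivity) hM.symm
  rw [one_div, sub_lt_comm] at this
  rw [lt_inv_mul_iff₀ hMp] at this
  linarith

lemma conv1 {𝒳 𝒴 𝒮 : Type*} [Fintype 𝒳] [DecidableEq 𝒳] [Fintype 𝒴] [DecidableEq 𝒴]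
    [Nonempty 𝒮] [MeasurableSpace 𝒮] {d : ℕ}
    (ρ : 𝒳 → 𝒴 → 𝒮 → Matrix (Fin d) (Fin d) ℂ)
    (hρ : ∀ x y s, IsDensity (ρ x y s))
    (hmeas : ∀ x y i j, Measurable fun s => ρ x y s i j) (h : theta1 ρ = 0) (R1 R2 : ℝ)
    (hA : AchievableDet ρ R1 R2) (hR : 0 < R1) : False := by
  obtain ⟨n, M₁, M₂, f₁, f₂, D, hD, hD1, hM1, hM2, g1, g2, hs⟩ := extract ρ hρ R1 R2 hA
  refine conv (I := Fin M₁) (J := Fin M₂) (fun i j k => ρ (f₁ i k) (f₂ j k)) (fun i j k => hρ _ _)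
    (fun i j k => hmeas _ _) D hD hD1 (by simpa using g1 hR) (by simpa using hM2) ?_ (by simpa using hs)
  intro ε hε
  have : Nonempty {U : 𝒳 → Measure 𝒮 // ∀ x, IsProbabilityMeasure (U x)} :=
    ⟨fun _ => Measure.dirac (Classical.arbitrary 𝒮), fun _ => inferInstance⟩
  obtain ⟨⟨U, hU⟩, hlt⟩ := exists_lt_of_ciInf_lt (lt_of_eq_of_lt h hε)
  refine ⟨fun i k => U (f₁ i k), fun i k => hU _, fun i i' j k p q => ?_⟩
  rw [← Matrix.sub_apply]
  refine (entry_le_traceNorm _ p q).trans (le_trans ?_ hlt.le)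
  refine le_ciSup_of_le (Set.finite_range _).bddAbove (f₁ i k) ?_
  refine le_ciSup_of_le (Set.finite_range _).bddAbove (f₁ i' k) ?_
  exact le_ciSup_of_le (Set.finite_range _).bddAbove (f₂ j k) le_rfl

lemma conv2 {𝒳 𝒴 𝒮 : Type*} [Fintype 𝒳] [DecidableEq 𝒳] [Fintype 𝒴] [DecidableEq 𝒴]
    [Nonempty 𝒮] [MeasurableSpace 𝒮] {d : ℕ}
    (ρ : 𝒳 → 𝒴 → 𝒮 → Matrix (Fin d) (Fin d) ℂ)
    (hρ : ∀ x y s, IsDensity (ρ x y s))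
    (hmeas : ∀ x y i j, Measurable fun s => ρ x y s i j) (h : theta2 ρ = 0) (R1 R2 : ℝ)
    (hA : AchievableDet ρ R1 R2) (hR : 0 < R2) : False := by
  obtain ⟨n, M₁, M₂, f₁, f₂, D, hD, hD1, hM1, hM2, g1, g2, hs⟩ := extract ρ hρ R1 R2 hA
  refine conv (I := Fin M₂) (J := Fin M₁) (fun j i k => ρ (f₁ i k) (f₂ j k)) (fun i j k => hρ _ _)
    (fun i j k => hmeas _ _) (fun j i => D i j) (fun j i => hD i j) (by rw [Finset.sum_comm]; exact hD1)
    (by simpa using g2 hR) (by simpa using hM1) ?_ ?_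
  · intro ε hε
    have : Nonempty {U : 𝒴 → Measure 𝒮 // ∀ x, IsProbabilityMeasure (U x)} :=
      ⟨fun _ => Measure.dirac (Classical.arbitrary 𝒮), fun _ => inferInstance⟩
    obtain ⟨⟨U, hU⟩, hlt⟩ := exists_lt_of_ciInf_lt (lt_of_eq_of_lt h hε)
    refine ⟨fun i k => U (f₂ i k), fun i k => hU _, fun i i' j k p q => ?_⟩
    rw [← Matrix.sub_apply]
    refine (entry_le_traceNorm _ p q).trans (le_trans ?_ hlt.le)
    refine le_ciSup_of_le (Set.finite_range _).bddAbove (f₁ j k) ?_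
    refine le_ciSup_of_le (Set.finite_range _).bddAbove (f₂ i k) ?_
    exact le_ciSup_of_le (Set.finite_range _).bddAbove (f₂ i' k) le_rfl
  · intro s
    rw [Finset.sum_comm, mul_comm (Fintype.card (Fin M₂) : ℝ)]
    simpa using hs s

lemma conv3 {𝒳 𝒴 𝒮 : Type*} [Fintype 𝒳] [DecidableEq 𝒳] [Fintype 𝒴] [DecidableEq 𝒴]
    [Nonempty 𝒮] [MeasurableSpace 𝒮] {d : ℕ}
    (ρ : 𝒳 → 𝒴 → 𝒮 → Matrix (Fin d) (Fin d) ℂ)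
    (hρ : ∀ x y s, IsDensity (ρ x y s))
    (hmeas : ∀ x y i j, Measurable fun s => ρ x y s i j) (h : theta3 ρ = 0) (R1 R2 : ℝ)
    (hA : AchievableDet ρ R1 R2) (hR : 0 < R1) : False := by
  obtain ⟨n, M₁, M₂, f₁, f₂, D, hD, hD1, hM1, hM2, g1, g2, hs⟩ := extract ρ hρ R1 R2 hA
  refine conv (I := Fin M₁ × Fin M₂) (J := Unit) (fun a _ k => ρ (f₁ a.1 k) (f₂ a.2 k))
    (fun i j k => hρ _ _)
    (fun i j k => hmeas _ _) (fun a _ => D a.1 a.2) (fun a _ => hD _ _)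
    (by rw [Fintype.sum_prod_type]; simpa using hD1)
    (by simp only [Fintype.card_prod, Fintype.card_fin]; nlinarith [g1 hR]) (by simp) ?_ ?_
  · intro ε hε
    have : Nonempty {U : 𝒳 → 𝒴 → Measure 𝒮 // ∀ x y, IsProbabilityMeasure (U x y)} :=
      ⟨fun _ _ => Measure.dirac (Classical.arbitrary 𝒮), fun _ _ => inferInstance⟩
    obtain ⟨⟨U, hU⟩, hlt⟩ := exists_lt_of_ciInf_lt (lt_of_eq_of_lt h hε)
    refine ⟨fun i k => U (f₁ i.1 k) (f₂ i.2 k), fun i k => hU _ _, fun i i' j k p q => ?_⟩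
    rw [← Matrix.sub_apply]
    refine (entry_le_traceNorm _ p q).trans (le_trans ?_ hlt.le)
    refine le_ciSup_of_le (Set.finite_range _).bddAbove (f₁ i.1 k) ?_
    refine le_ciSup_of_le (Set.finite_range _).bddAbove (f₁ i'.1 k) ?_
    refine le_ciSup_of_le (Set.finite_range _).bddAbove (f₂ i.2 k) ?_
    exact le_ciSup_of_le (Set.finite_range _).bddAbove (f₂ i'.2 k) le_rfl
  · intro s
    rw [Fintype.sum_prod_type]
    simpa using hs s

lemma main {𝒳 𝒴 𝒮 : Type*} [Fintype 𝒳] [DecidableEq 𝒳] [Fintype 𝒴] [DecidableEq 𝒴]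
    [Nonempty 𝒮] [MeasurableSpace 𝒮] {d : ℕ}
    (ρ : 𝒳 → 𝒴 → 𝒮 → Matrix (Fin d) (Fin d) ℂ)
    (hρ : ∀ x y s, IsDensity (ρ x y s))
    (hmeas : ∀ x y i j, Measurable fun s => ρ x y s i j) :
    interior (Rd ρ) = ∅ ↔ theta1 ρ = 0 ∨ theta2 ρ = 0 ∨ theta3 ρ = 0 := by
  have fin1 : (∀ R1 R2, AchievableDet ρ R1 R2 → 0 < R1 → False) → interior (Rd ρ) = ∅ := by
    intro h
    have : Rd ρ ⊆ {(0 : ℝ)} ×ˢ Set.univ := by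
      refine closure_minimal ?_ (isClosed_singleton.prod isClosed_univ)
      rintro ⟨a, b⟩ hab
      refine ⟨?_, trivial⟩
      by_contra h0
      exact h a b hab (lt_of_le_of_ne hab.1 (Ne.symm h0))
    have := interior_mono this
    rw [interior_prod_eq, interior_singleton] at this
    simpa using this
  have fin2 : (∀ R1 R2, AchievableDet ρ R1 R2 → 0 < R2 → False) → interior (Rd ρ) = ∅ := by
    intro h
    have : Rd ρ ⊆ Set.univ ×ˢ {(0 : ℝ)} := by
      refine closure_minimal ?_ (isClosed_univ.prod isClosed_singleton)
      rintro ⟨a, b⟩ hab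
      refine ⟨trivial, ?_⟩
      by_contra h0
      exact h a b hab (lt_of_le_of_ne hab.2.1 (Ne.symm h0))
    have := interior_mono this
    rw [interior_prod_eq, interior_singleton] at this
    simpa using this
  constructor
  · intro h
    by_contra! hcon
    obtain ⟨h1, h2, h3⟩ := hcon
    have hX : Nonempty 𝒳 := by
      by_contra hX
      rw [not_nonempty_iff] at hX
      apply h1
      simp [theta1]
    have hY : Nonempty 𝒴 := by
      by_contra hY
      rw [not_nonempty_iff] at hY
      apply h1
      simp [theta1]
    have hd : 0 < d := by
      rcases Nat.eq_zero_or_pos d with hd | hd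
      · subst hd
        have := (hρ (Classical.arbitrary 𝒳) (Classical.arbitrary 𝒴) (Classical.arbitrary 𝒮)).2
        simp [Matrix.trace] at this
      · exact hd
    have := direct hd ρ hρ hmeas h1 h2 h3
    rw [h] at this
    exact Set.not_nonempty_empty this
  · rintro (h | h | h)
    · exact fin1 fun R1 R2 hA hR => conv1 ρ hρ hmeas h R1 R2 hA hR
    · exact fin2 fun R1 R2 hA hR => conv2 ρ hρ hmeas h R1 R2 hA hR
    · exact fin1 fun R1 R2 hA hR => conv3 ρ hρ hmeas h R1 R2 hA hR

end AV

/-- For a measurable family satisfying Assumption A, the interior of the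
deterministic code capacity region is empty iff the channel is symmetrizable, i.e. iff
`θ₁ = 0` or `θ₂ = 0` or `θ₃ = 0`. -/
theorem statement10 {𝒳 𝒴 𝒮 : Type*} [Fintype 𝒳] [DecidableEq 𝒳] [Fintype 𝒴] [DecidableEq 𝒴]
    [Nonempty 𝒮] [MeasurableSpace 𝒮] {d : ℕ}
    (ρ : 𝒳 → 𝒴 → 𝒮 → Matrix (Fin d) (Fin d) ℂ)
    (hρ : ∀ x y s, IsDensity (ρ x y s))
    (hmeas : ∀ x y i j, Measurable fun s => ρ x y s i j)
    (hAss : AssumptionA2 ρ) :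
    interior (Rd ρ) = ∅ ↔ theta1 ρ = 0 ∨ theta2 ρ = 0 ∨ theta3 ρ = 0 := by
  exact AV.main ρ hρ hmeas
end
end

section
/- Suppose there exist finitely supported probability distributions U₃(·|x,y) on 𝒮, one for each (x,y)∈𝒳×𝒴, and θ≥0 such that ‖Σ_s U₃(s|x',y')ρ_{x,y,s} − Σ_s U₃(s|x,y)ρ_{x',y',s}‖₁ ≤ θ for all x,x'∈𝒳 and y,y'∈𝒴 (trace norm). Then every (n,M₁,M₂) deterministic code with M₁·M₂ ≥ 2 satisfies sup_{s^n∈𝒮^n} ē(C,s^n) ≥ (1−nθ)/4. -/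
open scoped ComplexOrder Matrix

noncomputable section

open scoped MatrixOrder in
open scoped Matrix.Norms.L2Operator in
lemma exists_abs_dominating {m : Type*} [Fintype m] [DecidableEq m] (A : Matrix m m ℂ)
    (hA : A.IsHermitian) :
    ∃ P : Matrix m m ℂ, P.PosSemidef ∧ (P - A).PosSemidef ∧ P.trace.re = traceNorm A := by
  have h1 : (Aᴴ * A).PosSemidef := Matrix.posSemidef_conjTranspose_mul_self A
  have key : matFun Real.sqrt (Aᴴ * A) = CFC.abs A := by
    unfold matFun
    rw [dif_pos h1.1]
    have h2 := h1.1.cfc_eq Real.sqrt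
    have h3 : CFC.abs A = cfc Real.sqrt (Aᴴ * A) := by
      unfold CFC.abs
      rw [CFC.sqrt_eq_real_sqrt _ (star_mul_self_nonneg A), cfcₙ_eq_cfc]
      rfl
    rw [h3, h2]
    simp only [Matrix.IsHermitian.cfc, Unitary.conjStarAlgAut_apply]
    rfl
  refine ⟨CFC.abs A, ?_, ?_, ?_⟩
  · exact Matrix.nonneg_iff_posSemidef.mp (CFC.abs_nonneg A)
  · rw [← Matrix.nonneg_iff_posSemidef, CFC.abs_sub_self A hA.isSelfAdjoint]
    exact nsmul_nonneg (CFC.negPart_nonneg A) 2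
  · unfold traceNorm; rw [key]

lemma tensorFam_mul {k d : Type*} [Fintype k] [DecidableEq k] [Fintype d]
    (A B : k → Matrix d d ℂ) :
    tensorFam A * tensorFam B = tensorFam (fun a => A a * B a) := by
  ext i j
  simp only [tensorFam, Matrix.mul_apply, Matrix.of_apply, ← Finset.prod_mul_distrib]
  rw [Finset.prod_univ_sum]
  simp

lemma tensorFam_conjTranspose {k d : Type*} [Fintype k] (A : k → Matrix d d ℂ) :
    (tensorFam A)ᴴ = tensorFam (fun a => (A a)ᴴ) := by
  ext i j
  simp [tensorFam, Matrix.conjTranspose_apply]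

lemma tensorFam_trace {k d : Type*} [Fintype k] [DecidableEq k] [Fintype d]
    (A : k → Matrix d d ℂ) : (tensorFam A).trace = ∏ a, (A a).trace := by
  simp only [tensorFam, Matrix.trace, Matrix.diag, Matrix.of_apply]
  rw [Finset.prod_univ_sum]
  simp

open scoped MatrixOrder in
lemma posSemidef_factor {d : Type*} [Fintype d] [DecidableEq d] {A : Matrix d d ℂ}
    (hA : A.PosSemidef) : ∃ B : Matrix d d ℂ, A = Bᴴ * B := by
  obtain ⟨B, hB⟩ := CStarAlgebra.nonneg_iff_eq_star_mul_self.mp hA.nonneg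
  exact ⟨B, hB⟩

lemma tensorFam_posSemidef {k d : Type*} [Fintype k] [DecidableEq k] [Fintype d] [DecidableEq d]
    (A : k → Matrix d d ℂ) (hA : ∀ a, (A a).PosSemidef) : (tensorFam A).PosSemidef := by
  choose B hB using fun a => posSemidef_factor (hA a)
  have : tensorFam A = (tensorFam B)ᴴ * tensorFam B := by
    rw [tensorFam_conjTranspose, tensorFam_mul]
    congr 1
    funext a
    exact hB a
  rw [this]
  exact Matrix.posSemidef_conjTranspose_mul_self _

lemma re_trace_mul_nonneg {d : Type*} [Fintype d] [DecidableEq d] {A B : Matrix d d ℂ}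
    (hA : A.PosSemidef) (hB : B.PosSemidef) : 0 ≤ (A * B).trace.re := by
  obtain ⟨C, rfl⟩ := posSemidef_factor hA
  rw [Matrix.mul_assoc, Matrix.trace_mul_comm]
  have := (hB.mul_mul_conjTranspose_same C).trace_nonneg
  exact (Complex.le_def.mp this).1

lemma tensorFam_update_add {k d : Type*} [Fintype k] [DecidableEq k]
    (τ : k → Matrix d d ℂ) (a : k) (X Y : Matrix d d ℂ) :
    tensorFam (Function.update τ a (X + Y)) =
      tensorFam (Function.update τ a X) + tensorFam (Function.update τ a Y) := by
  ext i j
  have h : ∀ Z : Matrix d d ℂ, tensorFam (Function.update τ a Z) i j =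
      Z (i a) (j a) * ∏ b ∈ Finset.univ \ {a}, τ b (i b) (j b) := by
    intro Z
    have : ∀ b, (Function.update τ a Z) b (i b) (j b) =
        Function.update (fun b => τ b (i b) (j b)) a (Z (i a) (j a)) b := by
      intro b
      by_cases hb : b = a
      · subst hb; simp
      · simp [hb]
    simp only [tensorFam, Matrix.of_apply, this]
    rw [Finset.prod_update_of_mem (Finset.mem_univ a)]
  rw [Matrix.add_apply, h, h, h, Matrix.add_apply, add_mul]

lemma step_bound {k d : Type*} [Fintype k] [DecidableEq k] [Fintype d] [DecidableEq d]
    (E : Matrix (k → d) (k → d) ℂ) (hE : E.PosSemidef) (hE1 : (1 - E).PosSemidef)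
    (τ : k → Matrix d d ℂ) (hτ : ∀ b, IsDensity (τ b)) (a : k) (X Y : Matrix d d ℂ)
    (hX : X.IsHermitian) (hY : Y.IsHermitian) (θ : ℝ) (hθ : traceNorm (X - Y) ≤ θ) :
    (E * tensorFam (Function.update τ a X)).trace.re ≤
      (E * tensorFam (Function.update τ a Y)).trace.re + θ := by
  obtain ⟨P, hP, hPA, htr⟩ := exists_abs_dominating (X - Y) (hX.sub hY)
  have hpsd : ∀ Z : Matrix d d ℂ, Z.PosSemidef →
      (tensorFam (Function.update τ a Z)).PosSemidef := by
    intro Z hZ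
    apply tensorFam_posSemidef
    intro b
    by_cases hb : b = a
    · subst hb; simpa using hZ
    · simpa [hb] using (hτ b).1
  have e1 : tensorFam (Function.update τ a X) + tensorFam (Function.update τ a (P - (X - Y))) =
      tensorFam (Function.update τ a Y) + tensorFam (Function.update τ a P) := by
    rw [← tensorFam_update_add, ← tensorFam_update_add]
    congr 2
    abel
  have e2 := congrArg (fun Z => (E * Z).trace.re) e1
  simp only [mul_add, Matrix.trace_add, Complex.add_re] at e2
  have h1 := re_trace_mul_nonneg hE (hpsd _ hPA)
  have h2 := re_trace_mul_nonneg hE1 (hpsd _ hP)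
  have h3 : (tensorFam (Function.update τ a P)).trace = P.trace := by
    rw [tensorFam_trace, Finset.prod_eq_single a]
    · simp
    · intro b _ hb; simpa [hb] using (hτ b).2
    · simp
  rw [sub_mul, one_mul, Matrix.trace_sub, Complex.sub_re, h3] at h2
  linarith

lemma telescope {k d : Type*} [Fintype k] [DecidableEq k] [Fintype d] [DecidableEq d]
    (E : Matrix (k → d) (k → d) ℂ) (hE : E.PosSemidef) (hE1 : (1 - E).PosSemidef)
    (X Y : k → Matrix d d ℂ) (hX : ∀ b, IsDensity (X b)) (hY : ∀ b, IsDensity (Y b))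
    (θ : ℝ) (hθ : ∀ b, traceNorm (X b - Y b) ≤ θ) :
    (E * tensorFam X).trace.re ≤ (E * tensorFam Y).trace.re + Fintype.card k * θ := by
  have : ∀ s : Finset k, (E * tensorFam (s.piecewise X Y)).trace.re ≤
      (E * tensorFam Y).trace.re + s.card * θ := by
    intro s
    induction s using Finset.induction_on with
    | empty => simp
    | insert a s ha ih =>
      rw [Finset.piecewise_insert, Finset.card_insert_of_notMem ha]
      have h := step_bound E hE hE1 (s.piecewise X Y)
        (fun b => by by_cases hb : b ∈ s <;> simp [hb, hX, hY]) a (X a) (Y a)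
        (hX a).1.1 (hY a).1.1 θ (hθ a)
      have h' : Function.update (s.piecewise X Y) a (Y a) = s.piecewise X Y := by
        rw [Function.update_eq_self_iff]; simp [ha]
      rw [h'] at h
      push_cast
      linarith
  simpa using this Finset.univ

lemma mixture_density {S d : Type*} [Fintype d] (R : S → Matrix d d ℂ)
    (hR : ∀ s, IsDensity (R s)) (u : S →₀ ℝ) (hu0 : ∀ s, 0 ≤ u s)
    (hu1 : u.sum (fun _ a => a) = 1) : IsDensity (u.sum (fun s w => w • R s)) := by
  constructor
  · apply Matrix.posSemidef_sum
    intro s _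
    exact (hR s).1.smul (hu0 s)
  · rw [Finsupp.sum, Matrix.trace_sum]
    simp only [Matrix.trace_smul, (hR _).2]
    have : ((u.sum (fun _ a => a) : ℝ) : ℂ) = 1 := by rw [hu1]; simp
    rw [Finsupp.sum] at this
    push_cast at this
    simpa using this

lemma tensorFam_mixture {k S d : Type*} [Fintype k] [DecidableEq k] [DecidableEq S]
    (R : k → S → Matrix d d ℂ) (u : k → S →₀ ℝ) :
    tensorFam (fun a => (u a).sum (fun s w => w • R a s)) =
      ∑ p ∈ Fintype.piFinset (fun a => (u a).support),
        (∏ a, u a (p a)) • tensorFam (fun a => R a (p a)) := by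
  ext i j
  simp only [tensorFam, Matrix.of_apply, Finsupp.sum, Matrix.sum_apply, Matrix.smul_apply]
  rw [Finset.prod_univ_sum]
  refine Finset.sum_congr rfl fun p _ => ?_
  simp [Finset.prod_mul_distrib]

lemma main_bound {Z S J : Type*} [Fintype J] {d n : ℕ}
    (ρ : Z → S → Matrix (Fin d) (Fin d) ℂ) (hρ : ∀ z s, IsDensity (ρ z s))
    (U : Z → S →₀ ℝ) (hU0 : ∀ z s, 0 ≤ U z s) (hU1 : ∀ z, (U z).sum (fun _ a => a) = 1)
    (θ : ℝ)
    (hsym : ∀ z z', traceNorm ((U z').sum (fun s w => w • ρ z s) -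
        (U z).sum (fun s w => w • ρ z' s)) ≤ θ)
    (hJ : 2 ≤ Fintype.card J) (hnθ : 0 ≤ 1 - (n : ℝ) * θ)
    (f : J → Fin n → Z) (D : J → Matrix (Fin n → Fin d) (Fin n → Fin d) ℂ)
    (hD : ∀ j, (D j).PosSemidef) (hDsum : ∑ j, D j = 1) (C : ℝ)
    (hC : ∀ sv : Fin n → S, 1 - (1 / (Fintype.card J : ℝ)) * ∑ j,
      (D j * tensorFam fun k => ρ (f j k) (sv k)).trace.re ≤ C) :
    (1 - (n : ℝ) * θ) / 4 ≤ C := by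
  classical
  set M : ℝ := (Fintype.card J : ℝ) with hMdef
  have hM2 : (2 : ℝ) ≤ M := by rw [hMdef]; exact_mod_cast hJ
  have hM0 : 0 < M := by linarith
  let τ : J → J → Fin n → Matrix (Fin d) (Fin d) ℂ :=
    fun j j' k => (U (f j' k)).sum (fun s w => w • ρ (f j k) s)
  have hτ : ∀ j j' k, IsDensity (τ j j' k) := fun j j' k =>
    mixture_density _ (hρ _) _ (hU0 _) (hU1 _)
  let h : J → J → ℝ := fun j j' => (D j * tensorFam (τ j j')).trace.re
  have hsubset : ∀ T : Finset J, (1 - ∑ j ∈ T, D j).PosSemidef := by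
    intro T
    rw [← hDsum, ← Finset.sum_compl_add_sum T, add_sub_cancel_right]
    exact Matrix.posSemidef_sum _ fun j _ => hD j
  have hE1 : ∀ j, (1 - D j).PosSemidef := fun j => by simpa using hsubset {j}
  have htrτ : ∀ j j', (tensorFam (τ j j')).trace = 1 := by
    intro j j'
    rw [tensorFam_trace]
    exact Finset.prod_eq_one fun k _ => (hτ j j' k).2
  have hpsd : ∀ j j', (tensorFam (τ j j')).PosSemidef := fun j j' =>
    tensorFam_posSemidef _ fun k => (hτ j j' k).1
  have hdiag : ∀ j, h j j ≤ 1 := by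
    intro j
    have := re_trace_mul_nonneg (hE1 j) (hpsd j j)
    rw [sub_mul, one_mul, Matrix.trace_sub, htrτ, Complex.sub_re, Complex.one_re] at this
    simp only [h]; linarith
  have hoff : ∀ j j', j ≠ j' → h j j' + h j' j ≤ 1 + n * θ := by
    intro j j' hne
    have h1 := telescope (D j') (hD j') (hE1 j') (τ j' j) (τ j j') (hτ j' j) (hτ j j') θ
      (fun k => hsym _ _)
    have h2 := re_trace_mul_nonneg (hsubset {j, j'}) (hpsd j j')
    rw [Finset.sum_pair hne, sub_mul, one_mul, add_mul, Matrix.trace_sub, Matrix.trace_add, htrτ,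
      Complex.sub_re, Complex.add_re, Complex.one_re] at h2
    rw [Fintype.card_fin] at h1
    simp only [h]; linarith
  have hpair : ∀ j j', h j j' + h j' j ≤ (1 + n * θ) + if j = j' then 1 - n * θ else 0 := by
    intro j j'
    split_ifs with hjj
    · subst hjj; linarith [hdiag j]
    · linarith [hoff j j' hjj]
  have hsum : ∑ j, ∑ j', (h j j' + h j' j) ≤ M ^ 2 * (1 + n * θ) + M * (1 - n * θ) := by
    calc _ ≤ ∑ j : J, ∑ j' : J, ((1 + n * θ) + if j = j' then 1 - n * θ else 0) :=
          Finset.sum_le_sum fun j _ => Finset.sum_le_sum fun j' _ => hpair j j'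
      _ = _ := by
          simp [Finset.sum_add_distrib, ← hMdef]
          ring
  have hswap : ∑ j, ∑ j', (h j j' + h j' j) = 2 * ∑ j', ∑ j, h j j' := by
    simp only [Finset.sum_add_distrib]
    rw [Finset.sum_comm]; ring
  have hlow : ∀ j', M * (1 - C) ≤ ∑ j, h j j' := by
    intro j'
    have hw : ∑ p ∈ Fintype.piFinset (fun k => (U (f j' k)).support),
        ∏ k, U (f j' k) (p k) = 1 := by
      rw [← Finset.prod_univ_sum]
      exact Finset.prod_eq_one fun k _ => hU1 _
    have hexp : ∀ j, h j j' = ∑ p ∈ Fintype.piFinset (fun k => (U (f j' k)).support),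
        (∏ k, U (f j' k) (p k)) * (D j * tensorFam fun k => ρ (f j k) (p k)).trace.re := by
      intro j
      simp only [h, τ]
      rw [tensorFam_mixture (fun k => ρ (f j k)) (fun k => U (f j' k)), Matrix.mul_sum,
        Matrix.trace_sum, Complex.re_sum]
      refine Finset.sum_congr rfl fun p _ => ?_
      rw [Matrix.mul_smul, Matrix.trace_smul, Complex.smul_re, smul_eq_mul]
    simp only [hexp]
    rw [Finset.sum_comm]
    simp only [← Finset.mul_sum]
    have hone := one_mul (M * (1 - C))
    rw [← hone]
    clear hone
    generalize hq : M * (1 - C) = q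
    rw [← hw, Finset.sum_mul]
    refine Finset.sum_le_sum fun p _ => ?_
    refine mul_le_mul_of_nonneg_left ?_ (Finset.prod_nonneg fun k _ => hU0 _ _)
    have hCp := hC p
    rw [sub_le_comm, one_div, inv_mul_eq_div, le_div_iff₀ hM0] at hCp
    rw [← hq]
    linarith
  have hlow2 : M * (M * (1 - C)) ≤ ∑ j', ∑ j, h j j' := by
    calc M * (M * (1 - C)) = ∑ _j' : J, M * (1 - C) := by simp [← hMdef]
      _ ≤ _ := Finset.sum_le_sum fun j' _ => hlow j'
  have hfin : M * (2 * M * (1 - C)) ≤ M * (M * (1 + n * θ) + (1 - n * θ)) := by nlinarith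
  have hfin2 := le_of_mul_le_mul_left hfin hM0
  have : M * ((1 - n * θ) / 4) ≤ M * C := by nlinarith
  exact le_of_mul_le_mul_left this hM0

/-- If the family is approximately `𝒳𝒴`-symmetrizable within `θ` in trace
norm, then every deterministic code with at least two messages has worst-case average error
at least `(1 − nθ)/4`. -/
theorem statement11 {𝒳 𝒴 𝒮 : Type*} [Fintype 𝒳] [DecidableEq 𝒳] [Fintype 𝒴] [DecidableEq 𝒴]
    [Nonempty 𝒮] {d : ℕ}
    (ρ : 𝒳 → 𝒴 → 𝒮 → Matrix (Fin d) (Fin d) ℂ)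
    (hρ : ∀ x y s, IsDensity (ρ x y s))
    (U : 𝒳 → 𝒴 → 𝒮 →₀ ℝ)
    (hU0 : ∀ x y s, 0 ≤ U x y s)
    (hU1 : ∀ x y, (U x y).sum (fun _ a => a) = 1)
    (θ : ℝ) (hθ : 0 ≤ θ)
    (hsym : ∀ x x' y y',
      traceNorm ((U x' y').sum (fun s w => w • ρ x y s) -
        (U x y).sum (fun s w => w • ρ x' y' s)) ≤ θ)
    (n M₁ M₂ : ℕ) (hn : 1 ≤ n) (hM : 2 ≤ M₁ * M₂)
    (f₁ : Fin M₁ → (Fin n → 𝒳)) (f₂ : Fin M₂ → (Fin n → 𝒴))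
    (D : Fin M₁ → Fin M₂ → Matrix (Fin n → Fin d) (Fin n → Fin d) ℂ)
    (hD : ∀ m₁ m₂, (D m₁ m₂).PosSemidef)
    (hDsum : ∑ m₁, ∑ m₂, D m₁ m₂ = 1) :
    (1 - (n : ℝ) * θ) / 4 ≤
      ⨆ sv : Fin n → 𝒮,
        1 - (1 / ((M₁ : ℝ) * (M₂ : ℝ))) * ∑ m₁, ∑ m₂,
          (Matrix.trace (D m₁ m₂ *
            tensorFam fun k => ρ (f₁ m₁ k) (f₂ m₂ k) (sv k))).re := by
  classical
  set g : (Fin n → 𝒮) → ℝ := fun sv =>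
        1 - (1 / ((M₁ : ℝ) * (M₂ : ℝ))) * ∑ m₁, ∑ m₂,
          (Matrix.trace (D m₁ m₂ *
            tensorFam fun k => ρ (f₁ m₁ k) (f₂ m₂ k) (sv k))).re with hg
  have hMpos : (0 : ℝ) < (M₁ : ℝ) * (M₂ : ℝ) := by
    have : (2 : ℝ) ≤ (M₁ : ℝ) * (M₂ : ℝ) := by exact_mod_cast hM
    linarith
  have hDsum' : ∑ j : Fin M₁ × Fin M₂, D j.1 j.2 = 1 := by
    rw [← hDsum, Fintype.sum_prod_type]
  have hpsd : ∀ m₁ m₂ (sv : Fin n → 𝒮),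
      (tensorFam fun k => ρ (f₁ m₁ k) (f₂ m₂ k) (sv k)).PosSemidef := fun m₁ m₂ sv =>
    tensorFam_posSemidef _ fun k => (hρ _ _ _).1
  have hbdd : BddAbove (Set.range g) := by
    refine ⟨1, ?_⟩
    rintro _ ⟨sv, rfl⟩
    simp only [hg]
    have : 0 ≤ (1 / ((M₁ : ℝ) * (M₂ : ℝ))) * ∑ m₁, ∑ m₂, (Matrix.trace (D m₁ m₂ *
        tensorFam fun k => ρ (f₁ m₁ k) (f₂ m₂ k) (sv k))).re :=
      mul_nonneg (by positivity) (Finset.sum_nonneg fun m₁ _ => Finset.sum_nonneg fun m₂ _ =>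
        re_trace_mul_nonneg (hD m₁ m₂) (hpsd m₁ m₂ sv))
    linarith
  have hle : ∀ sv, g sv ≤ ⨆ sv, g sv := fun sv => le_ciSup hbdd sv
  by_cases hnθ : 0 ≤ 1 - (n : ℝ) * θ
  · refine main_bound (J := Fin M₁ × Fin M₂) (fun z : 𝒳 × 𝒴 => ρ z.1 z.2) (fun z s => hρ _ _ s)
      (fun z => U z.1 z.2) (fun z s => hU0 _ _ s) (fun z => hU1 _ _) θ
      (fun z z' => hsym _ _ _ _) (by simpa using hM) hnθ
      (fun j k => (f₁ j.1 k, f₂ j.2 k)) (fun j => D j.1 j.2) (fun j => hD _ _) hDsum' _ ?_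
    intro sv
    refine le_trans (le_of_eq ?_) (hle sv)
    simp only [hg, Fintype.card_prod, Fintype.card_fin, Nat.cast_mul, Fintype.sum_prod_type]
  · obtain ⟨s0⟩ := ‹Nonempty 𝒮›
    refine le_trans ?_ (hle fun _ => s0)
    have hone : ∀ m₁ m₂, (Matrix.trace (D m₁ m₂ *
        tensorFam fun k => ρ (f₁ m₁ k) (f₂ m₂ k) s0)).re ≤ 1 := by
      intro m₁ m₂
      have h1 : (1 - D m₁ m₂).PosSemidef := by
        rw [← hDsum', ← Finset.sum_erase_add _ _ (Finset.mem_univ ((m₁, m₂) : Fin M₁ × Fin M₂)),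
          add_sub_cancel_right]
        exact Matrix.posSemidef_sum _ fun j _ => hD _ _
      have h2 := re_trace_mul_nonneg h1 (hpsd m₁ m₂ fun _ => s0)
      rw [sub_mul, one_mul, Matrix.trace_sub, tensorFam_trace,
        Finset.prod_eq_one fun k _ => (hρ _ _ _).2, Complex.sub_re, Complex.one_re] at h2
      linarith
    have hs : ∑ m₁, ∑ m₂, (Matrix.trace (D m₁ m₂ *
        tensorFam fun k => ρ (f₁ m₁ k) (f₂ m₂ k) s0)).re ≤ (M₁ : ℝ) * (M₂ : ℝ) := by
      calc _ ≤ ∑ _m₁ : Fin M₁, ∑ _m₂ : Fin M₂, (1 : ℝ) :=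
            Finset.sum_le_sum fun m₁ _ => Finset.sum_le_sum fun m₂ _ => hone m₁ m₂
        _ = _ := by simp
    have h3 : (1 / ((M₁ : ℝ) * (M₂ : ℝ))) * ∑ m₁, ∑ m₂, (Matrix.trace (D m₁ m₂ *
        tensorFam fun k => ρ (f₁ m₁ k) (f₂ m₂ k) s0)).re ≤ 1 := by
      rw [one_div, inv_mul_eq_div, div_le_one hMpos]
      exact hs
    simp only [hg]
    linarith
end
end

section
/- Suppose 𝒮 is finite. If the topological interior of the deterministic code capacity region ℛ_d of the two-sender classical-quantum arbitrarily varying multiple access channel is nonempty, then ℛ_d = ℛ_r. -/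
open scoped ComplexOrder

noncomputable section

section Codes

variable {𝒳 𝒴 𝒮 : Type*} [Fintype 𝒳] [DecidableEq 𝒳] [Fintype 𝒴] [DecidableEq 𝒴] {d : ℕ}

/-- `(R₁, R₂)` is an achievable randomized rate pair for the CQ-AVMAC. -/
def AchievableRand (ρ : 𝒳 → 𝒴 → 𝒮 → Matrix (Fin d) (Fin d) ℂ) (R1 R2 : ℝ) : Prop :=
  0 ≤ R1 ∧ 0 ≤ R2 ∧
  ∀ β > (0 : ℝ), ∀ δ₁ > (0 : ℝ), ∀ δ₂ > (0 : ℝ), ∃ N : ℕ, ∀ n ≥ N,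
    ∃ (M₁ M₂ k₁ k₂ : ℕ) (G₁ : Fin k₁ → ℝ) (G₂ : Fin k₂ → ℝ)
      (f₁ : Fin k₁ → Fin M₁ → (Fin n → 𝒳)) (f₂ : Fin k₂ → Fin M₂ → (Fin n → 𝒴))
      (D : Fin k₁ → Fin k₂ → Fin M₁ → Fin M₂ →
        Matrix (Fin n → Fin d) (Fin n → Fin d) ℂ),
      (∀ γ, 0 ≤ G₁ γ) ∧ (∑ γ, G₁ γ = 1) ∧ (∀ γ, 0 ≤ G₂ γ) ∧ (∑ γ, G₂ γ = 1) ∧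
      (∀ γ₁ γ₂ m₁ m₂, (D γ₁ γ₂ m₁ m₂).PosSemidef) ∧
      (∀ γ₁ γ₂, ∑ m₁, ∑ m₂, D γ₁ γ₂ m₁ m₂ = 1) ∧
      (1 / (n : ℝ)) * Real.logb 2 M₁ > R1 - δ₁ ∧
      (1 / (n : ℝ)) * Real.logb 2 M₂ > R2 - δ₂ ∧
      (⨆ sv : Fin n → 𝒮, ∑ γ₁, ∑ γ₂, G₁ γ₁ * G₂ γ₂ *
        (1 - (1 / ((M₁ : ℝ) * (M₂ : ℝ))) * ∑ m₁, ∑ m₂,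
          (Matrix.trace (D γ₁ γ₂ m₁ m₂ *
            tensorFam fun k => ρ (f₁ γ₁ m₁ k) (f₂ γ₂ m₂ k) (sv k))).re)) < β

/-- The random code capacity region `ℛ_r`. -/
def Rr (ρ : 𝒳 → 𝒴 → 𝒮 → Matrix (Fin d) (Fin d) ℂ) : Set (ℝ × ℝ) :=
  closure {r : ℝ × ℝ | AchievableRand ρ r.1 r.2}

end Codes

section Helpers

open scoped Kronecker MatrixOrder

theorem aux_psd_factor {m : Type*} [Fintype m] [DecidableEq m] {A : Matrix m m ℂ}
    (h : A.PosSemidef) : ∃ B : Matrix m m ℂ, A = B.conjTranspose * B := by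
  obtain ⟨b, hb⟩ := CStarAlgebra.nonneg_iff_eq_star_mul_self.mp h.nonneg
  exact ⟨b, hb⟩

theorem aux_tensor_psd {k m : Type*} [Fintype k] [DecidableEq k] [Fintype m] [DecidableEq m]
    (ρ : k → Matrix m m ℂ) (h : ∀ a, (ρ a).PosSemidef) : (tensorFam ρ).PosSemidef := by
  choose B hB using fun a => aux_psd_factor (h a)
  have : tensorFam ρ = (tensorFam B).conjTranspose * tensorFam B := by
    ext i j
    simp only [tensorFam, Matrix.of_apply, Matrix.mul_apply, Matrix.conjTranspose_apply]
    simp_rw [hB, Matrix.mul_apply, Matrix.conjTranspose_apply, Finset.prod_univ_sum, star_prod,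
      ← Finset.prod_mul_distrib]
    simp
  rw [this]
  exact Matrix.posSemidef_conjTranspose_mul_self _

theorem aux_tensor_trace {k m : Type*} [Fintype k] [DecidableEq k] [Fintype m] [DecidableEq m]
    (ρ : k → Matrix m m ℂ) (h : ∀ a, (ρ a).trace = 1) : (tensorFam ρ).trace = 1 := by
  have : (tensorFam ρ).trace = ∏ a, (ρ a).trace := by
    simp only [Matrix.trace, Matrix.diag, tensorFam, Matrix.of_apply, Finset.prod_univ_sum]
    simp
  rw [this]; simp [h]

theorem aux_trace_nonneg {m : Type*} [Fintype m] [DecidableEq m] {A C : Matrix m m ℂ}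
    (hA : A.PosSemidef) (hC : C.PosSemidef) : 0 ≤ (A * C).trace.re := by
  obtain ⟨B, rfl⟩ := aux_psd_factor hA
  rw [Matrix.mul_assoc, Matrix.trace_mul_comm]
  exact (Complex.le_def.mp (hC.mul_mul_conjTranspose_same B).trace_nonneg).1

theorem aux_trace_im {m : Type*} [Fintype m] [DecidableEq m] {A C : Matrix m m ℂ}
    (hA : A.PosSemidef) (hC : C.PosSemidef) : (A * C).trace.im = 0 := by
  obtain ⟨B, rfl⟩ := aux_psd_factor hA
  rw [Matrix.mul_assoc, Matrix.trace_mul_comm]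
  exact (Complex.le_def.mp (hC.mul_mul_conjTranspose_same B).trace_nonneg).2.symm

theorem aux_trace_le_one {m : Type*} [Fintype m] [DecidableEq m] {M₁ M₂ : ℕ}
    {D : Fin M₁ → Fin M₂ → Matrix m m ℂ} {C : Matrix m m ℂ}
    (hD : ∀ i j, (D i j).PosSemidef) (hs : ∑ i, ∑ j, D i j = 1)
    (hC : C.PosSemidef) (hC1 : C.trace = 1) (i : Fin M₁) (j : Fin M₂) :
    (D i j * C).trace.re ≤ 1 := by
  have h1 : ∑ i, ∑ j, (D i j * C).trace.re = 1 := by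
    have : (∑ i, ∑ j, D i j) * C = C := by rw [hs, one_mul]
    have := congrArg (fun X => (Matrix.trace X).re) this
    simpa [Finset.sum_mul, Matrix.trace_sum, hC1] using this
  rw [← h1]
  refine le_trans (Finset.single_le_sum (f := fun j => (D i j * C).trace.re)
    (fun j _ => aux_trace_nonneg (hD i j) hC) (Finset.mem_univ j)) ?_
  exact Finset.single_le_sum (f := fun i => ∑ j, (D i j * C).trace.re)
    (fun i _ => Finset.sum_nonneg fun j _ => aux_trace_nonneg (hD i j) hC) (Finset.mem_univ i)

/-- Tensor product of two operators on consecutive blocks. -/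
def kronBlock {l m d : ℕ} (A : Matrix (Fin l → Fin d) (Fin l → Fin d) ℂ)
    (B : Matrix (Fin m → Fin d) (Fin m → Fin d) ℂ) :
    Matrix (Fin (l + m) → Fin d) (Fin (l + m) → Fin d) ℂ :=
  (A ⊗ₖ B).submatrix (Fin.appendEquiv l m).symm (Fin.appendEquiv l m).symm

theorem kronBlock_psd {l m d : ℕ} {A : Matrix (Fin l → Fin d) (Fin l → Fin d) ℂ}
    {B : Matrix (Fin m → Fin d) (Fin m → Fin d) ℂ} (hA : A.PosSemidef) (hB : B.PosSemidef) :
    (kronBlock A B).PosSemidef :=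
  (hA.kronecker hB).submatrix _

theorem kronBlock_one {l m d : ℕ} :
    kronBlock (1 : Matrix (Fin l → Fin d) (Fin l → Fin d) ℂ)
      (1 : Matrix (Fin m → Fin d) (Fin m → Fin d) ℂ) = 1 := by
  simp [kronBlock]

theorem kronBlock_sum_right {ι : Type*} {l m d : ℕ} (s : Finset ι)
    (A : Matrix (Fin l → Fin d) (Fin l → Fin d) ℂ)
    (B : ι → Matrix (Fin m → Fin d) (Fin m → Fin d) ℂ) :
    kronBlock A (∑ i ∈ s, B i) = ∑ i ∈ s, kronBlock A (B i) := by
  ext x y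
  simp [kronBlock, Matrix.sum_apply, Finset.mul_sum]

theorem kronBlock_sum_left {ι : Type*} {l m d : ℕ} (s : Finset ι)
    (A : ι → Matrix (Fin l → Fin d) (Fin l → Fin d) ℂ)
    (B : Matrix (Fin m → Fin d) (Fin m → Fin d) ℂ) :
    kronBlock (∑ i ∈ s, A i) B = ∑ i ∈ s, kronBlock (A i) B := by
  ext x y
  simp [kronBlock, Matrix.sum_apply, Finset.sum_mul]

theorem kronBlock_trace {l m d : ℕ} (A : Matrix (Fin l → Fin d) (Fin l → Fin d) ℂ)
    (B : Matrix (Fin m → Fin d) (Fin m → Fin d) ℂ) (r : Fin (l + m) → Matrix (Fin d) (Fin d) ℂ) :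
    (kronBlock A B * tensorFam r).trace =
      (A * tensorFam fun k => r (Fin.castAdd m k)).trace *
      (B * tensorFam fun k => r (Fin.natAdd l k)).trace := by
  have h : tensorFam r = kronBlock (tensorFam fun k => r (Fin.castAdd m k))
      (tensorFam fun k => r (Fin.natAdd l k)) := by
    ext x y
    simp [kronBlock, tensorFam, Fin.prod_univ_add]
  rw [h, kronBlock, kronBlock, Matrix.submatrix_mul_equiv, ← Matrix.mul_kronecker_mul,
    ← Matrix.trace_kronecker]
  simp only [Matrix.trace, Matrix.diag, Matrix.submatrix_apply]
  exact Fintype.sum_equiv (Fin.appendEquiv l m).symm _ _ (fun _ => rfl)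

theorem aux_exp_le {g : ℝ} (h0 : 0 ≤ g) (h1 : g ≤ 1) : Real.exp g ≤ 1 + 2 * g := by
  have := convexOn_exp.2 (Set.mem_univ 0) (Set.mem_univ 1) (sub_nonneg.mpr h1) h0 (by ring)
  simp at this
  nlinarith [Real.exp_one_lt_three]

theorem aux_select_weights {T Γ : Type*} [Fintype T] [Fintype Γ] (G : Γ → ℝ)
    (hG : ∀ γ, 0 ≤ G γ) (hG1 : ∑ γ, G γ = 1) (e : Γ → T → ℝ)
    (h0 : ∀ γ t, 0 ≤ e γ t) (h1 : ∀ γ t, e γ t ≤ 1) (b : ℝ) (hb : 0 ≤ b)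
    (he : ∀ t, ∑ γ, G γ * e γ t ≤ b) (K : ℕ) :
    ∃ c : Fin K → Γ, ∑ t, Real.exp (∑ i, e (c i) t) ≤ Fintype.card T * (1 + 2 * b) ^ K := by
  induction K with
  | zero => exact ⟨Fin.elim0, by simp⟩
  | succ K ih =>
    obtain ⟨c, hc⟩ := ih
    have key : ∑ γ, G γ * ∑ t, Real.exp (e γ t + ∑ i, e (c i) t) ≤
        ∑ γ, G γ * (Fintype.card T * (1 + 2 * b) ^ (K + 1)) := by
      rw [← Finset.sum_mul, hG1, one_mul]
      simp_rw [Finset.mul_sum]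
      rw [Finset.sum_comm]
      calc ∑ t, ∑ γ, G γ * Real.exp (e γ t + ∑ i, e (c i) t)
          ≤ ∑ t, (1 + 2 * b) * Real.exp (∑ i, e (c i) t) := by
            refine Finset.sum_le_sum fun t _ => ?_
            simp_rw [Real.exp_add, ← mul_assoc]
            rw [← Finset.sum_mul]
            refine mul_le_mul_of_nonneg_right ?_ (Real.exp_pos _).le
            calc ∑ γ, G γ * Real.exp (e γ t) ≤ ∑ γ, (G γ + 2 * (G γ * e γ t)) := by
                  refine Finset.sum_le_sum fun γ _ => ?_
                  nlinarith [mul_le_mul_of_nonneg_left (aux_exp_le (h0 γ t) (h1 γ t)) (hG γ)]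
              _ ≤ 1 + 2 * b := by
                  rw [Finset.sum_add_distrib, ← Finset.mul_sum, hG1]; linarith [he t]
        _ ≤ _ := by
            rw [← Finset.mul_sum, pow_succ]
            nlinarith [mul_le_mul_of_nonneg_left hc (by linarith : 0 ≤ 1 + 2 * b)]
    obtain ⟨γ, hγ⟩ : ∃ γ, ∑ t, Real.exp (e γ t + ∑ i, e (c i) t) ≤
        Fintype.card T * (1 + 2 * b) ^ (K + 1) := by
      by_contra! hcon
      obtain ⟨γ, -, hγ⟩ : ∃ γ ∈ Finset.univ, 0 < G γ := by
        apply Finset.exists_lt_of_sum_lt (f := fun _ => (0 : ℝ))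
        simp [hG1]
      exact absurd key (not_le.mpr (Finset.sum_lt_sum
        (fun γ _ => mul_le_mul_of_nonneg_left (hcon γ).le (hG γ))
        ⟨γ, Finset.mem_univ _, mul_lt_mul_of_pos_left (hcon γ) hγ⟩))
    refine ⟨Fin.cons γ c, ?_⟩
    simpa [Fin.sum_univ_succ] using hγ

theorem aux_select {T Γ : Type*} [Fintype T] [Fintype Γ] (G : Γ → ℝ)
    (hG : ∀ γ, 0 ≤ G γ) (hG1 : ∑ γ, G γ = 1) (e : Γ → T → ℝ)
    (h0 : ∀ γ t, 0 ≤ e γ t) (h1 : ∀ γ t, e γ t ≤ 1) (b : ℝ) (hb : 0 ≤ b)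
    (he : ∀ t, ∑ γ, G γ * e γ t ≤ b) (K : ℕ) (hK : 0 < K)
    (hcard : Fintype.card T * (1 + 2 * b) ^ K ≤ Real.exp (2 * b * K)) :
    ∃ c : Fin K → Γ, ∀ t, (1 / (K : ℝ)) * ∑ i, e (c i) t ≤ 2 * b := by
  obtain ⟨c, hc⟩ := aux_select_weights G hG hG1 e h0 h1 b hb he K
  refine ⟨c, fun t => ?_⟩
  have h2 := (Finset.single_le_sum (f := fun t => Real.exp (∑ i, e (c i) t))
    (fun t _ => (Real.exp_pos _).le) (Finset.mem_univ t)).trans (hc.trans hcard)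
  have h3 := Real.exp_le_exp.mp h2
  have : (0 : ℝ) < K := by exact_mod_cast hK
  rw [one_div, inv_mul_le_iff₀ this]
  linarith

/-- Exponentially many keys suffice. -/
theorem aux_growth (A : ℝ) (hA : 1 ≤ A) (b : ℝ) (hb : 0 < b) (c : ℝ) (hc : 0 < c) (q : ℕ)
    (hq : 0 < q) : ∃ N : ℕ, ∀ n ≥ N, ∀ K : ℕ, c * (n / q : ℕ) ≤ Real.logb 2 K →
      A ^ n * (1 + 2 * b) ^ K ≤ Real.exp (2 * b * K) := by
  set θ : ℝ := 2 * b - Real.log (1 + 2 * b) with hθ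
  have hθ0 : 0 < θ := by
    have := Real.log_lt_sub_one_of_pos (by linarith : 0 < 1 + 2 * b) (by linarith)
    linarith
  -- need `n * log A ≤ K * θ`
  have hl : 0 < c / (2 * q) * Real.log 2 := by positivity
  have ht : Filter.Tendsto (fun n : ℕ => (n : ℝ) ^ 1 / Real.exp ((c / (2 * q) * Real.log 2) * n))
      Filter.atTop (nhds 0) := by
    have := (tendsto_pow_const_div_const_pow_of_one_lt 1 (Real.one_lt_exp_iff.mpr hl))
    refine this.congr fun n => ?_
    rw [← Real.exp_nat_mul, mul_comm (n : ℝ) (_ * _)]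
  have hev := ht.eventually (gt_mem_nhds (show (0 : ℝ) < θ / (Real.log A + 1) by
    have := Real.log_nonneg hA
    positivity))
  obtain ⟨N, hN⟩ := Filter.eventually_atTop.mp hev
  refine ⟨max N (2 * q), fun n hn K hK => ?_⟩
  have hnN := hN n (le_trans (le_max_left _ _) hn)
  have hnq : 2 * q ≤ n := le_trans (le_max_right _ _) hn
  have hq0 : (0 : ℝ) < q := by exact_mod_cast hq
  have hlA := Real.log_nonneg hA
  have hfl : (n : ℝ) / (2 * q) ≤ (n / q : ℕ) := by
    have h1 : n < q * (n / q) + q := by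
      have := Nat.div_add_mod n q
      have := Nat.mod_lt n hq
      omega
    have h1' : (n : ℝ) < q * (n / q : ℕ) + q := by exact_mod_cast h1
    have h2' : 2 * (q : ℝ) ≤ n := by exact_mod_cast hnq
    rw [div_le_iff₀ (by positivity)]
    nlinarith
  have hdiv : 1 ≤ n / q := by
    rw [Nat.le_div_iff_mul_le hq]; omega
  have hdiv' : (1 : ℝ) ≤ (n / q : ℕ) := by exact_mod_cast hdiv
  have hK0 : (0 : ℝ) < K := by
    rcases Nat.eq_zero_or_pos K with h | h
    · subst h
      simp at hK
      nlinarith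
    · exact_mod_cast h
  have hKe : Real.exp ((c / (2 * q) * Real.log 2) * n) ≤ K := by
    rw [← Real.le_log_iff_exp_le hK0]
    rw [Real.logb, le_div_iff₀ (Real.log_pos (by norm_num))] at hK
    refine le_trans ?_ hK
    have : c / (2 * q) * Real.log 2 * n = c * (n / (2 * q)) * Real.log 2 := by ring
    rw [this]
    have := Real.log_pos (show (1 : ℝ) < 2 by norm_num)
    gcongr
  have hmain : n * Real.log A ≤ K * θ := by
    rw [div_lt_div_iff₀ (Real.exp_pos _) (by positivity), pow_one] at hnN
    have : (n : ℝ) * Real.log A ≤ n * (Real.log A + 1) := by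
      have : (0 : ℝ) ≤ n := Nat.cast_nonneg n
      nlinarith
    nlinarith
  rw [← Real.log_le_iff_le_exp (by positivity), Real.log_mul (by positivity) (by positivity),
    Real.log_pow, Real.log_pow]
  rw [hθ] at hmain
  linarith

theorem aux_sum_fin {M : Type*} [AddCommMonoid M] {p q : ℕ} (g : Fin p → Fin q → M) :
    ∑ a : Fin (p * q), g (finProdFinEquiv.symm a).1 (finProdFinEquiv.symm a).2 =
      ∑ i, ∑ j, g i j := by
  rw [Equiv.sum_comp finProdFinEquiv.symm (fun x : Fin p × Fin q => g x.1 x.2),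
    Fintype.sum_prod_type]

section Comp

variable {𝒳 𝒴 𝒮 : Type*} {d : ℕ}

/-- Probability that the operator `D` fires. -/
def pr {n : ℕ} (ρ : 𝒳 → 𝒴 → 𝒮 → Matrix (Fin d) (Fin d) ℂ)
    (D : Matrix (Fin n → Fin d) (Fin n → Fin d) ℂ) (x : Fin n → 𝒳) (y : Fin n → 𝒴)
    (s : Fin n → 𝒮) : ℝ :=
  (Matrix.trace (D * tensorFam fun k => ρ (x k) (y k) (s k))).re

/-- Average error of a deterministic code. -/
def er {n M₁ M₂ : ℕ} (ρ : 𝒳 → 𝒴 → 𝒮 → Matrix (Fin d) (Fin d) ℂ)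
    (f₁ : Fin M₁ → (Fin n → 𝒳)) (f₂ : Fin M₂ → (Fin n → 𝒴))
    (D : Fin M₁ → Fin M₂ → Matrix (Fin n → Fin d) (Fin n → Fin d) ℂ) (s : Fin n → 𝒮) : ℝ :=
  1 - (1 / ((M₁ : ℝ) * (M₂ : ℝ))) * ∑ m₁, ∑ m₂, pr ρ (D m₁ m₂) (f₁ m₁) (f₂ m₂) s

variable {ρ : 𝒳 → 𝒴 → 𝒮 → Matrix (Fin d) (Fin d) ℂ}

theorem pr_nonneg (hρ : ∀ x y s, IsDensity (ρ x y s)) {n : ℕ}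
    {D : Matrix (Fin n → Fin d) (Fin n → Fin d) ℂ} (hD : D.PosSemidef) (x : Fin n → 𝒳)
    (y : Fin n → 𝒴) (s : Fin n → 𝒮) : 0 ≤ pr ρ D x y s :=
  aux_trace_nonneg hD (aux_tensor_psd _ fun _ => (hρ _ _ _).1)

theorem pr_le_one (hρ : ∀ x y s, IsDensity (ρ x y s)) {n M₁ M₂ : ℕ}
    {D : Fin M₁ → Fin M₂ → Matrix (Fin n → Fin d) (Fin n → Fin d) ℂ}
    (hD : ∀ i j, (D i j).PosSemidef) (hs : ∑ i, ∑ j, D i j = 1) (x : Fin n → 𝒳)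
    (y : Fin n → 𝒴) (s : Fin n → 𝒮) (i j) : pr ρ (D i j) x y s ≤ 1 :=
  aux_trace_le_one hD hs (aux_tensor_psd _ fun _ => (hρ _ _ _).1)
    (aux_tensor_trace _ fun _ => (hρ _ _ _).2) i j

theorem er_le_one (hρ : ∀ x y s, IsDensity (ρ x y s)) {n M₁ M₂ : ℕ}
    (f₁ : Fin M₁ → (Fin n → 𝒳)) (f₂ : Fin M₂ → (Fin n → 𝒴))
    {D : Fin M₁ → Fin M₂ → Matrix (Fin n → Fin d) (Fin n → Fin d) ℂ}
    (hD : ∀ i j, (D i j).PosSemidef) (s : Fin n → 𝒮) : er ρ f₁ f₂ D s ≤ 1 := by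
  have : 0 ≤ (1 / ((M₁ : ℝ) * (M₂ : ℝ))) * ∑ m₁, ∑ m₂, pr ρ (D m₁ m₂) (f₁ m₁) (f₂ m₂) s :=
    mul_nonneg (by positivity) (Finset.sum_nonneg fun i _ => Finset.sum_nonneg fun j _ =>
      pr_nonneg hρ (hD i j) _ _ _)
  unfold er; linarith

theorem er_nonneg (hρ : ∀ x y s, IsDensity (ρ x y s)) {n M₁ M₂ : ℕ}
    (f₁ : Fin M₁ → (Fin n → 𝒳)) (f₂ : Fin M₂ → (Fin n → 𝒴))
    {D : Fin M₁ → Fin M₂ → Matrix (Fin n → Fin d) (Fin n → Fin d) ℂ}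
    (hD : ∀ i j, (D i j).PosSemidef) (hs : ∑ i, ∑ j, D i j = 1) (s : Fin n → 𝒮) :
    0 ≤ er ρ f₁ f₂ D s := by
  have h : ∑ m₁, ∑ m₂, pr ρ (D m₁ m₂) (f₁ m₁) (f₂ m₂) s ≤ (M₁ : ℝ) * M₂ := by
    calc _ ≤ ∑ _m₁ : Fin M₁, ∑ _m₂ : Fin M₂, (1 : ℝ) :=
          Finset.sum_le_sum fun i _ => Finset.sum_le_sum fun j _ => pr_le_one hρ hD hs _ _ _ _ _
      _ = _ := by simp
  have := div_le_one_of_le₀ h (by positivity)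
  unfold er
  rw [one_div_mul_eq_div]; linarith

theorem pr_kron (hρ : ∀ x y s, IsDensity (ρ x y s)) {l m : ℕ}
    {A : Matrix (Fin l → Fin d) (Fin l → Fin d) ℂ} (hA : A.PosSemidef)
    (B : Matrix (Fin m → Fin d) (Fin m → Fin d) ℂ)
    (x : Fin l → 𝒳) (x' : Fin m → 𝒳) (y : Fin l → 𝒴) (y' : Fin m → 𝒴) (s : Fin (l + m) → 𝒮) :
    pr ρ (kronBlock A B) (Fin.append x x') (Fin.append y y') s =
      pr ρ A x y (fun k => s (Fin.castAdd m k)) * pr ρ B x' y' (fun k => s (Fin.natAdd l k)) := by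
  unfold pr
  rw [kronBlock_trace, Complex.mul_re]
  simp only [Fin.append_left, Fin.append_right]
  rw [aux_trace_im hA (aux_tensor_psd _ fun _ => (hρ _ _ _).1)]
  ring

theorem aux_compose (hρ : ∀ x y s, IsDensity (ρ x y s)) {l m M₁' M₂' M₁ M₂ : ℕ}
    (f₁' : Fin M₁' → (Fin l → 𝒳)) (f₂' : Fin M₂' → (Fin l → 𝒴))
    {D' : Fin M₁' → Fin M₂' → Matrix (Fin l → Fin d) (Fin l → Fin d) ℂ}
    (hD' : ∀ i j, (D' i j).PosSemidef) (hs' : ∑ i, ∑ j, D' i j = 1)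
    (f₁ : Fin M₁' → Fin M₁ → (Fin m → 𝒳)) (f₂ : Fin M₂' → Fin M₂ → (Fin m → 𝒴))
    {D : Fin M₁' → Fin M₂' → Fin M₁ → Fin M₂ → Matrix (Fin m → Fin d) (Fin m → Fin d) ℂ}
    (hD : ∀ i j a b, (D i j a b).PosSemidef) (hs : ∀ i j, ∑ a, ∑ b, D i j a b = 1) :
    ∃ (F₁ : Fin (M₁' * M₁) → (Fin (l + m) → 𝒳)) (F₂ : Fin (M₂' * M₂) → (Fin (l + m) → 𝒴))
      (E : Fin (M₁' * M₁) → Fin (M₂' * M₂) →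
        Matrix (Fin (l + m) → Fin d) (Fin (l + m) → Fin d) ℂ),
      (∀ i j, (E i j).PosSemidef) ∧ (∑ i, ∑ j, E i j = 1) ∧
      ∀ s, er ρ F₁ F₂ E s ≤ er ρ f₁' f₂' D' (fun k => s (Fin.castAdd m k)) +
        (1 / (M₁' : ℝ)) * ∑ i, (1 / (M₂' : ℝ)) * ∑ j,
          er ρ (f₁ i) (f₂ j) (D i j) (fun k => s (Fin.natAdd l k)) := by
  refine ⟨fun a => Fin.append (f₁' (finProdFinEquiv.symm a).1)
      (f₁ (finProdFinEquiv.symm a).1 (finProdFinEquiv.symm a).2),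
    fun a => Fin.append (f₂' (finProdFinEquiv.symm a).1)
      (f₂ (finProdFinEquiv.symm a).1 (finProdFinEquiv.symm a).2),
    fun a b => kronBlock (D' (finProdFinEquiv.symm a).1 (finProdFinEquiv.symm b).1)
      (D (finProdFinEquiv.symm a).1 (finProdFinEquiv.symm b).1 (finProdFinEquiv.symm a).2
        (finProdFinEquiv.symm b).2),
    fun a b => kronBlock_psd (hD' _ _) (hD _ _ _ _), ?_, fun s => ?_⟩
  · rw [aux_sum_fin (fun i a => ∑ b : Fin (M₂' * M₂), kronBlock (D' i (finProdFinEquiv.symm b).1)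
      (D i (finProdFinEquiv.symm b).1 a (finProdFinEquiv.symm b).2))]
    simp_rw [fun i a => aux_sum_fin (fun j b => kronBlock (D' i j) (D i j a b))]
    rw [← kronBlock_one, ← hs', kronBlock_sum_left]
    refine Finset.sum_congr rfl fun i _ => ?_
    rw [kronBlock_sum_left, Finset.sum_comm]
    refine Finset.sum_congr rfl fun j _ => ?_
    rw [← hs i j, kronBlock_sum_right]
    simp_rw [kronBlock_sum_right]
  · set s₁ : Fin l → 𝒮 := fun k => s (Fin.castAdd m k) with hs₁
    set s₂ : Fin m → 𝒮 := fun k => s (Fin.natAdd l k) with hs₂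
    have hterm : ∀ i j, pr ρ (D' i j) (f₁' i) (f₂' j) s₁ - er ρ (f₁ i) (f₂ j) (D i j) s₂ ≤
        pr ρ (D' i j) (f₁' i) (f₂' j) s₁ * (1 - er ρ (f₁ i) (f₂ j) (D i j) s₂) := by
      intro i j
      have h1 := pr_le_one hρ hD' hs' (f₁' i) (f₂' j) s₁ i j
      have h2 := er_nonneg hρ (f₁ i) (f₂ j) (hD i j) (hs i j) s₂
      nlinarith
    have hsum : (1 / (((M₁' * M₁ : ℕ) : ℝ) * ((M₂' * M₂ : ℕ) : ℝ))) *
        ∑ a : Fin (M₁' * M₁), ∑ b : Fin (M₂' * M₂),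
          pr ρ (kronBlock (D' (finProdFinEquiv.symm a).1 (finProdFinEquiv.symm b).1)
            (D (finProdFinEquiv.symm a).1 (finProdFinEquiv.symm b).1 (finProdFinEquiv.symm a).2
              (finProdFinEquiv.symm b).2))
            (Fin.append (f₁' (finProdFinEquiv.symm a).1)
              (f₁ (finProdFinEquiv.symm a).1 (finProdFinEquiv.symm a).2))
            (Fin.append (f₂' (finProdFinEquiv.symm b).1)
              (f₂ (finProdFinEquiv.symm b).1 (finProdFinEquiv.symm b).2)) s =
        (1 / ((M₁' : ℝ) * M₂')) * ∑ i, ∑ j, pr ρ (D' i j) (f₁' i) (f₂' j) s₁ *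
          (1 - er ρ (f₁ i) (f₂ j) (D i j) s₂) := by
      simp_rw [pr_kron hρ (hD' _ _)]
      rw [aux_sum_fin (fun i a => ∑ b : Fin (M₂' * M₂),
        pr ρ (D' i (finProdFinEquiv.symm b).1) (f₁' i) (f₂' (finProdFinEquiv.symm b).1) s₁ *
        pr ρ (D i (finProdFinEquiv.symm b).1 a (finProdFinEquiv.symm b).2) (f₁ i a)
          (f₂ (finProdFinEquiv.symm b).1 (finProdFinEquiv.symm b).2) s₂)]
      simp_rw [fun i a => aux_sum_fin (fun j b => pr ρ (D' i j) (f₁' i) (f₂' j) s₁ *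
        pr ρ (D i j a b) (f₁ i a) (f₂ j b) s₂)]
      simp only [er, sub_sub_cancel, Finset.mul_sum]
      refine Finset.sum_congr rfl fun i _ => ?_
      rw [Finset.sum_comm]
      refine Finset.sum_congr rfl fun j _ => ?_
      refine Finset.sum_congr rfl fun a _ => ?_
      refine Finset.sum_congr rfl fun b _ => ?_
      push_cast
      simp only [one_div, mul_inv]
      ring
    have hle : (1 / ((M₁' : ℝ) * M₂')) * ∑ i, ∑ j,
        (pr ρ (D' i j) (f₁' i) (f₂' j) s₁ - er ρ (f₁ i) (f₂ j) (D i j) s₂) ≤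
        (1 / ((M₁' : ℝ) * M₂')) * ∑ i, ∑ j, pr ρ (D' i j) (f₁' i) (f₂' j) s₁ *
          (1 - er ρ (f₁ i) (f₂ j) (D i j) s₂) :=
      mul_le_mul_of_nonneg_left (Finset.sum_le_sum fun i _ => Finset.sum_le_sum fun j _ =>
        hterm i j) (by positivity)
    have heq : (1 / (M₁' : ℝ)) * ∑ i, (1 / (M₂' : ℝ)) * ∑ j, er ρ (f₁ i) (f₂ j) (D i j) s₂ =
        (1 / ((M₁' : ℝ) * M₂')) * ∑ i, ∑ j, er ρ (f₁ i) (f₂ j) (D i j) s₂ := by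
      rw [← Finset.mul_sum]
      simp only [one_div, mul_inv]
      ring
    rw [heq]
    rw [er, hsum]
    simp only [Finset.sum_sub_distrib, mul_sub] at hle
    have : er ρ f₁' f₂' D' s₁ =
      1 - (1 / ((M₁' : ℝ) * M₂')) * ∑ i, ∑ j, pr ρ (D' i j) (f₁' i) (f₂' j) s₁ := rfl
    rw [this]
    simp only [Finset.sum_sub_distrib, mul_sub]
    linarith

theorem aux_mean_le {Γ : Type*} [Fintype Γ] (G : Γ → ℝ) (hG : ∀ γ, 0 ≤ G γ)
    (hG1 : ∑ γ, G γ = 1) (e : Γ → ℝ) (h : ∀ γ, e γ ≤ 1) : ∑ γ, G γ * e γ ≤ 1 := by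
  rw [← hG1]
  exact Finset.sum_le_sum fun γ _ => mul_le_of_le_one_right (hG γ) (h γ)

/-- Random-code reduction: few equiprobable keys suffice. -/
theorem aux_reduce [Fintype 𝒮] (hρ : ∀ x y s, IsDensity (ρ x y s)) {m M₁ M₂ k₁ k₂ K₁ K₂ : ℕ}
    (G₁ : Fin k₁ → ℝ) (G₂ : Fin k₂ → ℝ)
    (f₁ : Fin k₁ → Fin M₁ → (Fin m → 𝒳)) (f₂ : Fin k₂ → Fin M₂ → (Fin m → 𝒴))
    (D : Fin k₁ → Fin k₂ → Fin M₁ → Fin M₂ → Matrix (Fin m → Fin d) (Fin m → Fin d) ℂ)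
    (hG₁ : ∀ γ, 0 ≤ G₁ γ) (hG₁' : ∑ γ, G₁ γ = 1) (hG₂ : ∀ γ, 0 ≤ G₂ γ) (hG₂' : ∑ γ, G₂ γ = 1)
    (hD : ∀ i j a b, (D i j a b).PosSemidef) (hs : ∀ i j, ∑ a, ∑ b, D i j a b = 1)
    (b : ℝ) (hb : 0 < b)
    (he : ∀ s, ∑ i, ∑ j, G₁ i * G₂ j * er ρ (f₁ i) (f₂ j) (D i j) s ≤ b)
    (hK₁ : 0 < K₁) (hK₂ : 0 < K₂)
    (hc₁ : (Fintype.card 𝒮 : ℝ) ^ m * (1 + 2 * b) ^ K₁ ≤ Real.exp (2 * b * K₁))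
    (hc₂ : (Fintype.card 𝒮 : ℝ) ^ m * (1 + 2 * (2 * b)) ^ K₂ ≤ Real.exp (2 * (2 * b) * K₂)) :
    ∃ (c₁ : Fin K₁ → Fin k₁) (c₂ : Fin K₂ → Fin k₂), ∀ s : Fin m → 𝒮,
      (1 / (K₁ : ℝ)) * ∑ i, (1 / (K₂ : ℝ)) * ∑ j,
        er ρ (f₁ (c₁ i)) (f₂ (c₂ j)) (D (c₁ i) (c₂ j)) s ≤ 4 * b := by
  classical
  have hcard : (Fintype.card (Fin m → 𝒮) : ℝ) = (Fintype.card 𝒮 : ℝ) ^ m := by simp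
  have e0 : ∀ i j s, 0 ≤ er ρ (f₁ i) (f₂ j) (D i j) s :=
    fun i j s => er_nonneg hρ _ _ (hD i j) (hs i j) s
  have e1 : ∀ i j s, er ρ (f₁ i) (f₂ j) (D i j) s ≤ 1 := fun i j s => er_le_one hρ _ _ (hD i j) s
  obtain ⟨c₁, h₁⟩ := aux_select G₁ hG₁ hG₁'
    (fun i (s : Fin m → 𝒮) => ∑ j, G₂ j * er ρ (f₁ i) (f₂ j) (D i j) s)
    (fun i s => Finset.sum_nonneg fun j _ => mul_nonneg (hG₂ j) (e0 i j s))
    (fun i s => aux_mean_le G₂ hG₂ hG₂' _ fun j => e1 i j s) b hb.le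
    (fun s => by simpa [Finset.mul_sum, mul_assoc] using he s) K₁ hK₁ (by rwa [hcard])
  have hK₁' : (0 : ℝ) < K₁ := by exact_mod_cast hK₁
  obtain ⟨c₂, h₂⟩ := aux_select G₂ hG₂ hG₂'
    (fun j (s : Fin m → 𝒮) => (1 / (K₁ : ℝ)) * ∑ i, er ρ (f₁ (c₁ i)) (f₂ j) (D (c₁ i) j) s)
    (fun j s => mul_nonneg (by positivity) (Finset.sum_nonneg fun i _ => e0 _ j s))
    (fun j s => by
      rw [one_div, inv_mul_le_iff₀ hK₁', mul_one]
      calc _ ≤ ∑ _i : Fin K₁, (1 : ℝ) := Finset.sum_le_sum fun i _ => e1 _ j s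
        _ = _ := by simp)
    (2 * b) (by positivity)
    (fun s => by
      refine le_of_eq_of_le ?_ (h₁ s)
      simp only [Finset.mul_sum]
      rw [Finset.sum_comm]
      refine Finset.sum_congr rfl fun i _ => Finset.sum_congr rfl fun j _ => by ring) K₂ hK₂
    (by rwa [hcard])
  refine ⟨c₁, c₂, fun s => ?_⟩
  refine le_trans (le_of_eq ?_) ((h₂ s).trans (by linarith))
  simp only [Finset.mul_sum]
  rw [Finset.sum_comm]
  refine Finset.sum_congr rfl fun i _ => Finset.sum_congr rfl fun j _ => by ring

theorem aux_rate {R δ : ℝ} (hR : 0 ≤ R) (hδ : 0 < δ) {l m q M' M : ℕ} (hq : R / (q : ℝ) ≤ δ / 2)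
    (hq0 : 0 < q) (hl : l = (l + m) / q) (hm : 0 < m) (hM' : 0 < M')
    (h : (1 / (m : ℝ)) * Real.logb 2 M > R - δ / 2) :
    (1 / ((l + m : ℕ) : ℝ)) * Real.logb 2 ((M' * M : ℕ) : ℝ) > R - δ := by
  have hm' : (0 : ℝ) < m := by exact_mod_cast hm
  have hn' : (0 : ℝ) < ((l + m : ℕ) : ℝ) := by positivity
  have hq' : (0 : ℝ) < q := by exact_mod_cast hq0
  have hlog : Real.logb 2 M ≤ Real.logb 2 ((M' * M : ℕ) : ℝ) := by
    rcases Nat.eq_zero_or_pos M with h0 | h0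
    · subst h0; simp
    · apply Real.logb_le_logb_of_le (by norm_num) (by exact_mod_cast h0)
      exact_mod_cast Nat.le_mul_of_pos_left M hM'
  have hlq : (l : ℝ) * q ≤ ((l + m : ℕ) : ℝ) := by
    have : l * q ≤ l + m := (Nat.le_div_iff_mul_le hq0).mp hl.le
    exact_mod_cast this
  rw [gt_iff_lt, one_div, lt_inv_mul_iff₀ hm'] at h
  rw [gt_iff_lt, one_div, lt_inv_mul_iff₀ hn']
  refine lt_of_le_of_lt ?_ (h.trans_le hlog)
  rw [div_le_iff₀ hq'] at hq
  have hl0 : (0 : ℝ) ≤ l := Nat.cast_nonneg l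
  have h3 : (l : ℝ) * R ≤ ((l + m : ℕ) : ℝ) * (δ / 2) := by
    nlinarith [mul_le_mul_of_nonneg_left hq hl0]
  push_cast at *
  nlinarith

theorem aux_main [Fintype 𝒮] [Nonempty 𝒮] [Fintype 𝒳] [DecidableEq 𝒳] [Fintype 𝒴]
    [DecidableEq 𝒴] (hρ : ∀ x y s, IsDensity (ρ x y s)) {P₁ P₂ R₁ R₂ : ℝ} (hP₁ : 0 < P₁)
    (hP₂ : 0 < P₂) (hP : AchievableDet ρ P₁ P₂) (hR : AchievableRand ρ R₁ R₂) :
    AchievableDet ρ R₁ R₂ := by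
  obtain ⟨hR₁, hR₂, hR⟩ := hR
  refine ⟨hR₁, hR₂, fun β hβ δ₁ hδ₁ δ₂ hδ₂ => ?_⟩
  obtain ⟨-, -, hP⟩ := hP
  have hb : 0 < β / 6 := by positivity
  obtain ⟨N₁, hN₁⟩ := hP (β / 6) hb (P₁ / 2) (by positivity) (P₂ / 2) (by positivity)
  obtain ⟨N₂, hN₂⟩ := hR (β / 6) hb (δ₁ / 2) (by positivity) (δ₂ / 2) (by positivity)
  obtain ⟨q, hq⟩ := exists_nat_ge (max 2 (max (R₁ / (δ₁ / 2)) (R₂ / (δ₂ / 2))))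
  have hq2 : (2 : ℝ) ≤ q := (le_max_left _ _).trans hq
  have hq2' : 2 ≤ q := by exact_mod_cast hq2
  have hq0 : (0 : ℝ) < q := by linarith
  have hqa : R₁ / q ≤ δ₁ / 2 := by
    have := (le_max_left _ _).trans ((le_max_right _ _).trans hq)
    rw [div_le_iff₀ (by positivity)] at this
    rw [div_le_iff₀ hq0]; linarith
  have hqb : R₂ / q ≤ δ₂ / 2 := by
    have := (le_max_right _ _).trans ((le_max_right _ _).trans hq)
    rw [div_le_iff₀ (by positivity)] at this
    rw [div_le_iff₀ hq0]; linarith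
  have hA : (1 : ℝ) ≤ Fintype.card 𝒮 := by exact_mod_cast Fintype.card_pos
  obtain ⟨N₃, hN₃⟩ := aux_growth (Fintype.card 𝒮) hA (β / 6) hb (P₁ / 2) (by positivity) q
    (by omega)
  obtain ⟨N₄, hN₄⟩ := aux_growth (Fintype.card 𝒮) hA (2 * (β / 6)) (by positivity) (P₂ / 2)
    (by positivity) q (by omega)
  refine ⟨max (max N₃ N₄) (max (q * (N₁ + 1)) (2 * (N₂ + 1))), fun n hn => ?_⟩
  simp only [ge_iff_le, max_le_iff] at hn
  obtain ⟨⟨hn3, hn4⟩, hn1, hn2⟩ := hn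
  obtain ⟨l, hl⟩ : ∃ l, l = n / q := ⟨_, rfl⟩
  have hl1 : N₁ + 1 ≤ l := by
    rw [hl, Nat.le_div_iff_mul_le (by omega)]; linarith
  have hl2 : 2 * l ≤ n := by
    have h1 : l * q ≤ n := by rw [hl]; exact Nat.div_mul_le_self n q
    nlinarith
  obtain ⟨m, hm⟩ : ∃ m, n = l + m := ⟨n - l, by omega⟩
  subst hm
  have hm2 : N₂ + 1 ≤ m := by omega
  obtain ⟨M₁', M₂', f₁', f₂', D', hD', hs', hr₁', hr₂', he'⟩ := hN₁ l (by omega)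
  obtain ⟨M₁, M₂, k₁, k₂, G₁, G₂, f₁, f₂, D, hG₁, hG₁', hG₂, hG₂', hD, hs, hr₁, hr₂, he⟩ :=
    hN₂ m (by omega)
  have hl0 : (0 : ℝ) < l := by
    have : 0 < l := by omega
    exact_mod_cast this
  rw [gt_iff_lt, one_div, lt_inv_mul_iff₀ hl0] at hr₁' hr₂'
  have hM₁' : 0 < M₁' := by
    rcases Nat.eq_zero_or_pos M₁' with h | h
    · subst h; simp at hr₁'; nlinarith
    · exact h
  have hM₂' : 0 < M₂' := by
    rcases Nat.eq_zero_or_pos M₂' with h | h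
    · subst h; simp at hr₂'; nlinarith
    · exact h
  have he1 : ∀ s, er ρ f₁' f₂' D' s < β / 6 := fun s =>
    lt_of_le_of_lt (le_ciSup (f := fun s => er ρ f₁' f₂' D' s)
      (Set.finite_range _).bddAbove s) he'
  have he2 : ∀ s, ∑ i, ∑ j, G₁ i * G₂ j * er ρ (f₁ i) (f₂ j) (D i j) s ≤ β / 6 := fun s =>
    (lt_of_le_of_lt (le_ciSup (f := fun s => ∑ i, ∑ j, G₁ i * G₂ j *
      er ρ (f₁ i) (f₂ j) (D i j) s) (Set.finite_range _).bddAbove s) he).le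
  have hpow : (Fintype.card 𝒮 : ℝ) ^ m ≤ (Fintype.card 𝒮 : ℝ) ^ (l + m) :=
    pow_le_pow_right₀ hA (by omega)
  have g1 := hN₃ (l + m) hn3 M₁' (by rw [← hl]; linarith)
  have g2 := hN₄ (l + m) hn4 M₂' (by rw [← hl]; linarith)
  obtain ⟨c₁, c₂, hc⟩ := aux_reduce hρ G₁ G₂ f₁ f₂ D hG₁ hG₁' hG₂ hG₂' hD hs (β / 6) hb he2
    hM₁' hM₂' (le_trans (mul_le_mul_of_nonneg_right hpow (by positivity)) g1)
    (le_trans (mul_le_mul_of_nonneg_right hpow (by positivity)) g2)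
  obtain ⟨F₁, F₂, E, hE, hEs, hF⟩ := aux_compose hρ f₁' f₂' hD' hs' (fun i => f₁ (c₁ i))
    (fun j => f₂ (c₂ j)) (D := fun i j => D (c₁ i) (c₂ j)) (fun i j => hD _ _) (fun i j => hs _ _)
  refine ⟨M₁' * M₁, M₂' * M₂, F₁, F₂, E, hE, hEs,
    aux_rate hR₁ hδ₁ hqa (by omega) hl (by omega) hM₁' hr₁,
    aux_rate hR₂ hδ₂ hqb (by omega) hl (by omega) hM₂' hr₂, ?_⟩
  refine lt_of_le_of_lt (b := 5 * (β / 6)) ?_ (by linarith)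
  refine ciSup_le (f := fun s => er ρ F₁ F₂ E s) fun s => ?_
  have h1 := hF s
  have h2 := hc (fun k => s (Fin.natAdd l k))
  have h3 := he1 (fun k => s (Fin.castAdd m k))
  linarith

theorem aux_det_rand [Fintype 𝒳] [DecidableEq 𝒳] [Fintype 𝒴] [DecidableEq 𝒴] {R₁ R₂ : ℝ}
    (h : AchievableDet ρ R₁ R₂) : AchievableRand ρ R₁ R₂ := by
  obtain ⟨h₁, h₂, h⟩ := h
  refine ⟨h₁, h₂, fun β hβ δ₁ hδ₁ δ₂ hδ₂ => ?_⟩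
  obtain ⟨N, hN⟩ := h β hβ δ₁ hδ₁ δ₂ hδ₂
  refine ⟨N, fun n hn => ?_⟩
  obtain ⟨M₁, M₂, f₁, f₂, D, hD, hs, hr₁, hr₂, he⟩ := hN n hn
  refine ⟨M₁, M₂, 1, 1, fun _ => 1, fun _ => 1, fun _ => f₁, fun _ => f₂, fun _ _ => D,
    by simp, by simp, by simp, by simp, fun _ _ => hD, fun _ _ => hs, hr₁, hr₂, ?_⟩
  simpa only [Finset.univ_unique, Finset.sum_singleton, one_mul] using he

end Comp

end Helpers

/-- For finite `𝒮`: if the interior of the deterministic code capacity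
region `ℛ_d` is nonempty, then `ℛ_d = ℛ_r`. -/
theorem statement13 {𝒳 𝒴 𝒮 : Type*} [Fintype 𝒳] [DecidableEq 𝒳] [Fintype 𝒴] [DecidableEq 𝒴]
    [Fintype 𝒮] [Nonempty 𝒮] {d : ℕ}
    (ρ : 𝒳 → 𝒴 → 𝒮 → Matrix (Fin d) (Fin d) ℂ)
    (hρ : ∀ x y s, IsDensity (ρ x y s))
    (hInt : (interior (Rd ρ)).Nonempty) :
    Rd ρ = Rr ρ := by
  obtain ⟨x, hx⟩ := hInt
  have hquad : Rd ρ ⊆ {r : ℝ × ℝ | 0 ≤ r.1 ∧ 0 ≤ r.2} := by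
    apply closure_minimal
    · exact fun r hr => ⟨hr.1, hr.2.1⟩
    · exact (isClosed_le continuous_const continuous_fst).inter
        (isClosed_le continuous_const continuous_snd)
  obtain ⟨ε, hε, hball⟩ := Metric.isOpen_iff.mp isOpen_interior x hx
  have hx0 := hquad (interior_subset hx)
  have hy : (x.1 + ε / 2, x.2 + ε / 2) ∈ Rd ρ := by
    apply interior_subset
    apply hball
    rw [Metric.mem_ball, Prod.dist_eq]
    simp only [Real.dist_eq, add_sub_cancel_left, max_self, abs_of_pos (half_pos hε)]
    linarith
  obtain ⟨p, ⟨hp₁, hp₂⟩, hp⟩ := mem_closure_iff.mp hy {r : ℝ × ℝ | 0 < r.1 ∧ 0 < r.2}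
    ((isOpen_lt continuous_const continuous_fst).inter
      (isOpen_lt continuous_const continuous_snd))
    ⟨by have := hx0.1; dsimp only; linarith, by have := hx0.2; dsimp only; linarith⟩
  unfold Rd Rr
  congr 1
  ext r
  exact ⟨fun h => aux_det_rand h, fun h => aux_main hρ hp₁ hp₂ hp h⟩
end
end
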